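/- Effectivity of descent data for rigid families (Corollary A.14): Let k be a field of characteristic zero and K an algebraically closed field extension of k of infinite transcendence degree over k. Let (X_α)_{α∈A} be a family of quasi-projective schemes over K and (f_β)_{β∈B} a family of K-morphisms between members of the family, with f_β : X_{s(β)} → X_{t(β)} for indices s(β), t(β) ∈ A. Assume that (i) for each α ∈ A the group of automorphisms of X_α as a scheme over K is finite, and (ii) the only family (ψ_α)_{α∈A}, where each ψ_α is a K-automorphism of X_α, satisfying ψ_{t(β)} ∘ f_β = f_β ∘ ψ_{s(β)} for all β ∈ B, is the family of identity morphisms. Then every collection of descent data with respect to K/k on the schemes X_α under which every morphism f_β is Aut(K/k)-equivariant is effective: for each α ∈ A there exist a scheme X over k and an isomorphism X_α ≅ X ×_{Spec k} Spec K over K carrying the action of each σ ∈ Aut(K/k) on X_α to the automorphism id_X × Spec(σ⁻¹). -/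

import Mathlib

open AlgebraicGeometry CategoryTheory CategoryTheory.Limits

noncomputable section

namespace Paper

attribute [local instance] MvPolynomial.gradedAlgebra

/-- Projective `n`-space over a ring `K`, as `Proj` of the polynomial ring in `n + 1`
variables with its grading by total degree. -/
def ProjSpace (K : Type) [CommRing K] (n : ℕ) : Scheme :=
  Proj (MvPolynomial.homogeneousSubmodule (Fin (n + 1)) K)

/-- The structure morphism `ℙⁿ_K ⟶ Spec K`. -/
def ProjSpace.structMap (K : Type) [CommRing K] (n : ℕ) :
    ProjSpace K n ⟶ Spec (CommRingCat.of K) :=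
  Proj.toSpecZero _ ≫ Spec.map (CommRingCat.ofHom
    (algebraMap K (MvPolynomial.homogeneousSubmodule (Fin (n + 1)) K 0)))

/-- A scheme `Y` with structure morphism `p : Y ⟶ Spec K` is quasi-projective over `K` if
for some `n` there is an immersion (locally closed immersion) `Y ⟶ ℙⁿ_K` over `K`. -/
def QuasiProjectiveOver (K : Type) [CommRing K] {Y : Scheme}
    (p : Y ⟶ Spec (CommRingCat.of K)) : Prop :=
  ∃ (n : ℕ) (f : Y ⟶ ProjSpace K n), IsImmersion f ∧ f ≫ ProjSpace.structMap K n = p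

/-- A scheme `Y` with structure morphism `p : Y ⟶ Spec K` is quasi-affine over `K` if it is
of finite type over `K` and admits an open immersion over `K` into an affine `K`-scheme. -/
def QuasiAffineOver (K : Type) [CommRing K] {Y : Scheme}
    (p : Y ⟶ Spec (CommRingCat.of K)) : Prop :=
  LocallyOfFiniteType p ∧ QuasiCompact p ∧
    ∃ (Z : Scheme) (q : Z ⟶ Spec (CommRingCat.of K)) (j : Y ⟶ Z),
      IsAffine Z ∧ IsOpenImmersion j ∧ j ≫ q = p

variable (k K : Type) [Field k] [Field K] [Algebra k K]

/-- The automorphism `Spec (σ⁻¹)` of `Spec K` attached to `σ ∈ Aut(K/k)`. -/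
def specAut (σ : K ≃ₐ[k] K) : Spec (CommRingCat.of K) ⟶ Spec (CommRingCat.of K) :=
  Spec.map (CommRingCat.ofHom ((σ⁻¹ : K ≃ₐ[k] K) : K →+* K))

/-- A descent datum on the `K`-scheme `(Y, p)` with respect to `K/k`: an action of
`Aut(K/k)` on `Y` by scheme isomorphisms lifting the natural action on `Spec K`. -/
structure DescentDatum (Y : Scheme) (p : Y ⟶ Spec (CommRingCat.of K)) where
  act : (K ≃ₐ[k] K) →* Aut Y
  compat : ∀ σ : K ≃ₐ[k] K, (act σ).hom ≫ p = p ≫ specAut k K σ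

lemma specAut_comp (σ : K ≃ₐ[k] K) :
    specAut k K σ ≫ Spec.map (CommRingCat.ofHom (algebraMap k K)) =
      Spec.map (CommRingCat.ofHom (algebraMap k K)) := by
  rw [specAut, ← Spec.map_comp]
  congr 1
  ext x
  exact (σ⁻¹ : K ≃ₐ[k] K).commutes x

/-- The base change to `K` of a scheme `X` over `k`. -/
def baseChange {X : Scheme} (q : X ⟶ Spec (CommRingCat.of k)) : Scheme :=
  pullback q (Spec.map (CommRingCat.ofHom (algebraMap k K)))

/-- The automorphism `id_X × Spec (σ⁻¹)` of the base change `X ×_{Spec k} Spec K`. -/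
def baseChangeAut {X : Scheme} (q : X ⟶ Spec (CommRingCat.of k)) (σ : K ≃ₐ[k] K) :
    baseChange k K q ⟶ baseChange k K q :=
  pullback.map _ _ _ _ (𝟙 X) (specAut k K σ) (𝟙 (Spec (CommRingCat.of k)))
    (by simp) (by rw [Category.comp_id, specAut_comp])

/-- A scheme isomorphism fixes the generic point of an irreducible scheme. -/
lemma aut_base_genericPoint {Y : Scheme} [IrreducibleSpace Y] (e : Y ≅ Y) :
    e.hom.base (genericPoint Y) = genericPoint Y := by
  let h : Y ≃ₜ Y := TopCat.homeoOfIso (Scheme.forgetToTop.mapIso e)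
  have hg : IsGenericPoint (h (genericPoint Y)) (⊤ : Set Y) := by
    rw [IsGenericPoint, ← Set.image_singleton, ← h.image_closure,
      (genericPoint_spec Y).def, Set.top_eq_univ, Set.image_univ, h.surjective.range_eq]
  exact hg.eq (genericPoint_spec Y)

variable {k K}

/-- The action of `σ ∈ Aut(K/k)` on the function field of `Y`, given by pullback of rational
functions along the action of `σ⁻¹` on `Y`. -/
def DescentDatum.ffAction {Y : Scheme} [IrreducibleSpace Y] {p : Y ⟶ Spec (CommRingCat.of K)}
    (D : DescentDatum k K Y p) (σ : K ≃ₐ[k] K) :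
    Y.functionField ⟶ Y.functionField :=
  eqToHom (congrArg Y.presheaf.stalk (aut_base_genericPoint ((D.act σ⁻¹ : Aut Y) : Y ≅ Y)).symm) ≫
    (D.act σ⁻¹ : Aut Y).hom.stalkMap (genericPoint Y)

/-- Continuity of a descent datum on an irreducible scheme: every rational function
(i.e. element of the function field) is defined over a subfield of `K` that is finitely
generated over `k`. -/
def DescentDatum.IsContinuous {Y : Scheme} [IrreducibleSpace Y]
    {p : Y ⟶ Spec (CommRingCat.of K)} (D : DescentDatum k K Y p) : Prop :=
  ∀ f : Y.functionField, ∃ L : IntermediateField k K, L.FG ∧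
    ∀ σ : K ≃ₐ[k] K, (∀ x ∈ L, σ x = x) → D.ffAction σ f = f


section

/-! ### Spreading out -/

/-- Spec of a ring homomorphism between bare rings. -/
abbrev sMap {R S : Type} [CommRing R] [CommRing S] (φ : R →+* S) :
    Spec (CommRingCat.of S) ⟶ Spec (CommRingCat.of R) := Spec.map (CommRingCat.ofHom φ)

lemma sMap_comp {R S T : Type} [CommRing R] [CommRing S] [CommRing T] (φ : R →+* S)
    (ψ : S →+* T) : sMap ψ ≫ sMap φ = sMap (ψ.comp φ) := by
  rw [sMap, sMap, sMap, ← Spec.map_comp]; rfl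

/-- The morphism to an affine scheme attached to a hom into global sections. -/
def ofG {Y : Scheme} {R : Type} [CommRing R] (φ : R →+* Γ(Y, ⊤)) : Y ⟶ Spec (CommRingCat.of R) :=
  Y.toSpecΓ ≫ Spec.map (CommRingCat.ofHom φ)

/-- The ring hom attached to a morphism to an affine scheme. -/
def toG {Y : Scheme} {R : Type} [CommRing R] (a : Y ⟶ Spec (CommRingCat.of R)) : R →+* Γ(Y, ⊤) :=
  ((Scheme.ΓSpecIso (CommRingCat.of R)).inv ≫ a.appTop).hom

lemma ofG_toG {Y : Scheme} {R : Type} [CommRing R] (a : Y ⟶ Spec (CommRingCat.of R)) :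
    ofG (toG a) = a := by
  unfold ofG toG
  rw [CommRingCat.ofHom_hom, Spec.map_comp, ← Scheme.toSpecΓ_naturality_assoc,
    toSpecΓ_SpecMap_ΓSpecIso_inv, Category.comp_id]

lemma ofG_comp {Y : Scheme} {R S : Type} [CommRing R] [CommRing S] (φ : S →+* Γ(Y, ⊤))
    (ψ : R →+* S) : ofG φ ≫ sMap ψ = ofG (φ.comp ψ) := by
  unfold ofG
  rw [Category.assoc, ← Spec.map_comp]; rfl

lemma toG_comp {Y : Scheme} {R S : Type} [CommRing R] [CommRing S]
    (a : Y ⟶ Spec (CommRingCat.of S)) (ψ : R →+* S) : toG (a ≫ sMap ψ) = (toG a).comp ψ := by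
  unfold toG
  rw [Scheme.Hom.comp_appTop, ← Category.assoc, ← Scheme.ΓSpecIso_inv_naturality,
    Category.assoc]
  rfl

instance sMapAffine {R S : Type} [CommRing R] [CommRing S] (φ : R →+* S) :
    IsAffineHom (sMap φ) := inferInstance

instance pbFstAffine {X Y Z : Scheme} (f : X ⟶ Z) (g : Y ⟶ Z) [IsAffineHom g] :
    IsAffineHom (pullback.fst f g) :=
  MorphismProperty.of_isPullback (IsPullback.of_hasPullback f g).flip ‹_›

instance pbSndAffine {X Y Z : Scheme} (f : X ⟶ Z) (g : Y ⟶ Z) [IsAffineHom f] :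
    IsAffineHom (pullback.snd f g) :=
  MorphismProperty.of_isPullback (IsPullback.of_hasPullback f g) ‹_›

/-- Index category: finitely generated subalgebras, ordered by reverse inclusion. -/
abbrev FGIdx (R K : Type) [CommRing R] [CommRing K] [Algebra R K] : Type :=
  {T : Subalgebra R K // T.FG}ᵒᵖ

section
variable {R K : Type} [CommRing R] [CommRing K] [Algebra R K]

instance : Nonempty {T : Subalgebra R K // T.FG} := ⟨⟨⊥, Subalgebra.fg_bot⟩⟩

instance instDirFG : IsDirectedOrder {T : Subalgebra R K // T.FG} :=
  ⟨fun a b => ⟨⟨a.1 ⊔ b.1, a.2.sup b.2⟩, le_sup_left (a := a.1), le_sup_right (a := a.1)⟩⟩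

instance : IsFiltered {T : Subalgebra R K // T.FG} := inferInstance
instance : IsCofiltered (FGIdx R K) := inferInstance

/-- The diagram of spectra of f.g. subalgebras. -/
def specDiag (R K : Type) [CommRing R] [CommRing K] [Algebra R K] : FGIdx R K ⥤ Scheme where
  obj T := Spec (CommRingCat.of T.unop.1)
  map {T T'} h := sMap (Subalgebra.inclusion (leOfHom h.unop) : T'.unop.1 →+* T.unop.1)
  map_id T := by
    rw [← Spec.map_id]; rfl
  map_comp f g := by
    rw [sMap_comp]; rfl

def specCone (R K : Type) [CommRing R] [CommRing K] [Algebra R K] : Cone (specDiag R K) where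
  pt := Spec (CommRingCat.of K)
  π := { app := fun T => sMap (T.unop.1.val : T.unop.1 →+* K)
         naturality := fun T T' h => by
          refine (Category.id_comp (sMap (T'.unop.1.val : T'.unop.1 →+* K))).trans ?_
          exact (sMap_comp (Subalgebra.inclusion (leOfHom h.unop) :
            T'.unop.1 →+* T.unop.1) (T.unop.1.val : T.unop.1 →+* K)).symm }

lemma fg_adjoin1 (x : K) : (Algebra.adjoin R {x}).FG := ⟨{x}, by simp⟩
lemma fg_adjoin2 (x y : K) : (Algebra.adjoin R {x, y}).FG :=
  by classical exact ⟨{x, y}, by simp⟩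

/-- A compatible family of homs on f.g. subalgebras glues. -/
lemma glue_hom {Γ : Type} [CommRing Γ] (φ : ∀ T : {T : Subalgebra R K // T.FG}, T.1 →+* Γ)
    (h : ∀ (T T' : {T : Subalgebra R K // T.FG}) (hT : T ≤ T') (x : T.1),
      φ T' ⟨x.1, hT x.2⟩ = φ T x) :
    ∃ Φ : K →+* Γ, ∀ T (x : T.1), Φ x.1 = φ T x := by
  have key : ∀ (T T' : {T : Subalgebra R K // T.FG}) (x : K) (h1 : x ∈ T.1) (h2 : x ∈ T'.1),
      φ T ⟨x, h1⟩ = φ T' ⟨x, h2⟩ := by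
    intro T T' x h1 h2
    obtain ⟨S, hS, hS'⟩ := exists_ge_ge T T'
    rw [← h T S hS, ← h T' S hS']
  let mem (x : K) : {T : Subalgebra R K // T.FG} := ⟨Algebra.adjoin R {x}, fg_adjoin1 x⟩
  let mem2 (x y : K) : {T : Subalgebra R K // T.FG} := ⟨Algebra.adjoin R {x, y}, fg_adjoin2 x y⟩
  have hm (x : K) : x ∈ (mem x).1 := Algebra.subset_adjoin rfl
  have hm1 (x y : K) : x ∈ (mem2 x y).1 := Algebra.subset_adjoin (by simp)
  have hm2 (x y : K) : y ∈ (mem2 x y).1 := Algebra.subset_adjoin (by simp)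
  refine ⟨{ toFun := fun x => φ (mem x) ⟨x, hm x⟩, map_one' := ?_, map_zero' := ?_,
            map_add' := ?_, map_mul' := ?_ }, ?_⟩
  · exact map_one (φ (mem 1))
  · intro x y
    rw [key _ (mem2 x y) x _ (hm1 x y), key _ (mem2 x y) y _ (hm2 x y), ← map_mul,
      key (mem (x * y)) (mem2 x y) (x * y) _ (mul_mem (hm1 x y) (hm2 x y))]
    rfl
  · exact map_zero (φ (mem 0))
  · intro x y
    rw [key _ (mem2 x y) x _ (hm1 x y), key _ (mem2 x y) y _ (hm2 x y), ← map_add,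
      key (mem (x + y)) (mem2 x y) (x + y) _ (add_mem (hm1 x y) (hm2 x y))]
    rfl
  · intro T x
    exact key _ _ _ _ _

lemma spec_hom_ext_fg {Y : Scheme} (a b : Y ⟶ Spec (CommRingCat.of K))
    (h : ∀ T : {T : Subalgebra R K // T.FG},
      a ≫ sMap (T.1.val : T.1 →+* K) = b ≫ sMap (T.1.val : T.1 →+* K)) : a = b := by
  rw [← ofG_toG a, ← ofG_toG b]
  congr 1
  ext x
  have := congr($(congrArg toG (h ⟨_, fg_adjoin1 (R := R) x⟩)) ⟨x, Algebra.subset_adjoin rfl⟩)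
  rw [toG_comp, toG_comp] at this
  exact this

lemma spec_hom_exists_fg {Y : Scheme}
    (a : ∀ T : {T : Subalgebra R K // T.FG}, Y ⟶ Spec (CommRingCat.of T.1))
    (h : ∀ (T T' : {T : Subalgebra R K // T.FG}) (hT : T ≤ T'),
      a T' ≫ sMap (Subalgebra.inclusion hT : T.1 →+* T'.1) = a T) :
    ∃ b : Y ⟶ Spec (CommRingCat.of K), ∀ T, b ≫ sMap (T.1.val : T.1 →+* K) = a T := by
  obtain ⟨Φ, hΦ⟩ := glue_hom (R := R) (K := K) (fun T => toG (a T)) (by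
    intro T T' hT x
    rw [← h T T' hT, toG_comp]; rfl)
  refine ⟨ofG Φ, fun T => ?_⟩
  rw [ofG_comp, ← ofG_toG (a T)]
  congr 1
  ext x
  exact hΦ T x

def isLimitSpecCone (R K : Type) [CommRing R] [CommRing K] [Algebra R K] :
    IsLimit (specCone R K) where
  lift s := (spec_hom_exists_fg (fun T => s.π.app (.op T)) (fun T T' hT => by
    exact s.w (Quiver.Hom.op (homOfLE hT)))).choose
  fac s j := (spec_hom_exists_fg (fun T => s.π.app (.op T)) (fun T T' hT => by
    exact s.w (Quiver.Hom.op (homOfLE hT)))).choose_spec j.unop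
  uniq s m hm := by
    apply spec_hom_ext_fg (R := R)
    intro T
    rw [(spec_hom_exists_fg (fun T => s.π.app (.op T)) (fun T T' hT => by
      exact s.w (Quiver.Hom.op (homOfLE hT)))).choose_spec T]
    exact hm (.op T)
/-- The diagram `T ↦ Z ×_R T`. -/
def mDiag (K : Type) [CommRing K] [Algebra R K] {Z : Scheme} (z : Z ⟶ Spec (CommRingCat.of R)) :
    FGIdx R K ⥤ Scheme where
  obj T := pullback z (sMap (algebraMap R T.unop.1))
  map {T T'} h := pullback.lift (pullback.fst _ _)
    (pullback.snd _ _ ≫ sMap (Subalgebra.inclusion (leOfHom h.unop) : T'.unop.1 →+* T.unop.1))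
    (by rw [pullback.condition, Category.assoc, sMap_comp]; rfl)
  map_id T := by
    apply pullback.hom_ext
    · rw [pullback.lift_fst, Category.id_comp]
    · rw [pullback.lift_snd, Category.id_comp]
      exact (congrArg _ ((specDiag R K).map_id T)).trans (Category.comp_id _)
  map_comp f g := by
    apply pullback.hom_ext
    · simp only [pullback.lift_fst, Category.assoc]
    · simp only [pullback.lift_snd, Category.assoc, pullback.lift_snd_assoc, sMap_comp]
      rfl

lemma sMap_val_comp (T : {T : Subalgebra R K // T.FG}) :
    sMap (T.1.val : T.1 →+* K) ≫ sMap (algebraMap R T.1) = sMap (algebraMap R K) := by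
  rw [sMap_comp]; rfl

variable {X Z : Scheme} {p : X ⟶ Spec (CommRingCat.of K)} {z : Z ⟶ Spec (CommRingCat.of R)}
  {q : X ⟶ Z}

/-- The map `X ⟶ Z_T`. -/
def toModel (hq : IsPullback q p z (sMap (algebraMap R K)))
    (T : {T : Subalgebra R K // T.FG}) : X ⟶ pullback z (sMap (algebraMap R T.1)) :=
  pullback.lift q (p ≫ sMap (T.1.val : T.1 →+* K))
    (by rw [Category.assoc, sMap_val_comp, hq.w])

lemma toModel_fst (hq : IsPullback q p z (sMap (algebraMap R K)))
    (T : {T : Subalgebra R K // T.FG}) : toModel hq T ≫ pullback.fst _ _ = q :=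
  pullback.lift_fst _ _ _

lemma toModel_snd (hq : IsPullback q p z (sMap (algebraMap R K)))
    (T : {T : Subalgebra R K // T.FG}) :
    toModel hq T ≫ pullback.snd _ _ = p ≫ sMap (T.1.val : T.1 →+* K) :=
  pullback.lift_snd _ _ _

lemma toModel_isPullback (hq : IsPullback q p z (sMap (algebraMap R K)))
    (T : {T : Subalgebra R K // T.FG}) :
    IsPullback (toModel hq T) p (pullback.snd z (sMap (algebraMap R T.1)))
      (sMap (T.1.val : T.1 →+* K)) := by
  refine IsPullback.of_right (h₁₂ := pullback.fst z (sMap (algebraMap R T.1)))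
    (v₁₃ := z) (h₂₂ := sMap (algebraMap R T.1)) ?_ (toModel_snd hq T) ?_
  · rw [toModel_fst, sMap_val_comp]; exact hq
  · exact IsPullback.of_hasPullback _ _

def mCone (hq : IsPullback q p z (sMap (algebraMap R K))) : Cone (mDiag K z) where
  pt := X
  π := { app := fun T => toModel hq T.unop
         naturality := fun T T' h => by
          refine (Category.id_comp (toModel hq T'.unop)).trans ?_
          apply pullback.hom_ext
          · refine (toModel_fst hq _).trans ?_
            refine Eq.trans ?_ (Category.assoc (toModel hq T.unop) ((mDiag K z).map h)
              (pullback.fst z (sMap (algebraMap R T'.unop.1)))).symm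
            exact ((congrArg (toModel hq T.unop ≫ ·) (pullback.lift_fst _ _ _)).trans
              (toModel_fst hq _)).symm
          · refine (toModel_snd hq _).trans ?_
            refine Eq.trans ?_ (Category.assoc (toModel hq T.unop) ((mDiag K z).map h)
              (pullback.snd z (sMap (algebraMap R T'.unop.1)))).symm
            refine (((congrArg (toModel hq T.unop ≫ ·) (pullback.lift_snd _ _ _)).trans ?_)).symm
            refine ((Category.assoc _ _ _).symm.trans (congrArg (· ≫ _) (toModel_snd hq T.unop))).trans ?_
            rw [Category.assoc, sMap_comp]; rfl }

def mToSpec (K : Type) [CommRing K] [Algebra R K] (z : Z ⟶ Spec (CommRingCat.of R)) :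
    mDiag K z ⟶ specDiag R K where
  app _ := pullback.snd _ _
  naturality _ _ _ := pullback.lift_snd _ _ _

attribute [local instance] IsCofiltered.isConnected

def isLimitMCone (hq : IsPullback q p z (sMap (algebraMap R K))) : IsLimit (mCone hq) :=
  isLimitOfIsPullbackOfIsConnected (mToSpec K z) (mCone hq) (specCone R K)
    { hom := p, w := fun T => (toModel_snd hq T.unop).symm }
    (fun T => toModel_isPullback hq T.unop) (isLimitSpecCone R K)

lemma affine_of_comp_affine {A B C : Scheme} (f : A ⟶ B) (g : B ⟶ C) (h : A ⟶ C)
    (e : f ≫ g = h) [IsAffineHom h] [IsAffineHom g] : IsAffineHom f := by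
  subst e
  exact IsAffineHom.of_comp f g

instance mDiag_affine {T T' : FGIdx R K} (h : T ⟶ T') : IsAffineHom ((mDiag K z).map h) := by
  have h1 : IsAffineHom (pullback.fst z (sMap (algebraMap R T'.unop.1))) := inferInstance
  have h2 : IsAffineHom (pullback.fst z (sMap (algebraMap R T.unop.1))) := inferInstance
  exact @affine_of_comp_affine _ _ _ ((mDiag K z).map h)
    (pullback.fst z (sMap (algebraMap R T'.unop.1)))
    (pullback.fst z (sMap (algebraMap R T.unop.1))) (pullback.lift_fst _ _ _) h2 h1

lemma compact_of_affine {A B : Scheme} (f : A ⟶ B) [IsAffineHom f] [CompactSpace B] :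
    CompactSpace A := QuasiCompact.compactSpace_of_compactSpace f

lemma qs_of_affine {A B : Scheme} (f : A ⟶ B) [IsAffineHom f] [QuasiSeparatedSpace B] :
    QuasiSeparatedSpace A := quasiSeparatedSpace_of_quasiSeparated f

instance mDiag_compact [CompactSpace Z] (T : FGIdx R K) : CompactSpace ((mDiag K z).obj T) := by
  have := compact_of_affine (pullback.fst z (sMap (algebraMap R T.unop.1)))
  exact this

instance mDiag_qs [QuasiSeparatedSpace Z] (T : FGIdx R K) :
    QuasiSeparatedSpace ((mDiag K z).obj T) := by
  have := qs_of_affine (pullback.fst z (sMap (algebraMap R T.unop.1)))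
  exact this

/-- The transition map `Z_{T'} ⟶ Z_T`. -/
def mTrans (z : Z ⟶ Spec (CommRingCat.of R)) {T T' : {T : Subalgebra R K // T.FG}} (h : T ≤ T') :
    pullback z (sMap (algebraMap R T'.1)) ⟶ pullback z (sMap (algebraMap R T.1)) :=
  (mDiag K z).map (homOfLE h).op

lemma mTrans_fst {T T' : {T : Subalgebra R K // T.FG}} (h : T ≤ T') :
    mTrans z h ≫ pullback.fst z (sMap (algebraMap R T.1)) = pullback.fst _ _ :=
  pullback.lift_fst _ _ _

lemma mTrans_snd {T T' : {T : Subalgebra R K // T.FG}} (h : T ≤ T') :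
    mTrans z h ≫ pullback.snd z (sMap (algebraMap R T.1)) =
      pullback.snd _ _ ≫ sMap (Subalgebra.inclusion h : T.1 →+* T'.1) :=
  pullback.lift_snd _ _ _

lemma mTrans_mTrans {T T' T'' : {T : Subalgebra R K // T.FG}} (h : T ≤ T') (h' : T' ≤ T'') :
    mTrans z h' ≫ mTrans z h = mTrans z (h.trans h') :=
  ((mDiag K z).map_comp (homOfLE h').op (homOfLE h).op).symm

lemma toModel_mTrans (hq : IsPullback q p z (sMap (algebraMap R K)))
    {T T' : {T : Subalgebra R K // T.FG}} (h : T ≤ T') :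
    toModel hq T' ≫ mTrans z h = toModel hq T :=
  (mCone hq).w (homOfLE h).op

/-- The natural transformation to the constant diagram on the base. -/
def mToBase (K : Type) [CommRing K] [Algebra R K] (z : Z ⟶ Spec (CommRingCat.of R)) :
    mDiag K z ⟶ (Functor.const _).obj (Spec (CommRingCat.of R)) where
  app T := pullback.fst _ _ ≫ z
  naturality T T' h := by
    refine Eq.trans ?_ (Category.comp_id _).symm
    refine (Category.assoc _ _ _).symm.trans ?_
    exact congrArg (· ≫ z) (mTrans_fst (z := z) (leOfHom h.unop))

lemma hom_spread [CompactSpace Z] [QuasiSeparatedSpace Z]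
    (hq : IsPullback q p z (sMap (algebraMap R K))) {Y : Scheme} (y : Y ⟶ Spec (CommRingCat.of R))
    [LocallyOfFinitePresentation y] (h : X ⟶ Y) (hh : h ≫ y = q ≫ z) :
    ∃ T₀ : {T : Subalgebra R K // T.FG}, ∀ T, T₀ ≤ T →
      ∃ g : pullback z (sMap (algebraMap R T.1)) ⟶ Y,
      toModel hq T ≫ g = h ∧ g ≫ y = pullback.fst _ _ ≫ z := by
  obtain ⟨i, g, hg, hg'⟩ := Scheme.exists_π_app_comp_eq_of_locallyOfFinitePresentation
    (mDiag K z) (mToBase K z) y (mCone hq) (isLimitMCone hq) h (by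
      ext1
      ext1 T
      refine Eq.trans ?_ hh.symm
      exact (Category.assoc _ _ _).symm.trans (congrArg (· ≫ z) (toModel_fst hq T.unop)))
  obtain ⟨i⟩ := i
  change pullback z (sMap (algebraMap R i.1)) ⟶ Y at g
  change toModel hq i ≫ g = h at hg
  change g ≫ y = pullback.fst z (sMap (algebraMap R i.1)) ≫ z at hg'
  refine ⟨i, fun T hT => ⟨mTrans z hT ≫ g, ?_, ?_⟩⟩
  · rw [reassoc_of% toModel_mTrans]; exact hg
  · rw [Category.assoc, hg', ← Category.assoc, mTrans_fst]

lemma eq_spread [CompactSpace Z] 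
    (hq : IsPullback q p z (sMap (algebraMap R K))) {Y : Scheme} (y : Y ⟶ Spec (CommRingCat.of R))
    [LocallyOfFiniteType y] {T : {T : Subalgebra R K // T.FG}}
    (a b : pullback z (sMap (algebraMap R T.1)) ⟶ Y) (ha : a ≫ y = pullback.fst _ _ ≫ z)
    (hb : b ≫ y = pullback.fst _ _ ≫ z) (hab : toModel hq T ≫ a = toModel hq T ≫ b) :
    ∃ T₁ : {T : Subalgebra R K // T.FG}, ∀ T' (_ : T₁ ≤ T') (h : T ≤ T'),
      mTrans z h ≫ a = mTrans z h ≫ b := by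
  obtain ⟨i, g, hg⟩ := Scheme.exists_hom_comp_eq_comp_of_locallyOfFiniteType
    (mDiag K z) (mToBase K z) y (mCone hq) (isLimitMCone hq) (i := .op T) a b ha.symm hb.symm hab
  refine ⟨i.unop, fun T' h1 h => ?_⟩
  have e : mTrans z h = mTrans z h1 ≫ mTrans z (leOfHom g.unop) := (mTrans_mTrans _ _).symm
  rw [e, Category.assoc, Category.assoc]
  exact congrArg (mTrans z h1 ≫ ·) hg

end

end

section

lemma pushout_closure {R A B C : CommRingCat.{0}} {f : R ⟶ A} {g : R ⟶ B} {i : A ⟶ C} {j : B ⟶ C}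
    (h : IsPushout f g i j) (x : C) :
    x ∈ Subring.closure (Set.range i.hom ∪ Set.range j.hom) := by
  set S := Subring.closure (Set.range i.hom ∪ Set.range j.hom) with hS
  let i' : A ⟶ CommRingCat.of S := CommRingCat.ofHom (i.hom.codRestrict S
    fun a => Subring.subset_closure (Or.inl ⟨a, rfl⟩))
  let j' : B ⟶ CommRingCat.of S := CommRingCat.ofHom (j.hom.codRestrict S
    fun a => Subring.subset_closure (Or.inr ⟨a, rfl⟩))
  let d : C ⟶ CommRingCat.of S := h.desc i' j' (by
    ext r
    exact congr($(h.w) r))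
  have : d ≫ CommRingCat.ofHom S.subtype = 𝟙 C := by
    apply h.hom_ext
    · rw [h.inl_desc_assoc]; ext; rfl
    · rw [h.inr_desc_assoc]; ext; rfl
  have h2 := congr($this x)
  have h3 : x = (d x).1 := h2.symm
  rw [h3]; exact (d x).2

section
variable {R K : Type} [CommRing R] [CommRing K] [Algebra R K]
variable {X Z : Scheme} {p : X ⟶ Spec (CommRingCat.of K)} {z : Z ⟶ Spec (CommRingCat.of R)}
  {q : X ⟶ Z}

lemma toModel_pre (hq : IsPullback q p z (sMap (algebraMap R K)))
    (T : {T : Subalgebra R K // T.FG}) (V : Z.Opens) :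
    toModel hq T ⁻¹ᵁ (pullback.fst z (sMap (algebraMap R T.1)) ⁻¹ᵁ V) = q ⁻¹ᵁ V := by
  rw [← Scheme.Hom.comp_preimage, toModel_fst]

lemma sec_spread (hq : IsPullback q p z (sMap (algebraMap R K))) (V : Z.Opens)
    (hV : IsAffineOpen V) (s : Γ(X, q ⁻¹ᵁ V)) :
    ∃ T₀ : {T : Subalgebra R K // T.FG}, ∀ T, T₀ ≤ T →
      s ∈ ((toModel hq T).appLE (pullback.fst z (sMap (algebraMap R T.1)) ⁻¹ᵁ V) (q ⁻¹ᵁ V)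
        (toModel_pre hq T V).ge).hom.range := by
  have H := (isIso_pushoutSection_iff hq (US := ⊤) (UT := ⊤) (UX := V) (UY := q ⁻¹ᵁ V)
    le_top le_top (by simp)).1 (isIso_pushoutSection_of_isAffineOpen hq le_top le_top (by simp)
      (isAffineOpen_top _) (isAffineOpen_top _) hV)
  have hs := pushout_closure H s
  induction hs using Subring.closure_induction with
  | zero => exact ⟨⟨⊥, Subalgebra.fg_bot⟩, fun T _ => zero_mem _⟩
  | one => exact ⟨⟨⊥, Subalgebra.fg_bot⟩, fun T _ => one_mem _⟩
  | add x y _ _ hx hy =>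
    obtain ⟨T₁, h1⟩ := hx
    obtain ⟨T₂, h2⟩ := hy
    obtain ⟨T₃, h13, h23⟩ := exists_ge_ge T₁ T₂
    exact ⟨T₃, fun T h => add_mem (h1 T (h13.trans h)) (h2 T (h23.trans h))⟩
  | mul x y _ _ hx hy =>
    obtain ⟨T₁, h1⟩ := hx
    obtain ⟨T₂, h2⟩ := hy
    obtain ⟨T₃, h13, h23⟩ := exists_ge_ge T₁ T₂
    exact ⟨T₃, fun T h => mul_mem (h1 T (h13.trans h)) (h2 T (h23.trans h))⟩
  | neg x _ hx =>
    obtain ⟨T₁, h1⟩ := hx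
    exact ⟨T₁, fun T h => neg_mem (h1 T h)⟩
  | mem x hx =>
    rcases hx with ⟨a, rfl⟩ | ⟨c, rfl⟩
    · refine ⟨⟨⊥, Subalgebra.fg_bot⟩, fun T _ => ⟨(pullback.fst z (sMap (algebraMap R T.1))).appLE
        V _ le_rfl a, ?_⟩⟩
      change ((pullback.fst z (sMap (algebraMap R T.1))).appLE V _ le_rfl ≫
        (toModel hq T).appLE _ _ _) a = _
      rw [Scheme.Hom.appLE_comp_appLE]
      simp only [toModel_fst]
    · obtain ⟨c', rfl⟩ : ∃ c' : K, c = (Scheme.ΓSpecIso (CommRingCat.of K)).inv c' :=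
        ⟨(Scheme.ΓSpecIso (CommRingCat.of K)).hom c, by simp⟩
      refine ⟨⟨_, fg_adjoin1 (R := R) c'⟩, fun T hT => ?_⟩
      have hc : c' ∈ T.1 := hT (Algebra.subset_adjoin rfl)
      have ht : (pullback.fst z (sMap (algebraMap R T.1)) ⁻¹ᵁ V) ≤
        (pullback.snd z (sMap (algebraMap R T.1))) ⁻¹ᵁ ⊤ := le_top
      have ht1 : (⊤ : (Spec (CommRingCat.of K)).Opens) ≤
        (sMap (T.1.val : T.1 →+* K)) ⁻¹ᵁ ⊤ := le_top
      have ht2 : q ⁻¹ᵁ V ≤ p ⁻¹ᵁ ⊤ := le_top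
      refine ⟨(pullback.snd z (sMap (algebraMap R T.1))).appLE ⊤ _ ht
        ((Scheme.ΓSpecIso (CommRingCat.of T.1)).inv ⟨c', hc⟩), ?_⟩
      change ((pullback.snd z (sMap (algebraMap R T.1))).appLE ⊤ _ ht ≫
        (toModel hq T).appLE _ _ _) _ = _
      rw [Scheme.Hom.appLE_comp_appLE]
      simp only [toModel_snd]
      rw [← Scheme.Hom.appLE_comp_appLE (f := p) (g := sMap _) (U := ⊤) (V := ⊤) (e₁ := ht1)
        (e₂ := ht2)]
      change (p.appLE _ _ _).hom _ = (p.appLE _ _ _).hom _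
      congr 1
      have := congr($(Scheme.ΓSpecIso_inv_naturality (CommRingCat.ofHom (T.1.val : T.1 →+* K)))
        ⟨c', hc⟩)
      refine Eq.trans ?_ this.symm
      change ((sMap _).appLE _ _ _).hom _ = ((sMap _).appTop).hom _
      rw [Scheme.Hom.appTop, Scheme.Hom.app_eq_appLE]
      rfl


lemma ideal_spread (hq : IsPullback q p z (sMap (algebraMap R K))) [IsLocallyNoetherian X]
    (I : X.IdealSheafData) (V : Z.Opens) (hV : IsAffineOpen V) :
    ∃ T₀ : {T : Subalgebra R K // T.FG}, ∀ T, T₀ ≤ T →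
      ∀ (W : X.Opens) (hW : IsAffineOpen W) (_ : W = q ⁻¹ᵁ V)
        (hle : W ≤ toModel hq T ⁻¹ᵁ (pullback.fst z (sMap (algebraMap R T.1)) ⁻¹ᵁ V)),
      I.ideal ⟨W, hW⟩ ≤ ((I.ideal ⟨W, hW⟩).comap ((toModel hq T).appLE _ W hle).hom).map
        ((toModel hq T).appLE _ W hle).hom := by
  have : IsAffineHom q := MorphismProperty.of_isPullback hq.flip (sMapAffine _)
  have hqV : IsAffineOpen (q ⁻¹ᵁ V) := hV.preimage q
  have : IsNoetherianRing Γ(X, q ⁻¹ᵁ V) := IsLocallyNoetherian.component_noetherian ⟨_, hqV⟩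
  obtain ⟨S, hS⟩ := (isNoetherianRing_iff_ideal_fg _).1 this (I.ideal ⟨_, hqV⟩)
  classical
  choose T₀ hT₀ using sec_spread hq V hV
  obtain ⟨T₁, hT₁⟩ := (S.image T₀).exists_le
  refine ⟨T₁, fun T hT W hW e hle => ?_⟩
  subst e
  change I.ideal ⟨_, hqV⟩ ≤ _
  rw [← hS, Ideal.span_le]
  intro s hs
  obtain ⟨t, rfl⟩ := hT₀ s T ((hT₁ _ (Finset.mem_image_of_mem _ hs)).trans hT)
  refine Ideal.mem_map_of_mem _ ?_
  rw [Ideal.mem_comap]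
  exact Ideal.subset_span hs

lemma closed_spread [CompactSpace Z] [IsLocallyNoetherian X]
    (hq : IsPullback q p z (sMap (algebraMap R K))) {C : Scheme} (i : C ⟶ X)
    [IsClosedImmersion i] :
    ∃ (T : {T : Subalgebra R K // T.FG}) (Z' : Scheme)
      (j : Z' ⟶ pullback z (sMap (algebraMap R T.1))) (c : C ⟶ Z'),
      IsClosedImmersion j ∧ IsPullback i c (toModel hq T) j := by
  classical
  have : IsAffineHom q := MorphismProperty.of_isPullback hq.flip (sMapAffine _)
  obtain ⟨S, hS⟩ := (isCompact_univ (X := Z)).elim_finite_subcover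
    (fun V : Z.affineOpens => (V.1 : Set Z)) (fun V => V.1.2) (by
      intro x _
      have : x ∈ (⨆ V : Z.affineOpens, (V : Z.Opens)) := by
        rw [iSup_affineOpens_eq_top]; trivial
      simpa [TopologicalSpace.Opens.mem_iSup] using this)
  choose T₀ hT₀ using fun V : Z.affineOpens => ideal_spread hq i.ker V.1 V.2
  obtain ⟨T, hT⟩ := (S.image T₀).exists_le
  set π := toModel hq T with hπ
  have hfa : IsAffineHom (pullback.fst z (sMap (algebraMap R T.1))) := inferInstance
  have : IsAffineHom π := affine_of_comp_affine π _ q (toModel_fst hq T)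
  set J := i.ker.map π with hJ
  have key : J.comap π = i.ker := by
    refine le_antisymm (Scheme.IdealSheafData.comap_map_le _ _) ?_
    let U : S → X.affineOpens := fun V =>
      ⟨π ⁻¹ᵁ (pullback.fst z (sMap (algebraMap R T.1)) ⁻¹ᵁ V.1.1),
        (V.1.2.preimage (pullback.fst z (sMap (algebraMap R T.1)))).preimage π⟩
    refine Scheme.IdealSheafData.le_of_iSup_eq_top U ?_ ?_
    · rw [eq_top_iff]
      intro x _
      have := hS (Set.mem_univ (q x))
      simp only [Set.mem_iUnion] at this
      obtain ⟨V, hV, hx⟩ := this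
      refine TopologicalSpace.Opens.mem_iSup.2 ⟨⟨V, hV⟩, ?_⟩
      change x ∈ π ⁻¹ᵁ (pullback.fst z (sMap (algebraMap R T.1)) ⁻¹ᵁ V.1)
      rw [toModel_pre]
      exact hx
    · intro V
      have h1 := hT₀ V.1 T (hT _ (Finset.mem_image_of_mem _ V.2)) (U V).1 (U V).2
        (toModel_pre _ _ _) le_rfl
      refine h1.trans ?_
      rw [Ideal.map_le_iff_le_comap]
      have h2 := Scheme.IdealSheafData.le_map_comap J π ⟨_, V.1.2.preimage
        (pullback.fst z (sMap (algebraMap R T.1)))⟩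
      rw [Scheme.IdealSheafData.ideal_map_of_isAffineHom, hJ,
        Scheme.IdealSheafData.ideal_map_of_isAffineHom] at h2
      rw [Scheme.Hom.app_eq_appLE] at h2
      exact h2
  let c : C ⟶ J.subscheme := IsClosedImmersion.lift J.subschemeι (i ≫ π) (by
    rw [Scheme.IdealSheafData.ker_subschemeι, hJ, Scheme.IdealSheafData.map_ker])
  refine ⟨T, J.subscheme, J.subschemeι, c, inferInstance, ?_⟩
  refine isPullback_of_isClosedImmersion _ _ _ _ (IsClosedImmersion.lift_fac _ _ _).symm ?_
  rw [Scheme.IdealSheafData.ker_subschemeι, key]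

end

end

section

/-- Being a pullback square can be checked on an open cover of the lower left corner. -/
lemma pbloc {W X Y Z : Scheme} {a : W ⟶ X} {b : W ⟶ Y} {x : X ⟶ Z} {y : Y ⟶ Z} {ι : Type}
    (U V : ι → Scheme) (u : ∀ i, U i ⟶ X) [∀ i, IsOpenImmersion (u i)]
    (hu : ∀ t : X, ∃ i s, u i s = t) (v : ∀ i, V i ⟶ W) (g : ∀ i, V i ⟶ U i)
    (h1 : ∀ i, IsPullback (v i) (g i) a (u i))
    (h2 : ∀ i, IsPullback (g i) (v i ≫ b) (u i ≫ x) y) : IsPullback a b x y := by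
  let 𝒰 : X.OpenCover := Scheme.Cover.mkOfCovers ι U u hu inferInstance
  refine Scheme.isPullback_of_openCover a b x y 𝒰 fun i => ?_
  refine IsPullback.of_iso (h2 i) (h1 i).isoPullback (Iso.refl _) (Iso.refl _) (Iso.refl _)
    ?_ ?_ ?_ ?_
  · exact (Category.comp_id _).trans (IsPullback.isoPullback_hom_snd _).symm
  · refine (Category.comp_id _).trans ?_
    refine Eq.trans ?_ (Category.assoc _ _ _)
    exact congrArg (· ≫ b) (IsPullback.isoPullback_hom_fst (h1 i)).symm
  · exact (Category.comp_id _).trans (Category.id_comp _).symm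
  · exact (Category.comp_id _).trans (Category.id_comp _).symm

section
open HomogeneousLocalization
variable (R S : Type) [CommRing R] [CommRing S] [Algebra R S] (n : ℕ)

/-- The grading of the polynomial ring. -/
abbrev gr : ℕ → Submodule R (MvPolynomial (Fin (n + 1)) R) :=
  MvPolynomial.homogeneousSubmodule (Fin (n + 1)) R

/-- Base change of polynomial rings as a graded hom. -/
def grMap : gr R n →+*ᵍ gr S n where
  toRingHom := MvPolynomial.map (algebraMap R S)
  map_mem {i x} hx := by
    have := MvPolynomial.IsHomogeneous.map hx (algebraMap R S)
    exact this

lemma X_mem (i : Fin (n + 1)) : (MvPolynomial.X i : MvPolynomial (Fin (n + 1)) R) ∈ gr R n 1 :=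
  MvPolynomial.isHomogeneous_X R i

lemma grMap_X (i : Fin (n + 1)) : grMap R S n (MvPolynomial.X i) = MvPolynomial.X i :=
  MvPolynomial.map_X _ _

lemma irr_le : (HomogeneousIdeal.irrelevant (gr R n)).toIdeal ≤
    Ideal.span (Set.range (MvPolynomial.X : Fin (n + 1) → MvPolynomial (Fin (n + 1)) R)) := by
  rw [HomogeneousIdeal.toIdeal_irrelevant_le]
  intro i hi x hx
  rw [← Set.image_univ]
  have hx' : x.IsHomogeneous i := hx
  refine MvPolynomial.mem_ideal_span_X_image.2 fun m hm => ?_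
  by_contra! h
  have hm0 : m = 0 := by ext j; exact h j (Set.mem_univ _)
  have := hx' (MvPolynomial.mem_support_iff.1 hm)
  subst hm0
  simp at this
  omega

lemma grMap_irr : HomogeneousIdeal.irrelevant (gr S n) ≤
    (HomogeneousIdeal.irrelevant (gr R n)).map (grMap R S n) := by
  change (HomogeneousIdeal.irrelevant (gr S n)).toIdeal ≤ HomogeneousIdeal.toIdeal _
  refine (irr_le S n).trans ?_
  rw [Ideal.span_le]
  rintro _ ⟨i, rfl⟩
  rw [← grMap_X R S n i]
  exact Ideal.mem_map_of_mem _ (HomogeneousIdeal.mem_irrelevant_of_mem _ one_pos (X_mem R n i))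

/-- The base change map of projective spaces. -/
def projMap : ProjSpace S n ⟶ ProjSpace R n := Proj.map (grMap R S n) (grMap_irr R S n)

/-- The chart ring. -/
abbrev Chart (i : Fin (n + 1)) : Type := Away (gr R n) (MvPolynomial.X i)

/-- dehomogenization -/
def dehom (i : Fin (n + 1)) : Chart R n i →+* MvPolynomial (Fin (n + 1)) R :=
  (Localization.awayLift (MvPolynomial.aeval (R := R) (fun j : Fin (n + 1) => 
    if j = i then (1 : MvPolynomial (Fin (n + 1)) R) else MvPolynomial.X j)).toRingHom
    (MvPolynomial.X i) (by simp)).comp (algebraMap _ _)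

/-- coordinates -/
def crd (i j : Fin (n + 1)) : Chart R n i :=
  Away.mk (gr R n) (X_mem R n i) 1 (MvPolynomial.X j) (by simpa using X_mem R n j)

/-- constants -/
def chartC (i : Fin (n + 1)) : R →+* Chart R n i :=
  (fromZeroRingHom (gr R n) _).comp (algebraMap R (gr R n 0))

/-- homogenization -/
def hom' (i : Fin (n + 1)) : MvPolynomial (Fin (n + 1)) R →+* Chart R n i :=
  MvPolynomial.eval₂Hom (chartC R n i) (crd R n i)

lemma eval_homog {A : Type} [CommRing A] (φ : R →+* A) (t : A) (v : Fin (n + 1) → A) (d : ℕ)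
    (a : MvPolynomial (Fin (n + 1)) R) (ha : a.IsHomogeneous d) :
    MvPolynomial.eval₂ φ (fun j => t * v j) a = t ^ d * MvPolynomial.eval₂ φ v a := by
  rw [MvPolynomial.eval₂_eq', MvPolynomial.eval₂_eq', Finset.mul_sum]
  refine Finset.sum_congr rfl fun m hm => ?_
  have h := ha (MvPolynomial.mem_support_iff.1 hm)
  have h2 : ∑ j, m j = d := by
    rw [← h, Finsupp.weight_apply, Finsupp.sum_fintype] <;> simp
  simp only [mul_pow, Finset.prod_mul_distrib, Finset.prod_pow_eq_pow_sum, h2]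
  ring

lemma dehom_mk (i : Fin (n + 1)) (d : ℕ) (a : MvPolynomial (Fin (n + 1)) R) (ha) :
    dehom R n i (Away.mk (gr R n) (X_mem R n i) d a ha) = 
    MvPolynomial.aeval (R := R) (fun j : Fin (n + 1) => 
    if j = i then (1 : MvPolynomial (Fin (n + 1)) R) else MvPolynomial.X j) a := by
  unfold dehom
  rw [RingHom.comp_apply]
  change Localization.awayLift _ _ _ (Localization.mk a ⟨_, d, rfl⟩) = _
  rw [Localization.awayLift_mk (v := 1)]
  · simp
  · simp

lemma chart_ext (i : Fin (n + 1)) {C : Type} [CommRing C] (f g : Chart R n i →+* C)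
    (h1 : f.comp (chartC R n i) = g.comp (chartC R n i))
    (h2 : ∀ j, f (crd R n i j) = g (crd R n i j)) : f = g := by
  have h3 : f.comp (hom' R n i) = g.comp (hom' R n i) := by
    apply MvPolynomial.ringHom_ext
    · intro r; simpa [hom'] using congr($h1 r)
    · intro j; simpa [hom'] using h2 j
  ext x
  have hx : x = hom' R n i (dehom R n i x) := by
    obtain ⟨d, a, ha, rfl⟩ := Away.mk_surjective _ (X_mem R n i) x
    rw [dehom_mk]
    have ha' : a.IsHomogeneous d := by simpa using ha
    have e1 : hom' R n i (MvPolynomial.aeval (R := R) (fun j : Fin (n + 1) =>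
        if j = i then (1 : MvPolynomial (Fin (n + 1)) R) else MvPolynomial.X j) a) =
        MvPolynomial.eval₂ (chartC R n i) (crd R n i) a := by
      rw [MvPolynomial.aeval_def, MvPolynomial.hom_eval₂]
      congr 1
      · ext r; simp [hom', MvPolynomial.algebraMap_eq]
      · funext j
        by_cases hj : j = i
        · subst hj
          simp only [if_true, map_one]
          apply HomogeneousLocalization.val_injective
          rw [crd, Away.val_mk, HomogeneousLocalization.val_one]
          rw [← Localization.mk_one, Localization.mk_eq_mk_iff]
          refine Localization.r_of_eq ?_
          simp
        · simp [hj, hom']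
    rw [e1]
    apply HomogeneousLocalization.val_injective
    rw [Away.val_mk]
    change _ = algebraMap (Chart R n i) (Localization.Away _) _
    rw [MvPolynomial.hom_eval₂]
    set L := Localization.Away (MvPolynomial.X i : MvPolynomial (Fin (n + 1)) R)
    have hu : IsUnit ((algebraMap (MvPolynomial (Fin (n + 1)) R) L (MvPolynomial.X i)) ^ d) :=
      (IsLocalization.Away.algebraMap_isUnit _).pow _
    rw [← hu.mul_right_inj, ← eval_homog R n _ _ _ d a ha']
    have e2 : (fun j => algebraMap (MvPolynomial (Fin (n + 1)) R) L (MvPolynomial.X i) *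
        (algebraMap (Chart R n i) L) (crd R n i j)) = fun j =>
        algebraMap (MvPolynomial (Fin (n + 1)) R) L (MvPolynomial.X j) := by
      funext j
      change _ * Localization.mk _ _ = _
      rw [← Localization.mk_one_eq_algebraMap, Localization.mk_mul,
        ← Localization.mk_one_eq_algebraMap, Localization.mk_eq_mk_iff]
      refine Localization.r_of_eq ?_
      simp
    have e3 : MvPolynomial.eval₂ ((algebraMap (Chart R n i) L).comp (chartC R n i))
        (fun j => algebraMap (MvPolynomial (Fin (n + 1)) R) L (MvPolynomial.X j)) a =
        algebraMap (MvPolynomial (Fin (n + 1)) R) L a := by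
      have : MvPolynomial.eval₂Hom ((algebraMap (Chart R n i) L).comp (chartC R n i))
        (fun j => algebraMap (MvPolynomial (Fin (n + 1)) R) L (MvPolynomial.X j)) =
        algebraMap (MvPolynomial (Fin (n + 1)) R) L := by
        apply MvPolynomial.ringHom_ext
        · intro r
          rw [MvPolynomial.eval₂Hom_C]
          rfl
        · intro j
          rw [MvPolynomial.eval₂Hom_X']
      exact congr($this a)
    refine Eq.trans ?_ (congrArg (fun v => MvPolynomial.eval₂ _ v a) e2).symm
    rw [e3, ← map_pow, ← Localization.mk_one_eq_algebraMap,
      ← Localization.mk_one_eq_algebraMap, Localization.mk_mul, Localization.mk_eq_mk_iff]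
    refine Localization.r_of_eq ?_
    simp
  rw [hx]
  exact congr($h3 _)

lemma crd_self (i : Fin (n + 1)) : crd R n i i = 1 := by
  apply HomogeneousLocalization.val_injective
  rw [crd, Away.val_mk, HomogeneousLocalization.val_one]
  rw [← Localization.mk_one, Localization.mk_eq_mk_iff]
  refine Localization.r_of_eq ?_
  simp

lemma dehom_crd (i j : Fin (n + 1)) : dehom R n i (crd R n i j) =
    if j = i then (1 : MvPolynomial (Fin (n + 1)) R) else MvPolynomial.X j := by
  rw [crd, dehom_mk, MvPolynomial.aeval_X]

lemma chartC_eq (i : Fin (n + 1)) (r : R) : chartC R n i r =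
    Away.mk (gr R n) (X_mem R n i) 0 (MvPolynomial.C r)
      (by simpa using MvPolynomial.isHomogeneous_C _ r) := by
  apply HomogeneousLocalization.val_injective
  rw [Away.val_mk]
  change Localization.mk _ _ = _
  rw [Localization.mk_eq_mk_iff]
  refine Localization.r_of_eq ?_
  simp [MvPolynomial.algebraMap_eq]

lemma dehom_C (i : Fin (n + 1)) (r : R) : dehom R n i (chartC R n i r) = MvPolynomial.C r := by
  rw [chartC_eq, dehom_mk, MvPolynomial.aeval_C, MvPolynomial.algebraMap_eq]

lemma chart_pushout (i : Fin (n + 1)) (s : MvPolynomial (Fin (n + 1)) S)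
    (hs : s = MvPolynomial.X i) (m : Chart R n i →+* Away (gr S n) s)
    (hm : m.comp (chartC R n i) = ((fromZeroRingHom (gr S n) (Submonoid.powers s)).comp
      (algebraMap S (gr S n 0))).comp (algebraMap R S))
    (hm2 : ∀ j, (m (crd R n i j)).val = (Localization.mk
      (MvPolynomial.X j) (⟨s ^ 1, 1, rfl⟩ : Submonoid.powers s) : Localization (Submonoid.powers s))) :
    IsPushout (CommRingCat.ofHom (chartC R n i)) (CommRingCat.ofHom (algebraMap R S))
      (CommRingCat.ofHom m) (CommRingCat.ofHom ((fromZeroRingHom (gr S n)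
        (Submonoid.powers s)).comp (algebraMap S (gr S n 0)))) := by
  subst hs
  have hm2' : ∀ j, m (crd R n i j) = crd S n i j := fun j =>
    HomogeneousLocalization.val_injective _ (hm2 j)
  refine ⟨⟨by rw [← CommRingCat.ofHom_comp, hm]; rfl⟩, ⟨PushoutCocone.IsColimit.mk _ ?_ ?_ ?_ ?_⟩⟩
  · intro c
    exact CommRingCat.ofHom ((MvPolynomial.eval₂Hom c.inr.hom
      (fun j => c.inl.hom (crd R n i j))).comp (dehom S n i))
  · intro c
    ext1
    apply chart_ext
    · ext r
      have h1 := congr($hm r)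
      have h2 := congr($(c.condition) r)
      change (MvPolynomial.eval₂Hom c.inr.hom _) (dehom S n i (m (chartC R n i r))) = _
      have h1' : m (chartC R n i r) = chartC S n i (algebraMap R S r) := h1
      rw [h1', dehom_C, MvPolynomial.eval₂Hom_C]
      exact h2.symm
    · intro j
      change (MvPolynomial.eval₂Hom c.inr.hom _) (dehom S n i (m (crd R n i j))) = _
      rw [hm2', dehom_crd]
      split_ifs with h
      · subst h
        rw [crd_self, map_one, map_one]
      · rw [MvPolynomial.eval₂Hom_X']
  · intro c
    ext r
    change (MvPolynomial.eval₂Hom c.inr.hom _) (dehom S n i (chartC S n i r)) = _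
    rw [dehom_C, MvPolynomial.eval₂Hom_C]
  · intro c f h1 h2
    ext1
    apply chart_ext
    · ext r
      change _ = (MvPolynomial.eval₂Hom c.inr.hom _) (dehom S n i (chartC S n i r))
      rw [dehom_C, MvPolynomial.eval₂Hom_C, ← h2]
      rfl
    · intro j
      change _ = (MvPolynomial.eval₂Hom c.inr.hom _) (dehom S n i (crd S n i j))
      rw [dehom_crd]
      split_ifs with h
      · subst h
        rw [crd_self, map_one, map_one]
      · rw [MvPolynomial.eval₂Hom_X', ← h1, ← hm2']
        rfl

/-- The structure map, on the nose on `Proj`. -/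
def strMap : Proj (gr R n) ⟶ Spec (CommRingCat.of R) :=
  Proj.toSpecZero _ ≫ Spec.map (CommRingCat.ofHom (algebraMap R (gr R n 0)))

lemma awayι_structMap (s : MvPolynomial (Fin (n + 1)) R) (hs : s ∈ gr R n 1) :
    Proj.awayι (gr R n) s hs one_pos ≫ strMap R n =
      Spec.map (CommRingCat.ofHom ((fromZeroRingHom (gr R n)
        (Submonoid.powers s)).comp (algebraMap R (gr R n 0)))) := by
  refine (Category.assoc _ _ _).symm.trans ?_
  rw [Proj.awayι_toSpecZero, ← Spec.map_comp]
  rfl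

lemma projMap_isPullback' : IsPullback (Proj.map (grMap R S n) (grMap_irr R S n)) (strMap S n)
    (strMap R n) (sMap (algebraMap R S)) := by
  refine pbloc (ι := Fin (n + 1)) (fun i => Spec (.of (Away (gr R n) (MvPolynomial.X i))))
    (fun i => Spec (.of (Away (gr S n) (grMap R S n (MvPolynomial.X i)))))
    (fun i => Proj.awayι (gr R n) _ (X_mem R n i) one_pos) ?_
    (fun i => Proj.awayι (gr S n) _ ((grMap R S n).2 (X_mem R n i)) one_pos)
    (fun i => Spec.map (CommRingCat.ofHom (Away.map (grMap R S n) (MvPolynomial.X i)))) ?_ ?_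
  · intro t
    have h := Proj.iSup_basicOpen_eq_top (gr R n) (MvPolynomial.X) (irr_le R n)
    have ht : t ∈ (⊤ : (Proj (gr R n)).Opens) := trivial
    rw [← h, TopologicalSpace.Opens.mem_iSup] at ht
    obtain ⟨i, hi⟩ := ht
    rw [← Proj.opensRange_awayι (gr R n) _ (X_mem R n i) one_pos] at hi
    obtain ⟨s, hs⟩ := hi
    exact ⟨i, s, hs⟩
  · intro i
    refine (IsOpenImmersion.isPullback _ _ _ _ ?_ ?_).flip
    · exact Proj.awayι_comp_map _ (grMap_irr R S n) one_pos _ (X_mem R n i)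
    · rw [Proj.opensRange_awayι, Proj.opensRange_awayι]
      rfl
  · intro i
    have h := chart_pushout R S n i _ (grMap_X R S n i) (Away.map (grMap R S n) (MvPolynomial.X i))
      ?_ ?_
    · rw [awayι_structMap R n, awayι_structMap S n]
      exact (h.op.map Scheme.Spec).flip
    · ext r
      simp only [RingHom.comp_apply]
      rw [chartC_eq, Away.map_mk]
      rw [Away.val_mk]
      change _ = Localization.mk _ _
      rw [Localization.mk_eq_mk_iff]
      refine Localization.r_of_eq ?_
      simp [MvPolynomial.algebraMap_eq, grMap]
      exact MvPolynomial.map_C _ _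
    · intro j
      rw [crd, Away.map_mk, Away.val_mk]
      rw [grMap_X, grMap_X]

lemma projMap_isPullback : IsPullback (projMap R S n) (ProjSpace.structMap S n)
    (ProjSpace.structMap R n) (sMap (algebraMap R S)) :=
  projMap_isPullback' R S n

end

end

section

section
variable (R : Type) [CommRing R] (n : ℕ)

lemma zero_bij : Function.Bijective (algebraMap R (gr R n 0)) := by
  constructor
  · intro a b h
    have := congrArg Subtype.val h
    exact MvPolynomial.C_injective _ _ this
  · rintro ⟨x, hx⟩
    have hx' : x.IsHomogeneous 0 := hx
    refine ⟨x.coeff 0, Subtype.ext ?_⟩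
    change MvPolynomial.C _ = x
    exact (MvPolynomial.totalDegree_eq_zero_iff_eq_C.1
      ((MvPolynomial.totalDegree_zero_iff_isHomogeneous _).2 hx')).symm

instance zero_iso : IsIso (Spec.map (CommRingCat.ofHom (algebraMap R (gr R n 0)))) := by
  have : IsIso (CommRingCat.ofHom (algebraMap R (gr R n 0))) :=
    (ConcreteCategory.isIso_iff_bijective _).2 (zero_bij R n)
  infer_instance

instance ft0 : Algebra.FiniteType (gr R n 0) (MvPolynomial (Fin (n + 1)) R) := by
  have : IsScalarTower R (gr R n 0) (MvPolynomial (Fin (n + 1)) R) :=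
    IsScalarTower.of_algebraMap_eq (R := R) (S := gr R n 0) (fun x => rfl)
  exact Algebra.FiniteType.of_restrictScalars_finiteType R _ _

instance strMap_ft : LocallyOfFiniteType (strMap R n) := by
  unfold strMap; infer_instance

instance strMap_qc : QuasiCompact (strMap R n) := by
  unfold strMap; infer_instance

instance strMap_sep : IsSeparated (strMap R n) := by
  unfold strMap; infer_instance

end

lemma qp_iff (R : Type) [CommRing R] {Y : Scheme} (p : Y ⟶ Spec (CommRingCat.of R)) :
    QuasiProjectiveOver R p ↔
      ∃ (n : ℕ) (f : Y ⟶ Proj (gr R n)), IsImmersion f ∧ f ≫ strMap R n = p := Iff.rfl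

section
variable {R : Type} [CommRing R] {Y Y' : Scheme} {y : Y ⟶ Spec (CommRingCat.of R)}

lemma qp_comp (h : QuasiProjectiveOver R y) (j : Y' ⟶ Y) [IsImmersion j] :
    QuasiProjectiveOver R (j ≫ y) := by
  rw [qp_iff] at *
  obtain ⟨n, f, hf, e⟩ := h
  exact ⟨n, j ≫ f, inferInstance, by rw [Category.assoc, e]⟩

lemma qp_bc (h : QuasiProjectiveOver R y) {S : Type} [CommRing S] (φ : R →+* S) {q : Y' ⟶ Y}
    {y' : Y' ⟶ Spec (CommRingCat.of S)} (hq : IsPullback q y' y (sMap φ)) :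
    QuasiProjectiveOver S y' := by
  rw [qp_iff] at *
  obtain ⟨n, f, hf, rfl⟩ := h
  let _ := φ.toAlgebra
  have hP : IsPullback (Proj.map (grMap R S n) (grMap_irr R S n)) (strMap S n)
    (strMap R n) (sMap φ) := projMap_isPullback' R S n
  let f' := hP.lift (q ≫ f) y' (by rw [Category.assoc, hq.w])
  have h1 : f' ≫ strMap S n = y' := hP.lift_snd _ _ _
  have h2 : f' ≫ Proj.map (grMap R S n) (grMap_irr R S n) = q ≫ f := hP.lift_fst _ _ _
  have h3 : IsPullback q f' f (Proj.map (grMap R S n) (grMap_irr R S n)) := by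
    refine IsPullback.of_bot (h₃₁ := sMap φ) (v₂₁ := strMap S n) (v₂₂ := strMap R n) ?_ h2.symm hP
    rw [h1]; exact hq
  exact ⟨n, f', MorphismProperty.of_isPullback h3 hf, h1⟩

lemma qp_iso (h : QuasiProjectiveOver R y) {y' : Y' ⟶ Spec (CommRingCat.of R)} (e : Y' ⟶ Y)
    [IsIso e] (he : e ≫ y = y') : QuasiProjectiveOver R y' := by
  subst he; exact qp_comp h e

lemma qp_sep (h : QuasiProjectiveOver R y) : IsSeparated y := by
  rw [qp_iff] at h
  obtain ⟨n, f, hf, rfl⟩ := h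
  infer_instance

lemma qp_ft (h : QuasiProjectiveOver R y) : LocallyOfFiniteType y := by
  rw [qp_iff] at h
  obtain ⟨n, f, hf, rfl⟩ := h
  infer_instance

lemma proj_noeth [IsNoetherianRing R] (n : ℕ) : IsNoetherian (Proj (gr R n)) := by
  have : IsLocallyNoetherian (Proj (gr R n)) := LocallyOfFiniteType.isLocallyNoetherian (strMap R n)
  have : CompactSpace (Proj (gr R n)) := 
    (quasiCompact_iff_compactSpace (strMap R n)).1 inferInstance
  exact {}

lemma qp_noeth [IsNoetherianRing R] (h : QuasiProjectiveOver R y) : IsNoetherian Y := by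
  have := qp_ft h
  have : IsLocallyNoetherian Y := LocallyOfFiniteType.isLocallyNoetherian y
  rw [qp_iff] at h
  obtain ⟨n, f, hf, rfl⟩ := h
  have := proj_noeth (R := R) n
  have : CompactSpace Y := by
    have := f.isEmbedding.isInducing.noetherianSpace
    infer_instance
  exact {}

lemma qp_lfp [IsNoetherianRing R] (h : QuasiProjectiveOver R y) :
    LocallyOfFinitePresentation y := by
  have := qp_ft h
  infer_instance

end

lemma fg_restrict {k K : Type} [CommRing k] [CommRing K] [Algebra k K] (T₀ : Subalgebra k K)
    (h₀ : T₀.FG) (T : Subalgebra T₀ K) (h : T.FG) : (T.restrictScalars k).FG := by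
  have i1 : Algebra.FiniteType k T₀ := T₀.fg_iff_finiteType.1 h₀
  have i2 : Algebra.FiniteType T₀ T := T.fg_iff_finiteType.1 h
  have i3 : Algebra.FiniteType k T := Algebra.FiniteType.trans i1 i2
  exact (T.restrictScalars k).fg_iff_finiteType.2 i3

/-- Models of quasi-projective schemes over finitely generated subalgebras. -/
lemma model_exists (k K : Type) [Field k] [Field K] [Algebra k K] {X : Scheme}
    {p : X ⟶ Spec (CommRingCat.of K)} (h : QuasiProjectiveOver K p) :
    ∃ (T : Subalgebra k K) (_ : T.FG) (Z : Scheme) (z : Z ⟶ Spec (CommRingCat.of T))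
      (q : X ⟶ Z), QuasiProjectiveOver T z ∧ IsPullback q p z (sMap (T.val : T →+* K)) := by
  have h0 := h
  rw [qp_iff] at h
  obtain ⟨n, f, hf, rfl⟩ := h
  have hP := projMap_isPullback' k K n
  have := proj_noeth (R := K) n
  have : CompactSpace (Proj (gr k n)) := (proj_noeth (R := k) n).toCompactSpace
  have : IsLocallyNoetherian (Proj (gr k n)) := (proj_noeth (R := k) n).toIsLocallyNoetherian
  have hc : IsCompact (f.coborderRange : Set (Proj (gr K n))) :=
    TopologicalSpace.NoetherianSpace.isCompact _
  obtain ⟨T₀, W₀, hW₀, hW⟩ : ∃ (T₀ : {T : Subalgebra k K // T.FG})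
      (W₀ : (pullback (strMap k n) (sMap (algebraMap k T₀.1))).Opens),
      IsCompact (W₀ : Set (pullback (strMap k n) (sMap (algebraMap k T₀.1)) :)) ∧
        toModel hP T₀ ⁻¹ᵁ W₀ = f.coborderRange := by
    obtain ⟨⟨T₀⟩, W₀, hW₀, hW⟩ := exists_preimage_eq (mDiag K (strMap k n)) (mCone hP)
      (isLimitMCone hP) f.coborderRange hc
    exact ⟨T₀, W₀, hW₀, hW⟩
  have : CompactSpace W₀ := isCompact_iff_compactSpace.1 hW₀
  let r : f.coborderRange.toScheme ⟶ W₀ := (toModel hP T₀).resLE W₀ f.coborderRange hW.ge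
  have hr : IsPullback r f.coborderRange.ι W₀.ι (toModel hP T₀) := by
    refine IsOpenImmersion.isPullback _ _ _ _ ?_ ?_
    · exact (Scheme.Hom.resLE_comp_ι _ _).symm
    · simp [hW]
  have hr2 : IsPullback r (f.coborderRange.ι ≫ strMap K n) (W₀.ι ≫ pullback.snd _ _)
      (sMap (algebraMap T₀.1 K)) := hr.paste_vert (toModel_isPullback hP T₀)
  obtain ⟨T, Z, j, c, hj, hcj⟩ := closed_spread hr2 f.liftCoborder
  have hT₀qp : QuasiProjectiveOver T₀.1 (pullback.snd (strMap k n) (sMap (algebraMap k T₀.1))) :=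
    qp_iso (y := strMap T₀.1 n) ((qp_iff _ _).2 ⟨n, 𝟙 _, inferInstance, Category.id_comp _⟩)
      (projMap_isPullback' k T₀.1 n).isoPullback.inv
      (projMap_isPullback' k T₀.1 n).isoPullback_inv_snd
  have hW₀qp := qp_comp hT₀qp W₀.ι
  have hTqp := qp_bc hW₀qp (algebraMap T₀.1 T.1) (IsPullback.of_hasPullback _ _)
  have hZqp := qp_comp hTqp j
  have hpb := hcj.flip.paste_vert (toModel_isPullback hr2 T)
  rw [← Category.assoc, Scheme.Hom.liftCoborder_ι] at hpb
  let T' : Subalgebra k K := T.1.restrictScalars k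
  have hfg : T'.FG := fg_restrict T₀.1 T₀.2 T.1 T.2
  exact ⟨T', hfg, Z, _, c, hZqp, hpb⟩

end

section

/-- A diagram of schemes over a ring. -/
structure Diag (A B : Type) (s t : B → A) (S : Type) [CommRing S] where
  Z : A → Scheme
  z : ∀ a, Z a ⟶ Spec (CommRingCat.of S)
  g : ∀ b, Z (s b) ⟶ Z (t b)
  gz : ∀ b, g b ≫ z (t b) = z (s b)

/-- A cartesian morphism of diagrams over a ring map. -/
structure Cart {A B : Type} {s t : B → A} {S S' : Type} [CommRing S] [CommRing S'] (φ : S →+* S')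
    (E' : Diag A B s t S') (E : Diag A B s t S) where
  q : ∀ a, E'.Z a ⟶ E.Z a
  pb : ∀ a, IsPullback (q a) (E'.z a) (E.z a) (sMap φ)
  qg : ∀ b, q (s b) ≫ E.g b = E'.g b ≫ q (t b)

section
variable {A B : Type} {s t : B → A} {S S' S'' : Type} [CommRing S] [CommRing S'] [CommRing S'']

/-- Base change of diagrams. -/
def Diag.bc (E : Diag A B s t S) (φ : S →+* S') : Diag A B s t S' where
  Z a := pullback (E.z a) (sMap φ)
  z a := pullback.snd _ _
  g b := pullback.lift (pullback.fst _ _ ≫ E.g b) (pullback.snd _ _)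
    (by rw [Category.assoc, E.gz, pullback.condition])
  gz b := pullback.lift_snd _ _ _

/-- Base change of diagrams. -/
def Diag.bcCart (E : Diag A B s t S) (φ : S →+* S') : Cart φ (E.bc φ) E where
  q _ := pullback.fst _ _
  pb _ := IsPullback.of_hasPullback _ _
  qg _ := (pullback.lift_fst _ _ _).symm

/-- Composition of cartesian morphisms. -/
def Cart.comp {φ : S →+* S'} {ψ : S' →+* S''} {χ : S →+* S''} (h : ψ.comp φ = χ)
    {E'' : Diag A B s t S''} {E' : Diag A B s t S'}
    {E : Diag A B s t S} (c : Cart φ E' E) (d : Cart ψ E'' E') : Cart χ E'' E where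
  q a := d.q a ≫ c.q a
  pb a := by
    have := (d.pb a).paste_horiz (c.pb a)
    rwa [sMap_comp, h] at this
  qg b := by rw [Category.assoc, c.qg, ← Category.assoc, d.qg, Category.assoc]

lemma Cart.fac_aux {φ : S →+* S'} {ψ : S' →+* S''} {χ : S →+* S''} (h : ψ.comp φ = χ)
    {E'' : Diag A B s t S''} {E : Diag A B s t S} (d : Cart χ E'' E) (a : A) :
    d.q a ≫ E.z a = (E''.z a ≫ sMap ψ) ≫ sMap φ := by
  rw [Category.assoc, sMap_comp, h, (d.pb a).w]

/-- Factorization of cartesian morphisms. -/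
def Cart.fac {φ : S →+* S'} {ψ : S' →+* S''} {χ : S →+* S''} (h : ψ.comp φ = χ)
    {E'' : Diag A B s t S''} {E' : Diag A B s t S'}
    {E : Diag A B s t S} (c : Cart φ E' E) (d : Cart χ E'' E) : Cart ψ E'' E' where
  q a := (c.pb a).lift (d.q a) (E''.z a ≫ sMap ψ) (Cart.fac_aux h d a)
  pb a := by
    refine IsPullback.of_right (h₁₂ := c.q a) (v₁₃ := E.z a) (h₂₂ := sMap φ) ?_
      ((c.pb a).lift_snd _ _ _) (c.pb a)
    rw [IsPullback.lift_fst, sMap_comp, h]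
    exact d.pb a
  qg b := by
    apply (c.pb _).hom_ext
    · rw [Category.assoc, Category.assoc, ← c.qg, ← Category.assoc, IsPullback.lift_fst,
        IsPullback.lift_fst, d.qg]
    · rw [Category.assoc, Category.assoc, E'.gz, IsPullback.lift_snd, IsPullback.lift_snd,
        ← Category.assoc, E''.gz]

lemma Cart.fac_comp {φ : S →+* S'} {ψ : S' →+* S''} {χ : S →+* S''} (h : ψ.comp φ = χ)
    {E'' : Diag A B s t S''} {E' : Diag A B s t S'}
    {E : Diag A B s t S} (c : Cart φ E' E) (d : Cart χ E'' E) (a : A) :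
    (Cart.fac h c d).q a ≫ c.q a = d.q a := (c.pb a).lift_fst _ _ _

end

/-- Spreading out a finite diagram. -/
lemma family_model {k K : Type} [Field k] [Field K] [Algebra k K] {A B : Type} [Finite A]
    [Finite B] {s t : B → A} (E : Diag A B s t K) (h : ∀ a, QuasiProjectiveOver K (E.z a)) :
    ∃ (T : Subalgebra k K) (_ : T.FG) (M : Diag A B s t T) (_ : Cart (T.val : T →+* K) E M),
      ∀ a, QuasiProjectiveOver T (M.z a) := by
  choose T hT Z z q hz hq using fun a => model_exists k K (h a)
  obtain ⟨⟨S, hS⟩, hle⟩ := Finite.exists_le (fun a => (⟨T a, hT a⟩ : {T : Subalgebra k K // T.FG}))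
  have hle' : ∀ a, T a ≤ S := fun a => hle a
  have : Algebra.FiniteType k S := S.fg_iff_finiteType.1 hS
  have : IsNoetherianRing S := Algebra.FiniteType.isNoetherianRing k S
  let i : ∀ a, T a →+* S := fun a => (Subalgebra.inclusion (hle' a) : T a →+* S)
  let Z1 := fun a => pullback (z a) (sMap (i a))
  let z1 : ∀ a, Z1 a ⟶ Spec (CommRingCat.of S) := fun a => pullback.snd _ _
  have hz1 : ∀ a, QuasiProjectiveOver S (z1 a) := fun a =>
    qp_bc (hz a) (i a) (IsPullback.of_hasPullback _ _)
  have ei : ∀ a, (S.val : S →+* K).comp (i a) = (T a).val := fun a => rfl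
  let q1 : ∀ a, E.Z a ⟶ Z1 a := fun a => pullback.lift (q a) (E.z a ≫ sMap (S.val : S →+* K)) (by
    rw [Category.assoc, sMap_comp, ei, (hq a).w])
  have hq1 : ∀ a, IsPullback (q1 a) (E.z a) (z1 a) (sMap (algebraMap S K)) := fun a => by
    refine IsPullback.of_right (h₁₂ := pullback.fst (z a) (sMap (i a))) (v₁₃ := z a)
      (h₂₂ := sMap (i a)) ?_ (pullback.lift_snd _ _ _) (IsPullback.of_hasPullback _ _)
    rw [pullback.lift_fst, sMap_comp]
    exact hq a
  have hsp : ∀ b, ∃ T₀ : {T : Subalgebra S K // T.FG}, ∀ T, T₀ ≤ T →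
      ∃ g : pullback (z1 (s b)) (sMap (algebraMap S T.1)) ⟶ Z1 (t b),
        toModel (hq1 (s b)) T ≫ g = E.g b ≫ q1 (t b) ∧
        g ≫ z1 (t b) = pullback.fst _ _ ≫ z1 (s b) := fun b => by
    have := (qp_noeth (hz1 (s b)))
    have := (qp_lfp (hz1 (t b)))
    have := hom_spread (hq1 (s b)) (z1 (t b)) (E.g b ≫ q1 (t b)) (by
      rw [Category.assoc, (hq1 _).w, (hq1 _).w, ← Category.assoc, E.gz])
    exact this
  choose T₀ hT₀ using hsp
  obtain ⟨T₁, hT₁⟩ := Finite.exists_le T₀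
  choose g hg1 hg2 using fun b => hT₀ b T₁ (hT₁ b)
  have M : ∃ (M : Diag A B s t T₁.1) (_ : Cart (T₁.1.val : T₁.1 →+* K) E M),
      ∀ a, QuasiProjectiveOver T₁.1 (M.z a) := by
    refine ⟨{ Z := fun a => pullback (z1 a) (sMap (algebraMap S T₁.1))
              z := fun a => pullback.snd _ _
              g := fun b => pullback.lift (g b) (pullback.snd _ _)
                (by rw [hg2, pullback.condition])
              gz := fun b => pullback.lift_snd _ _ _ },
            { q := fun a => toModel (hq1 a) T₁
              pb := fun a => toModel_isPullback (hq1 a) T₁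
              qg := fun b => ?_ }, ?_⟩
    · apply pullback.hom_ext
      · rw [Category.assoc, Category.assoc, pullback.lift_fst, hg1, toModel_fst]
      · rw [Category.assoc, Category.assoc, pullback.lift_snd, toModel_snd, toModel_snd,
          ← Category.assoc, E.gz]
    · exact fun a => qp_bc (hz1 a) _ (IsPullback.of_hasPullback _ _)
  exact ⟨T₁.1.restrictScalars k, fg_restrict S hS T₁.1 T₁.2, M⟩

end

section

section
variable {R K : Type} [CommRing R] [CommRing K] [Algebra R K]
  {X Z Z₂ Z₃ : Scheme} {q : X ⟶ Z} {q₂ : X ⟶ Z₂} {q₃ : X ⟶ Z₃}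
  {p : X ⟶ Spec (CommRingCat.of K)} {z : Z ⟶ Spec (CommRingCat.of R)}
  {z₂ : Z₂ ⟶ Spec (CommRingCat.of R)} {z₃ : Z₃ ⟶ Spec (CommRingCat.of R)}

/-- Extend a map to the base change of the target. -/
def upl {T : {T : Subalgebra R K // T.FG}} (u : pullback z (sMap (algebraMap R T.1)) ⟶ Z₂)
    (hu : u ≫ z₂ = pullback.fst _ _ ≫ z) :
    pullback z (sMap (algebraMap R T.1)) ⟶ pullback z₂ (sMap (algebraMap R T.1)) :=
  pullback.lift u (pullback.snd _ _) (hu.trans pullback.condition)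

lemma upl_fst {T : {T : Subalgebra R K // T.FG}} (u : pullback z (sMap (algebraMap R T.1)) ⟶ Z₂)
    (hu : u ≫ z₂ = pullback.fst _ _ ≫ z) : upl u hu ≫ pullback.fst _ _ = u :=
  pullback.lift_fst _ _ _

lemma upl_snd {T : {T : Subalgebra R K // T.FG}} (u : pullback z (sMap (algebraMap R T.1)) ⟶ Z₂)
    (hu : u ≫ z₂ = pullback.fst _ _ ≫ z) : upl u hu ≫ pullback.snd _ _ = pullback.snd _ _ :=
  pullback.lift_snd _ _ _

lemma tr_aux {T T' : {T : Subalgebra R K // T.FG}} (h : T ≤ T')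
    {u : pullback z (sMap (algebraMap R T.1)) ⟶ Z₂}
    (hu : u ≫ z₂ = pullback.fst _ _ ≫ z) : (mTrans z h ≫ u) ≫ z₂ = pullback.fst _ _ ≫ z := by
  rw [Category.assoc, hu, ← Category.assoc, mTrans_fst]

lemma upl_trans {T T' : {T : Subalgebra R K // T.FG}} (h : T ≤ T')
    (u : pullback z (sMap (algebraMap R T.1)) ⟶ Z₂)
    (hu : u ≫ z₂ = pullback.fst _ _ ≫ z) :
    upl (mTrans z h ≫ u) (tr_aux h hu) ≫ mTrans z₂ h = mTrans z h ≫ upl u hu := by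
  apply pullback.hom_ext
  · rw [Category.assoc, Category.assoc, mTrans_fst, upl_fst, upl_fst]
  · rw [Category.assoc, Category.assoc, mTrans_snd, upl_snd, mTrans_snd, ← Category.assoc, upl_snd]

lemma toModel_upl (hq : IsPullback q p z (sMap (algebraMap R K)))
    (hq₂ : IsPullback q₂ p z₂ (sMap (algebraMap R K)))
    {T : {T : Subalgebra R K // T.FG}}
    (u : pullback z (sMap (algebraMap R T.1)) ⟶ Z₂)
    (hu : u ≫ z₂ = pullback.fst _ _ ≫ z) (hu' : toModel hq T ≫ u = q₂) :
    toModel hq T ≫ upl u hu = toModel hq₂ T := by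
  apply pullback.hom_ext
  · rw [Category.assoc, upl_fst, hu', toModel_fst]
  · rw [Category.assoc, upl_snd, toModel_snd, toModel_snd]

lemma iso_half [CompactSpace Z] [LocallyOfFiniteType z]
    (hq : IsPullback q p z (sMap (algebraMap R K)))
    (hq₂ : IsPullback q₂ p z₂ (sMap (algebraMap R K)))
    {T : {T : Subalgebra R K // T.FG}}
    (u : pullback z (sMap (algebraMap R T.1)) ⟶ Z₂)
    (hu : u ≫ z₂ = pullback.fst _ _ ≫ z) (hu' : toModel hq T ≫ u = q₂)
    (v : pullback z₂ (sMap (algebraMap R T.1)) ⟶ Z)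
    (hv : v ≫ z = pullback.fst _ _ ≫ z₂) (hv' : toModel hq₂ T ≫ v = q) :
    ∃ T₁ : {T : Subalgebra R K // T.FG}, ∀ T' (_ : T₁ ≤ T') (h : T ≤ T'),
      upl (mTrans z h ≫ u) (tr_aux h hu) ≫ upl (mTrans z₂ h ≫ v) (tr_aux h hv) = 𝟙 _ := by
  obtain ⟨T₁, hT₁⟩ := eq_spread hq z (upl u hu ≫ v) (pullback.fst _ _)
    (by rw [Category.assoc, hv, ← Category.assoc, upl_fst, hu]) rfl
    (by rw [← Category.assoc, toModel_upl hq hq₂ u hu hu', hv', toModel_fst])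
  refine ⟨T₁, fun T' h1 h => ?_⟩
  apply pullback.hom_ext
  · rw [Category.assoc, upl_fst, ← Category.assoc, upl_trans (hu := hu), Category.assoc,
      hT₁ T' h1 h, mTrans_fst, Category.id_comp]
  · rw [Category.assoc, upl_snd, upl_snd, Category.id_comp]

end

/-- The base changed map. -/
def bcg {R K : Type} [CommRing R] [CommRing K] [Algebra R K] {A B : Type} {s t : B → A}
    (M : Diag A B s t R) (T : {T : Subalgebra R K // T.FG}) (b : B) :
    pullback (M.z (s b)) (sMap (algebraMap R T.1)) ⟶ pullback (M.z (t b)) (sMap (algebraMap R T.1)) :=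
  (M.bc (algebraMap R T.1)).g b

lemma bcg_fst {R K : Type} [CommRing R] [CommRing K] [Algebra R K] {A B : Type} {s t : B → A}
    (M : Diag A B s t R) (T : {T : Subalgebra R K // T.FG}) (b : B) :
    bcg M T b ≫ pullback.fst _ _ = pullback.fst _ _ ≫ M.g b := pullback.lift_fst _ _ _

lemma bcg_snd {R K : Type} [CommRing R] [CommRing K] [Algebra R K] {A B : Type} {s t : B → A}
    (M : Diag A B s t R) (T : {T : Subalgebra R K // T.FG}) (b : B) :
    bcg M T b ≫ pullback.snd _ _ = pullback.snd _ _ := pullback.lift_snd _ _ _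

lemma toModel_bc {R K : Type} [CommRing R] [CommRing K] [Algebra R K] {A B : Type} {s t : B → A}
    {E : Diag A B s t K} {M : Diag A B s t R} (c : Cart (algebraMap R K) E M)
    (T : {T : Subalgebra R K // T.FG}) (b : B) :
    toModel (c.pb (s b)) T ≫ bcg M T b = E.g b ≫ toModel (c.pb (t b)) T := by
  apply pullback.hom_ext
  · rw [Category.assoc, bcg_fst, ← Category.assoc, toModel_fst, Category.assoc, toModel_fst, c.qg]
  · rw [Category.assoc, bcg_snd, toModel_snd, Category.assoc, toModel_snd, ← Category.assoc, E.gz]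

/-- Two models of the same diagram become isomorphic over a finitely generated algebra. -/
lemma isospread {R K : Type} [CommRing R] [IsNoetherianRing R] [CommRing K] [Algebra R K]
    {A B : Type} [Finite A] [Finite B] {s t : B → A}
    {E : Diag A B s t K} {M N : Diag A B s t R} (c : Cart (algebraMap R K) E M)
    (d : Cart (algebraMap R K) E N) (hM : ∀ a, QuasiProjectiveOver R (M.z a))
    (hN : ∀ a, QuasiProjectiveOver R (N.z a)) :
    ∃ T : {T : Subalgebra R K // T.FG}, Nonempty
      (Cart (RingHom.id T.1) (M.bc (algebraMap R T.1)) (N.bc (algebraMap R T.1))) := by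
  have i1 := fun a => qp_noeth (hM a)
  have i2 := fun a => qp_noeth (hN a)
  have i3 := fun a => qp_lfp (hM a)
  have i4 := fun a => qp_lfp (hN a)
  choose T1 hT1 using fun a => hom_spread (c.pb a) (N.z a) (d.q a) (by rw [(c.pb a).w, (d.pb a).w])
  choose T2 hT2 using fun a => hom_spread (d.pb a) (M.z a) (c.q a) (by rw [(c.pb a).w, (d.pb a).w])
  obtain ⟨T3, hT3⟩ := Finite.exists_le T1
  obtain ⟨T4, hT4⟩ := Finite.exists_le T2
  obtain ⟨T0, h30, h40⟩ := exists_ge_ge T3 T4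
  choose u hu' hu using fun a => hT1 a T0 ((hT3 a).trans h30)
  choose v hv' hv using fun a => hT2 a T0 ((hT4 a).trans h40)
  choose T5 hT5 using fun a => iso_half (c.pb a) (d.pb a) (u a) (hu a) (hu' a) (v a) (hv a) (hv' a)
  choose T6 hT6 using fun a => iso_half (d.pb a) (c.pb a) (v a) (hv a) (hv' a) (u a) (hu a) (hu' a)
  have hb : ∀ b, ∃ T₁ : {T : Subalgebra R K // T.FG}, ∀ T' (_ : T₁ ≤ T') (h : T0 ≤ T'),
      mTrans (M.z (s b)) h ≫ (u (s b) ≫ N.g b) =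
        mTrans (M.z (s b)) h ≫ (bcg M T0 b ≫ u (t b)) := fun b => by
    refine eq_spread (c.pb (s b)) (N.z (t b)) _ _ ?_ ?_ ?_
    · rw [Category.assoc, N.gz, hu]
    · rw [Category.assoc, hu, ← Category.assoc, bcg_fst, Category.assoc, M.gz]
    · rw [← Category.assoc, hu', d.qg, ← Category.assoc, toModel_bc, Category.assoc, hu']
  choose T7 hT7 using hb
  obtain ⟨T5', hT5'⟩ := Finite.exists_le T5
  obtain ⟨T6', hT6'⟩ := Finite.exists_le T6
  obtain ⟨T7', hT7'⟩ := Finite.exists_le T7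
  obtain ⟨T8, h58, h68⟩ := exists_ge_ge T5' T6'
  obtain ⟨T9, h79, h09⟩ := exists_ge_ge T7' T0
  obtain ⟨T, h8, h9⟩ := exists_ge_ge T8 T9
  have h0 : T0 ≤ T := h09.trans h9
  refine ⟨T, ⟨{ q := fun a => upl (mTrans (M.z a) h0 ≫ u a) (tr_aux h0 (hu a)), pb := ?_, qg := ?_ }⟩⟩
  · intro a
    have e1 := hT5 a T ((hT5' a).trans (h58.trans h8)) h0
    have e2 := hT6 a T ((hT6' a).trans (h68.trans h8)) h0
    have : IsIso (upl (mTrans (M.z a) h0 ≫ u a) (tr_aux h0 (hu a))) := ⟨_, e1, e2⟩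
    have : IsIso (sMap (RingHom.id T.1)) := by
      have : sMap (RingHom.id T.1) = 𝟙 _ := Spec.map_id _
      rw [this]; infer_instance
    change IsPullback (upl (mTrans (M.z a) h0 ≫ u a) (tr_aux h0 (hu a))) (pullback.snd _ _)
      (pullback.snd _ _) _
    refine IsPullback.of_horiz_isIso ⟨?_⟩
    have : sMap (RingHom.id T.1) = 𝟙 _ := Spec.map_id _
    rw [this]
    exact (upl_snd _ _).trans (Category.comp_id _).symm
  · intro b
    have e := hT7 b T ((hT7' b).trans (h79.trans h9)) h0
    change upl (mTrans (M.z (s b)) h0 ≫ u (s b)) _ ≫ bcg N T b =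
      bcg M T b ≫ upl (mTrans (M.z (t b)) h0 ≫ u (t b)) _
    apply pullback.hom_ext
    · rw [Category.assoc, bcg_fst, ← Category.assoc, upl_fst, Category.assoc, e,
        Category.assoc, upl_fst, ← Category.assoc, ← Category.assoc]
      congr 1
      apply pullback.hom_ext
      · rw [Category.assoc, Category.assoc, mTrans_fst, bcg_fst, bcg_fst, ← Category.assoc,
          mTrans_fst]
      · rw [Category.assoc, Category.assoc, mTrans_snd, bcg_snd, mTrans_snd, ← Category.assoc,
          bcg_snd]
    · rw [Category.assoc, Category.assoc, bcg_snd, upl_snd, upl_snd, bcg_snd]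

end

section

lemma aut_extend {F K ι : Type} [Field F] [Field K] [Algebra F K] [IsAlgClosed K] (v : ι → K)
    (hv : IsTranscendenceBasis F v) (τ : F ≃+* F) (e : Equiv.Perm ι) :
    ∃ σ : K ≃+* K, (∀ i, σ (v i) = v (e i)) ∧ ∀ x, σ (algebraMap F K x) = algebraMap F K (τ x) := by
  let := IsAlgClosed.isAlgClosure_of_transcendence_basis v hv
  let E : Algebra.adjoin F (Set.range v) ≃+* Algebra.adjoin F (Set.range v) :=
    hv.1.aevalEquiv.symm.toRingEquiv.trans
      (((MvPolynomial.mapEquiv ι τ).trans (MvPolynomial.renameEquiv F e).toRingEquiv).trans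
        hv.1.aevalEquiv.toRingEquiv)
  have hE : ∀ p : MvPolynomial ι F, (E (hv.1.aevalEquiv p) : K) =
      MvPolynomial.aeval v (MvPolynomial.rename e (MvPolynomial.map (τ : F →+* F) p)) := by
    intro p
    simp [E]
  refine ⟨IsAlgClosure.equivOfEquiv K K E, fun i => ?_, fun x => ?_⟩
  · have h : v i = algebraMap (Algebra.adjoin F (Set.range v)) K
        (hv.1.aevalEquiv (MvPolynomial.X i)) := by
      simp
    conv_lhs => rw [h]
    rw [IsAlgClosure.equivOfEquiv_algebraMap]
    exact (hE _).trans (by simp)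
  · have h : algebraMap F K x = algebraMap (Algebra.adjoin F (Set.range v)) K
        (hv.1.aevalEquiv (MvPolynomial.C x)) := by
      simp
    conv_lhs => rw [h]
    rw [IsAlgClosure.equivOfEquiv_algebraMap]
    exact (hE _).trans (by simp)

lemma chev {R S : Type} [CommRing R] [IsDomain R] [IsNoetherianRing R] [CommRing S] [IsDomain S]
    (f : R →+* S) (hf : Function.Injective f) (hft : f.FiniteType) :
    ∃ h : R, h ≠ 0 ∧ ∀ x : PrimeSpectrum R, h ∉ x.asIdeal → x ∈ Set.range (PrimeSpectrum.comap f) := by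
  have hfp : f.FinitePresentation := RingHom.FinitePresentation.of_finiteType.mp hft
  obtain ⟨s, hs⟩ := PrimeSpectrum.exists_constructibleSetData_iff.mpr
    (PrimeSpectrum.isConstructible_range_comap hfp)
  have h0 : (⊥ : PrimeSpectrum R) ∈ s.toSet := by
    rw [hs]
    refine ⟨⊥, ?_⟩
    ext x
    simpa using map_eq_zero_iff f hf
  simp only [PrimeSpectrum.ConstructibleSetData.toSet, Set.mem_iUnion] at h0
  obtain ⟨C, hC, h0⟩ := h0
  simp only [PrimeSpectrum.BasicConstructibleSetData.toSet, Set.mem_sdiff] at h0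
  refine ⟨C.f, fun h => h0.2 (by simp [h]), fun x hx => ?_⟩
  rw [← hs]
  simp only [PrimeSpectrum.ConstructibleSetData.toSet, Set.mem_iUnion]
  refine ⟨C, hC, ?_, ?_⟩
  · have := h0.1
    rw [PrimeSpectrum.mem_zeroLocus] at this ⊢
    intro y hy
    have := this hy
    have hy0 : y = 0 := by simpa using this
    simp [hy0]
  · simpa using hx

lemma point_lift {k F ι : Type} {T : Type} [Field k] [Infinite k] [Field F] [IsAlgClosed F] [Algebra k F]
    [CommRing T] [IsDomain T] [Algebra F T] [Algebra.FiniteType F T] [Finite ι] (y : ι → T)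
    (hy : AlgebraicIndependent F y) (Q : MvPolynomial ι k) (hQ : Q ≠ 0) :
    ∃ c : ι → k, MvPolynomial.eval c Q ≠ 0 ∧ ∃ w : T →ₐ[F] F, ∀ i, w (y i) = algebraMap k F (c i) := by
  obtain ⟨h, h0, hh⟩ := chev (MvPolynomial.aeval y : MvPolynomial ι F →ₐ[F] T).toRingHom hy (by
    have : (algebraMap F T).FiniteType := by
      rw [RingHom.finiteType_algebraMap]; infer_instance
    refine RingHom.FiniteType.of_comp_finiteType (f := algebraMap F (MvPolynomial ι F)) ?_
    convert this
    exact (MvPolynomial.aeval y : MvPolynomial ι F →ₐ[F] T).comp_algebraMap)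
  have hne : h * MvPolynomial.map (algebraMap k F) Q ≠ 0 := by
    refine mul_ne_zero h0 ?_
    rwa [Ne, map_eq_zero_iff _ (MvPolynomial.map_injective _ (algebraMap k F).injective)]
  have : ∃ c : ι → F, c ∈ Set.pi .univ (fun _ : ι => Set.range (algebraMap k F)) ∧
      MvPolynomial.eval c (h * MvPolynomial.map (algebraMap k F) Q) ≠ 0 := by
    by_contra! hcon
    refine hne (MvPolynomial.funext_set (fun _ : ι => Set.range (algebraMap k F))
      (fun _ => Set.infinite_range_of_injective (algebraMap k F).injective) ?_)
    intro x hx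
    rw [hcon x hx, map_zero]
  obtain ⟨c, hc, hev⟩ := this
  choose c' hc' using fun i => hc i trivial
  rw [map_mul] at hev
  refine ⟨c', ?_, ?_⟩
  · intro h1
    refine right_ne_zero_of_mul hev ?_
    obtain rfl : (fun i => algebraMap k F (c' i)) = c := funext hc'
    rw [MvPolynomial.eval_map]
    have := MvPolynomial.eval₂_comp_left (algebraMap k F) (RingHom.id k) c' Q
    rw [RingHom.comp_id] at this
    refine this.symm.trans ?_
    rw [MvPolynomial.eval₂_id, h1, map_zero]
  let m : Ideal (MvPolynomial ι F) := RingHom.ker (MvPolynomial.eval c)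
  have hm : m.IsMaximal := RingHom.ker_isMaximal_of_surjective _ (fun x => ⟨MvPolynomial.C x, by simp⟩)
  obtain ⟨P, hP⟩ := hh ⟨m, hm.isPrime⟩ (left_ne_zero_of_mul hev)
  obtain ⟨N, hN, hPN⟩ := Ideal.exists_le_maximal P.asIdeal P.isPrime.ne_top
  let := Ideal.Quotient.field N
  have hfin : Module.Finite F (T ⧸ N) := finite_of_finite_type_of_isJacobsonRing F (T ⧸ N)
  have hbij : Function.Bijective (algebraMap F (T ⧸ N)) :=
    IsAlgClosed.algebraMap_bijective_of_isIntegral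
  let ε : F ≃ₐ[F] (T ⧸ N) := AlgEquiv.ofBijective (Algebra.ofId F _) hbij
  refine ⟨ε.symm.toAlgHom.comp (Ideal.Quotient.mkₐ F N), fun i => ?_⟩
  rw [hc']
  have : MvPolynomial.X i - MvPolynomial.C (c i) ∈ m := by simp [m]
  have h2 : MvPolynomial.X i - MvPolynomial.C (c i) ∈ (PrimeSpectrum.comap
    (MvPolynomial.aeval y : MvPolynomial ι F →ₐ[F] T).toRingHom P).asIdeal := by rw [hP]; exact this
  have h3 : y i - algebraMap F T (c i) ∈ N := hPN (by simpa using h2)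
  have h4 := Ideal.Quotient.eq.mpr h3
  change ε.symm (Ideal.Quotient.mk N (y i)) = _
  rw [h4, AlgEquiv.symm_apply_eq]
  rfl


lemma trans_infinite {k K : Type} [Field k] [Field K] [Algebra k K]
    (htr : ∀ L : IntermediateField k K, L.FG → ∃ x : K, Transcendental L x)
    (ℬ : Set K) (h : IsTranscendenceBasis k ((↑) : ℬ → K)) : ℬ.Infinite := by
  intro hfin
  obtain ⟨x, hx⟩ := htr (IntermediateField.adjoin k ℬ)
    (IntermediateField.fg_adjoin_of_finite hfin)
  have := h.isAlgebraic_field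
  rw [Subtype.range_coe] at this
  exact hx (this.isAlgebraic x)

lemma alg_poly {k S ι : Type} [Field k] [CommRing S] [Algebra k S] (x : ι → S)
    (hx : IsTranscendenceBasis k x) (s : S) :
    ∃ P : Polynomial (MvPolynomial ι k), P ≠ 0 ∧
      Polynomial.eval₂ (MvPolynomial.aeval x : MvPolynomial ι k →ₐ[k] S).toRingHom s P = 0 := by
  have := hx.isAlgebraic
  obtain ⟨p, hp, h⟩ := this.isAlgebraic s
  refine ⟨p.map hx.1.aevalEquiv.symm.toRingHom, ?_, ?_⟩
  · rwa [Ne, Polynomial.map_eq_zero_iff]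
    exact hx.1.aevalEquiv.symm.injective
  · rw [Polynomial.eval₂_map]
    rw [Polynomial.aeval_def] at h
    have e : (MvPolynomial.aeval x : MvPolynomial ι k →ₐ[k] S).toRingHom.comp
        hx.1.aevalEquiv.symm.toRingHom = algebraMap (Algebra.adjoin k (Set.range x)) S := by
      refine RingHom.ext fun z => ?_
      obtain ⟨q, rfl⟩ := hx.1.aevalEquiv.surjective z
      simp
    rw [← h, ← e]

lemma exists_perm {ι β : Type} [Finite ι] [Infinite β] (a : ι → β) (ha : Function.Injective a) :
    ∃ e : Equiv.Perm β, Disjoint (Set.range a) (Set.range (e ∘ a)) := by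
  have h1 : (Set.range a)ᶜ.Infinite := (Set.finite_range a).infinite_compl
  have := h1.to_subtype
  have := Fintype.ofFinite ι
  let g : ι → β := fun i => (Infinite.natEmbedding ((Set.range a)ᶜ : Set β) (Fintype.equivFin ι i)).1
  have hg : Function.Injective (Sum.elim a g) := by
    refine ha.sumElim ?_ ?_
    · intro i j h
      exact (Fintype.equivFin ι).injective (Fin.ext
        ((Infinite.natEmbedding ((Set.range a)ᶜ : Set β)).injective (Subtype.ext h)))
    · intro i j h
      exact (Infinite.natEmbedding ((Set.range a)ᶜ : Set β) (Fintype.equivFin ι j)).2 ⟨i, h⟩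
  have := Classical.decPred (· ∈ Set.range (Sum.elim a g))
  refine ⟨Equiv.Perm.extendDomain (Equiv.sumComm ι ι) (Equiv.ofInjective _ hg), ?_⟩
  rw [Set.disjoint_left]
  rintro _ ⟨i, rfl⟩ ⟨j, hj⟩
  have := Equiv.Perm.extendDomain_apply_image (Equiv.sumComm ι ι) (Equiv.ofInjective _ hg) (Sum.inl j)
  simp only [Equiv.ofInjective_apply, Sum.elim_inl, Equiv.sumComm_apply, Sum.swap_inl, Sum.elim_inr] at this
  rw [Function.comp_apply, this] at hj
  have := @hg (Sum.inr j) (Sum.inl i) hj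
  simp at this


lemma hom_eval_mv {k A B ι : Type} [Field k] [CommRing A] [CommRing B] [Algebra k A] [Algebra k B]
    (φ : A →ₐ[k] B) (x : ι → A) (s : A) (P : Polynomial (MvPolynomial ι k)) :
    φ (Polynomial.eval₂ (MvPolynomial.aeval x : MvPolynomial ι k →ₐ[k] A).toRingHom s P) =
      Polynomial.eval₂ (MvPolynomial.aeval (fun i => φ (x i)) : MvPolynomial ι k →ₐ[k] B).toRingHom
        (φ s) P := by
  have h2 := Polynomial.hom_eval₂ P (MvPolynomial.aeval x : MvPolynomial ι k →ₐ[k] A).toRingHom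
    φ.toRingHom s
  have h3 : (φ.toRingHom.comp (MvPolynomial.aeval x : MvPolynomial ι k →ₐ[k] A).toRingHom) =
      (MvPolynomial.aeval (fun i => φ (x i)) : MvPolynomial ι k →ₐ[k] B).toRingHom := by
    ext <;> simp
  rw [h3] at h2
  exact h2

lemma specialize_exists {k K : Type} [Field k] [CharZero k] [Field K] [IsAlgClosed K] [Algebra k K]
    (htr : ∀ L : IntermediateField k K, L.FG → ∃ x : K, Transcendental L x)
    (S : Subalgebra k K) (hS : S.FG) : ∃ σ : K ≃ₐ[k] K, ∀ T : Subalgebra k K, T.FG → S ≤ T →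
      (∀ s ∈ S, σ s ∈ T) → ∃ w : T →ₐ[k] K, (∀ s (hs : s ∈ T), s ∈ S → w ⟨s, hs⟩ = s) ∧
        ∀ s ∈ S, ∀ h : σ s ∈ T, IsAlgebraic k (w ⟨σ s, h⟩) := by
  have hft : Algebra.FiniteType k S := S.fg_iff_finiteType.mp hS
  obtain ⟨ι, x₀, hx₀⟩ := exists_isTranscendenceBasis' k S
  have hfin : Finite ι := by
    have h1 := hx₀.cardinalMk_eq_trdeg
    have h2 : Algebra.trdeg k S < Cardinal.aleph0 := trdeg_lt_aleph0_of_finiteType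
    rw [← h1] at h2
    exact Cardinal.lt_aleph0_iff_finite.mp h2
  have hxi : AlgebraicIndependent k (fun i => (x₀ i : K)) :=
    hx₀.1.map' (f := S.val) Subtype.val_injective
  obtain ⟨ℬ, hℬ, hb⟩ := exists_isTranscendenceBasis_superset hxi.to_subtype_range
  have hinf := (trans_infinite htr ℬ hb).to_subtype
  let a : ι → ℬ := fun i => ⟨x₀ i, hℬ ⟨i, rfl⟩⟩
  have ha : Function.Injective a := fun i j h =>
    hxi.injective (congrArg (fun z : ℬ => (z : K)) h)
  obtain ⟨e, he⟩ := exists_perm a ha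
  obtain ⟨σ₀, hσ, hσk⟩ := aut_extend _ hb (RingEquiv.refl k) e
  let σ : K ≃ₐ[k] K := AlgEquiv.ofRingEquiv (f := σ₀) hσk
  have hσx : ∀ i, σ (x₀ i) = (e (a i) : K) := fun i => hσ (a i)
  let L := IntermediateField.adjoin k (Set.range fun i => (x₀ i : K))
  let F := algebraicClosure L K
  have hyL : AlgebraicIndependent L (fun i => (e (a i) : K)) := by
    rw [IntermediateField.algebraicIndependent_adjoin_iff]
    have h1 := hb.1.adjoin_of_disjoint he
    have h2 : ((↑) : ℬ → K) '' Set.range a = (Set.range fun i => (x₀ i : K)) := by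
      rw [← Set.range_comp]; rfl
    rw [h2] at h1
    refine h1.comp (fun i => (⟨e (a i), ⟨i, rfl⟩⟩ : Set.range (e ∘ a))) ?_
    intro i j h
    exact ha (e.injective (congrArg Subtype.val h))
  have hyF : AlgebraicIndependent F (fun i => (e (a i) : K)) := hyL.algebraicClosure
  have hFc : IsAlgClosed F := (algebraicClosure.isAlgClosure L K).isAlgClosed
  choose P hP hPe using alg_poly x₀ hx₀
  have hPK : ∀ s : S, Polynomial.eval₂ (MvPolynomial.aeval (fun i => (x₀ i : K)) :
      MvPolynomial ι k →ₐ[k] K).toRingHom (s : K) (P s) = 0 := by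
    intro s
    have h1 := congrArg S.val (hPe s)
    rw [map_zero, hom_eval_mv] at h1
    exact h1
  have : IsScalarTower k F K := IsScalarTower.of_algebraMap_eq (fun _ => rfl)
  have hSF : ∀ s ∈ S, s ∈ F := by
    intro s hs
    rw [mem_algebraicClosure_iff]
    let g : MvPolynomial ι k →ₐ[k] L := MvPolynomial.aeval
      (fun i => (⟨x₀ i, IntermediateField.subset_adjoin _ _ ⟨i, rfl⟩⟩ : L))
    have hg : L.val.toRingHom.comp g.toRingHom = (MvPolynomial.aeval (fun i => (x₀ i : K)) :
      MvPolynomial ι k →ₐ[k] K).toRingHom := by ext <;> simp [g]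
    refine ⟨(P ⟨s, hs⟩).map g.toRingHom, ?_, ?_⟩
    · rw [Ne, Polynomial.map_eq_zero_iff]
      · exact hP _
      · refine Function.Injective.of_comp (f := L.val) ?_
        have h5 : Function.Injective (L.val.toRingHom.comp g.toRingHom) := by
          rw [hg]; exact hxi
        exact h5
    · rw [Polynomial.aeval_def, Polynomial.eval₂_map, ← hPK ⟨s, hs⟩, ← hg]
      rfl
  refine ⟨σ, fun T hT hST hσT => ?_⟩
  obtain ⟨G, hG⟩ := hS
  obtain ⟨GT, hGT⟩ := hT
  let T' : Subalgebra F K := Algebra.adjoin F (GT : Set K)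
  have hTT' : T ≤ T'.restrictScalars k := by
    rw [← hGT, Algebra.adjoin_le_iff]
    exact Algebra.subset_adjoin
  have hT'ft : Algebra.FiniteType F T' := (Subalgebra.fg_iff_finiteType _).mp ⟨GT, rfl⟩
  have hyT : ∀ i, (e (a i) : K) ∈ T := fun i => hσx i ▸ hσT _ (x₀ i).2
  let y' : ι → T' := fun i => ⟨e (a i), hTT' (hyT i)⟩
  have hy' : AlgebraicIndependent F y' := AlgebraicIndependent.of_comp T'.val hyF
  have hGS : ∀ g ∈ G, g ∈ S := fun g hg => hG ▸ Algebra.subset_adjoin hg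
  have := charZero_of_injective_algebraMap (algebraMap k K).injective
  obtain ⟨c, hc, w, hw⟩ := point_lift y' hy'
    (∏ g ∈ G.attach, (P ⟨g.1, hGS g.1 g.2⟩).leadingCoeff)
    (Finset.prod_ne_zero_iff.mpr fun g _ => Polynomial.leadingCoeff_ne_zero.mpr (hP _))
  let w' : T →ₐ[k] K := (IsScalarTower.toAlgHom k F K).comp
    ((w.restrictScalars k).comp (Subalgebra.inclusion hTT' : T →ₐ[k] T'.restrictScalars k))
  have hw'y : ∀ i, w' ⟨e (a i), hyT i⟩ = algebraMap k K (c i) := by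
    intro i
    change algebraMap F K (w (y' i)) = _
    rw [hw, ← IsScalarTower.algebraMap_apply]
  refine ⟨w', ?_, ?_⟩
  · intro s hs hsS
    change algebraMap F K (w (algebraMap F T' ⟨s, hSF s hsS⟩)) = s
    rw [w.commutes]
    rfl
  · intro s hs h
    rw [← hG] at hs
    have hT : ∀ s, s ∈ Algebra.adjoin k (G : Set K) → σ s ∈ T := fun s hs => hσT s (hG ▸ hs)
    induction hs using Algebra.adjoin_induction with
    | mem g hg =>
      have h1 := congrArg σ.toAlgHom (hPK ⟨g, hGS g hg⟩)
      rw [map_zero, hom_eval_mv] at h1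
      have h2 : Polynomial.eval₂ (MvPolynomial.aeval (fun i => (⟨e (a i), hyT i⟩ : T)) :
          MvPolynomial ι k →ₐ[k] T).toRingHom ⟨σ g, h⟩ (P ⟨g, hGS g hg⟩) = 0 := by
        have : Function.Injective T.val := Subtype.val_injective
        apply this
        have h7 : (fun i => T.val (⟨e (a i), hyT i⟩ : T)) = fun i => σ.toAlgHom (x₀ i : K) :=
          funext fun i => (hσx i).symm
        rw [map_zero, hom_eval_mv, h7]
        exact h1
      have h3 := congrArg w' h2
      rw [map_zero, hom_eval_mv] at h3
      have h4 : (MvPolynomial.aeval (fun i => w' (⟨e (a i), hyT i⟩ : T)) :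
          MvPolynomial ι k →ₐ[k] K).toRingHom = (algebraMap k K).comp (MvPolynomial.eval c) := by
        ext i
        · simp
        · simpa using hw'y i
      rw [h4, ← Polynomial.eval₂_map] at h3
      refine ⟨_, ?_, h3⟩
      intro h5
      have h6 := congrArg (fun p => Polynomial.coeff p (P ⟨g, hGS g hg⟩).natDegree) h5
      simp only [Polynomial.coeff_map, Polynomial.coeff_zero] at h6
      apply hc
      rw [map_prod]
      exact Finset.prod_eq_zero (Finset.mem_attach _ ⟨g, hg⟩) h6
    | algebraMap r =>
      have h1 : (⟨σ (algebraMap k K r), h⟩ : T) = algebraMap k T r := Subtype.ext (σ.commutes r)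
      rw [h1, w'.commutes]
      exact isAlgebraic_algebraMap r
    | add x y hx hy ihx ihy =>
      have := (ihx (hT x hx)).add (ihy (hT y hy))
      rw [← map_add] at this
      have h1 : (⟨σ (x + y), h⟩ : T) = ⟨σ x, hT x hx⟩ + ⟨σ y, hT y hy⟩ :=
        Subtype.ext (map_add σ x y)
      rw [h1]
      exact this
    | mul x y hx hy ihx ihy =>
      have := (ihx (hT x hx)).mul (ihy (hT y hy))
      rw [← map_mul] at this
      have h1 : (⟨σ (x * y), h⟩ : T) = ⟨σ x, hT x hx⟩ * ⟨σ y, hT y hy⟩ :=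
        Subtype.ext (map_mul σ x y)
      rw [h1]
      exact this

end

section

open scoped TensorProduct

lemma galois_factor {k K S : Type} [Field k] [CharZero k] [Field K] [IsAlgClosed K] [Algebra k K]
    [CommRing S] [Algebra k S] [Algebra.FiniteType k S] (β : S →ₐ[k] K)
    (hβ : ∀ s, IsAlgebraic k (β s)) : ∃ k' : IntermediateField k K, FiniteDimensional k k' ∧
      IsGalois k k' ∧ ∀ s, β s ∈ k' := by
  obtain ⟨G, hG⟩ := (inferInstance : Algebra.FiniteType k S).out
  let L := IntermediateField.adjoin k (β '' G)
  have hL : FiniteDimensional k L := by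
    have : Finite (β '' (G : Set S)) := (G.finite_toSet.image β)
    refine IntermediateField.finiteDimensional_adjoin ?_
    rintro _ ⟨s, -, rfl⟩
    exact (hβ s).isIntegral
  have : CharZero L := charZero_of_injective_algebraMap (algebraMap k L).injective
  have hn : Normal k (IntermediateField.normalClosure k L K) :=
    (Algebra.IsAlgebraic.isNormalClosure_normalClosure (F := k) (K := L) (L := K)
      (fun x => IsAlgClosed.splits _)).normal
  refine ⟨IntermediateField.normalClosure k L K, inferInstance, ?_, fun s => ?_⟩
  · exact { }
  · apply IntermediateField.le_normalClosure
    have h1 : β.range ≤ L.toSubalgebra := by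
      rw [← Algebra.map_top, ← hG, AlgHom.map_adjoin, Algebra.adjoin_le_iff]
      exact IntermediateField.subset_adjoin _ _
    exact h1 ⟨s, rfl⟩

/-- Transport along an isomorphism of base changes. -/
def Cart.chain {S R T K : Type} [CommRing S] [CommRing R] [CommRing T] [CommRing K]
    {A B : Type} {s t : B → A} {E : Diag A B s t K} {M : Diag A B s t S}
    (φ1 φ2 : S →+* R) (aT : R →+* T) (wT : T →+* K) {iS : S →+* K} (c : Cart iS E M)
    (h1 : (wT.comp aT).comp φ1 = iS)
    (iso : Cart (RingHom.id T) ((M.bc φ1).bc aT) ((M.bc φ2).bc aT)) :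
    Cart ((wT.comp aT).comp φ2) E M :=
  Cart.comp rfl (M.bcCart φ2) (Cart.comp rfl ((M.bc φ2).bcCart aT) (Cart.comp (RingHom.comp_id _) iso
    (Cart.fac rfl ((M.bc φ1).bcCart aT) (Cart.fac h1 (M.bcCart φ1) c))))

lemma descend_core {k K R0 : Type} [Field k] [Field K] [Algebra k K]
    [CommRing R0] [Algebra k R0] [IsNoetherianRing R0] [Algebra.FiniteType k R0] [Algebra R0 K]
    [IsScalarTower k R0 K]
    {A B : Type} {s t : B → A} [Finite A] [Finite B] (E : Diag A B s t K)
    (S : Subalgebra k K) (σ : K ≃ₐ[k] K)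
    (hσ : ∀ T : Subalgebra k K, T.FG → S ≤ T →
      (∀ s ∈ S, σ s ∈ T) → ∃ w : T →ₐ[k] K, (∀ s (hs : s ∈ T), s ∈ S → w ⟨s, hs⟩ = s) ∧
        ∀ s ∈ S, ∀ h : σ s ∈ T, IsAlgebraic k (w ⟨σ s, h⟩))
    (M : Diag A B s t S) (c : Cart (S.val : S →+* K) E M)
    (hM : ∀ a, QuasiProjectiveOver S (M.z a))
    (act : Cart ((σ : K ≃ₐ[k] K) : K →+* K) E E)
    (φ1 φ2 : S →+* R0) (hm1 : ∀ x : S, algebraMap R0 K (φ1 x) = x)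
    (hm2 : ∀ x : S, algebraMap R0 K (φ2 x) = σ x) :
    ∃ (β : S →ₐ[k] K) (_ : Cart (β : S →+* K) E M), ∀ x, IsAlgebraic k (β x) := by
  let c1 : Cart (algebraMap R0 K) E (M.bc φ1) :=
    Cart.fac (RingHom.ext hm1) (M.bcCart φ1) c
  let c2 : Cart (algebraMap R0 K) E (M.bc φ2) :=
    Cart.fac (χ := ((σ : K ≃ₐ[k] K) : K →+* K).comp (S.val : S →+* K)) (RingHom.ext hm2)
      (M.bcCart φ2) (Cart.comp rfl c act)
  obtain ⟨⟨T, hT⟩, ⟨iso⟩⟩ := isospread c1 c2 (fun a => qp_bc (hM a) _ ((M.bcCart φ1).pb a))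
    (fun a => qp_bc (hM a) _ ((M.bcCart φ2).pb a))
  have hTft : Algebra.FiniteType R0 T := T.fg_iff_finiteType.mp hT
  have hTk : (T.restrictScalars k).FG := by
    rw [Subalgebra.fg_iff_finiteType]
    exact Algebra.FiniteType.trans (R := k) (S := R0) (A := T) inferInstance hTft
  have hin1 : ∀ x : S, (x : K) ∈ T := fun x => hm1 x ▸ T.algebraMap_mem _
  have hin2 : ∀ x : S, σ (x : K) ∈ T := fun x => hm2 x ▸ T.algebraMap_mem _
  obtain ⟨w, hw1, hw2⟩ := hσ (T.restrictScalars k) hTk (fun x hx => hin1 ⟨x, hx⟩)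
    (fun x hx => hin2 ⟨x, hx⟩)
  let wT : T →+* K := w.toRingHom
  have hχ1 : (wT.comp (algebraMap R0 T)).comp φ1 = (S.val : S →+* K) := by
    refine RingHom.ext fun x => ?_
    have : algebraMap R0 T (φ1 x) = ⟨x, hin1 x⟩ := Subtype.ext (hm1 x)
    change wT (algebraMap R0 T (φ1 x)) = x
    rw [this]
    exact hw1 x (hin1 x) x.2
  have hχ2 : ∀ x, (wT.comp (algebraMap R0 T)).comp φ2 x = w ⟨σ x, hin2 x⟩ := fun x => by
    have : algebraMap R0 T (φ2 x) = ⟨σ x, hin2 x⟩ := Subtype.ext (hm2 x)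
    change wT (algebraMap R0 T (φ2 x)) = _
    rw [this]
    rfl
  have d5 := Cart.chain φ1 φ2 (algebraMap R0 T) wT c hχ1 iso
  let β : S →ₐ[k] K := { (wT.comp (algebraMap R0 T)).comp φ2 with
    commutes' := fun r => by
      refine (hχ2 _).trans ?_
      have : (⟨σ (algebraMap k S r : S), hin2 _⟩ : T.restrictScalars k) =
        algebraMap k (T.restrictScalars k) r := Subtype.ext (σ.commutes r)
      rw [this, w.commutes] }
  refine ⟨β, d5, fun x => ?_⟩
  have := hw2 x x.2 (hin2 x)
  rw [← hχ2] at this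
  exact this

theorem descend_finite {k K : Type} [Field k] [CharZero k] [Field K] [IsAlgClosed K] [Algebra k K]
    (htr : ∀ L : IntermediateField k K, L.FG → ∃ x : K, Transcendental L x)
    {A B : Type} {s t : B → A} [Finite A] [Finite B] (E : Diag A B s t K)
    (h : ∀ a, QuasiProjectiveOver K (E.z a))
    (act : ∀ σ : K ≃ₐ[k] K, Cart ((σ : K ≃ₐ[k] K) : K →+* K) E E) :
    ∃ (k' : IntermediateField k K) (_ : FiniteDimensional k k') (_ : IsGalois k k')
      (N : Diag A B s t k') (_ : Cart (algebraMap k' K) E N), ∀ a, QuasiProjectiveOver k' (N.z a) := by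
  obtain ⟨S, hS, M, c, hM⟩ := family_model (k := k) E h
  obtain ⟨σ, hσ⟩ := specialize_exists htr S hS
  have hft : Algebra.FiniteType k S := S.fg_iff_finiteType.mp hS
  let φ1 : S →+* S ⊗[k] S := (Algebra.TensorProduct.includeLeft : S →ₐ[k] S ⊗[k] S).toRingHom
  let φ2 : S →+* S ⊗[k] S := (Algebra.TensorProduct.includeRight : S →ₐ[k] S ⊗[k] S).toRingHom
  let m : S ⊗[k] S →ₐ[k] K := Algebra.TensorProduct.lift S.val (σ.toAlgHom.comp S.val)
    (fun _ _ => Commute.all _ _)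
  have hft2 : Algebra.FiniteType k (S ⊗[k] S) := Algebra.FiniteType.trans (S := S) hft inferInstance
  have hnoeth : IsNoetherianRing (S ⊗[k] S) := Algebra.FiniteType.isNoetherianRing k _
  have hm1 : ∀ x : S, m (φ1 x) = x := fun x => by
    change m (x ⊗ₜ 1) = x
    simp [m]
  have hm2 : ∀ x : S, m (φ2 x) = σ x := fun x => by
    change m (1 ⊗ₜ x) = σ x
    simp [m]
  obtain ⟨β, d, hβ⟩ := @descend_core k K (S ⊗[k] S) _ _ _ _ _ hnoeth hft2 m.toRingHom.toAlgebra
    (@IsScalarTower.of_algebraMap_eq k (S ⊗[k] S) K _ _ _ _ m.toRingHom.toAlgebra _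
      (fun x => (m.commutes x).symm)) A B s t _ _ E S σ hσ M c hM (act σ) φ1 φ2 hm1 hm2
  obtain ⟨k', hfd, hg, hk'⟩ := galois_factor β hβ
  let β' : S →+* k' := (β.codRestrict k'.toSubalgebra hk').toRingHom
  refine ⟨k', hfd, hg, M.bc β', Cart.fac (χ := (β : S →+* K)) rfl (M.bcCart β') d,
    fun a => qp_bc (hM a) _ ((M.bcCart β').pb a)⟩

end

section

lemma specAut_mul {k K : Type} [Field k] [Field K] [Algebra k K] (σ τ : K ≃ₐ[k] K) :
    specAut k K σ ≫ specAut k K τ = specAut k K (τ * σ) := by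
  rw [specAut, specAut, ← Spec.map_comp, specAut]
  congr 1

lemma specAut_one {k K : Type} [Field k] [Field K] [Algebra k K] :
    specAut k K (1 : K ≃ₐ[k] K) = 𝟙 _ := by
  rw [specAut, ← Spec.map_id]
  congr 1

lemma act_mul {k K : Type} [Field k] [Field K] [Algebra k K] {Y : Scheme}
    {p : Y ⟶ Spec (CommRingCat.of K)} (D : DescentDatum k K Y p) (σ τ : K ≃ₐ[k] K) :
    (D.act σ).hom ≫ (D.act τ).hom = (D.act (τ * σ)).hom := by
  rw [map_mul]; rfl

lemma act_one {k K : Type} [Field k] [Field K] [Algebra k K] {Y : Scheme}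
    {p : Y ⟶ Spec (CommRingCat.of K)} (D : DescentDatum k K Y p) :
    (D.act 1).hom = 𝟙 _ := by
  rw [map_one]; rfl

lemma act_inv_hom {k K : Type} [Field k] [Field K] [Algebra k K] {Y : Scheme}
    {p : Y ⟶ Spec (CommRingCat.of K)} (D : DescentDatum k K Y p) (σ : K ≃ₐ[k] K) :
    (D.act σ).hom ≫ (D.act σ⁻¹).hom = 𝟙 _ := by
  rw [act_mul, inv_mul_cancel, act_one]

lemma act_hom_inv {k K : Type} [Field k] [Field K] [Algebra k K] {Y : Scheme}
    {p : Y ⟶ Spec (CommRingCat.of K)} (D : DescentDatum k K Y p) (σ : K ≃ₐ[k] K) :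
    (D.act σ⁻¹).hom ≫ (D.act σ).hom = 𝟙 _ := by
  rw [act_mul, mul_inv_cancel, act_one]

lemma rigid_finite {K : Type} [Field K] (A B : Type) (X : A → Scheme)
    (p : ∀ α : A, X α ⟶ Spec (CommRingCat.of K))
    (s t : B → A) (f : ∀ β : B, X (s β) ⟶ X (t β))
    (hfin : ∀ α : A, Finite {e : Aut (X α) // e.hom ≫ p α = p α})
    (hrigid : ∀ ψ : ∀ α : A, Aut (X α), (∀ α : A, (ψ α).hom ≫ p α = p α) →
      (∀ β : B, f β ≫ (ψ (t β)).hom = (ψ (s β)).hom ≫ f β) → ∀ α : A, ψ α = 1) (α : A) :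
    ∃ B' : Finset B, ∀ ψ : ∀ α : A, Aut (X α), (∀ α : A, (ψ α).hom ≫ p α = p α) →
      (∀ β ∈ B', f β ≫ (ψ (t β)).hom = (ψ (s β)).hom ≫ f β) → ψ α = 1 := by
  let P : A → Type := fun a => {e : Aut (X a) // e.hom ≫ p a = p a}
  let top : ∀ a, TopologicalSpace (P a) := fun a => ⊥
  have disc : ∀ a, DiscreteTopology (P a) := fun a => ⟨rfl⟩
  have fin : ∀ a, Finite (P a) := hfin
  have hcont : ∀ a, Continuous (fun ψ : (∀ a, P a) => ψ a) := fun a => continuous_apply a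
  let U : Set (∀ a, P a) := {ψ | (ψ α).1 ≠ 1}
  let C : B → Set (∀ a, P a) := fun b => {ψ | f b ≫ (ψ (t b)).1.hom = (ψ (s b)).1.hom ≫ f b}
  have hU : IsClosed U := (isClosed_discrete {e : P α | e.1 ≠ 1}).preimage (hcont α)
  have hC : ∀ b, IsClosed (C b) := fun b =>
    (isClosed_discrete {e : P (s b) × P (t b) | f b ≫ e.2.1.hom = e.1.1.hom ≫ f b}).preimage
      ((hcont (s b)).prodMk (hcont (t b)))
  obtain ⟨B', hB'⟩ := hU.isCompact.elim_finite_subfamily_closed C hC (by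
    rw [Set.eq_empty_iff_forall_notMem]
    rintro ψ ⟨h1, h2⟩
    rw [Set.mem_iInter] at h2
    exact h1 (hrigid (fun a => (ψ a).1) (fun a => (ψ a).2) h2 α))
  refine ⟨B', fun ψ h1 h2 => ?_⟩
  by_contra hne
  have : (fun a => (⟨ψ a, h1 a⟩ : P a)) ∈ U ∩ ⋂ i ∈ B', C i :=
    ⟨hne, by simp only [Set.mem_iInter]; exact fun b hb => h2 b hb⟩
  rw [hB'] at this
  exact this

lemma fix_spec {k K : Type} [Field k] [Field K] [Algebra k K] (k' : IntermediateField k K)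
    (τ : K ≃ₐ[k] K) (hτ : ∀ x ∈ k', τ x = x) :
    specAut k K τ ≫ sMap (algebraMap k' K) = sMap (algebraMap k' K) := by
  have h : ((τ⁻¹ : K ≃ₐ[k] K) : K →+* K).comp (algebraMap k' K) = algebraMap k' K := by
    refine RingHom.ext fun x => ?_
    change τ.symm (x : K) = x
    rw [AlgEquiv.symm_apply_eq]
    exact (hτ x x.2).symm
  refine (sMap_comp _ _).trans ?_
  rw [h]

lemma cocycle_fix {k K : Type} [Field k] [Field K] [Algebra k K] (k' : IntermediateField k K)
    {A B : Type} {s t : B → A} (E : Diag A B s t K) (N : Diag A B s t k')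
    (c : Cart (algebraMap k' K) E N) (D : ∀ a, DescentDatum k K (E.Z a) (E.z a))
    (hequiv : ∀ (b : B) (σ : K ≃ₐ[k] K),
      E.g b ≫ ((D (t b)).act σ).hom = ((D (s b)).act σ).hom ≫ E.g b) (α : A)
    (hrigid : ∀ ψ : ∀ a : A, Aut (E.Z a), (∀ a : A, (ψ a).hom ≫ E.z a = E.z a) →
      (∀ b : B, E.g b ≫ (ψ (t b)).hom = (ψ (s b)).hom ≫ E.g b) → ψ α = 1)
    (τ : K ≃ₐ[k] K) (hτ : ∀ x ∈ k', τ x = x) : ((D α).act τ).hom ≫ c.q α = c.q α := by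
  have hτ' : ∀ x ∈ k', τ⁻¹ x = x := fun x hx => by
    have := hτ x hx
    conv_lhs => rw [← this]
    exact τ.symm_apply_apply x
  have key : ∀ (ρ : K ≃ₐ[k] K) (hρ : ∀ x ∈ k', ρ x = x) (a : A),
      c.q a ≫ N.z a = (E.z a ≫ specAut k K ρ) ≫ sMap (algebraMap k' K) := fun ρ hρ a => by
    rw [Category.assoc, fix_spec k' ρ hρ, (c.pb a).w]
  let C : ∀ (ρ : K ≃ₐ[k] K) (_ : ∀ x ∈ k', ρ x = x) (a : A), E.Z a ⟶ E.Z a :=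
    fun ρ hρ a => (c.pb a).lift (c.q a) (E.z a ≫ specAut k K ρ) (key ρ hρ a)
  have C1 : ∀ ρ hρ a, C ρ hρ a ≫ c.q a = c.q a := fun ρ hρ a => (c.pb a).lift_fst _ _ _
  have C2 : ∀ ρ hρ a, C ρ hρ a ≫ E.z a = E.z a ≫ specAut k K ρ := fun ρ hρ a =>
    (c.pb a).lift_snd _ _ _
  have inv : ∀ ρ hρ ρ' hρ' (_ : ρ' * ρ = 1) a, C ρ hρ a ≫ C ρ' hρ' a = 𝟙 _ := by
    intro ρ hρ ρ' hρ' h a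
    refine (c.pb a).hom_ext ?_ ?_
    · rw [Category.assoc, C1 _ hρ', C1 _ hρ, Category.id_comp]
    · rw [Category.assoc, C2 _ hρ', ← Category.assoc, C2 _ hρ, Category.assoc, specAut_mul, h, specAut_one,
        Category.comp_id, Category.id_comp]
  have nat : ∀ ρ hρ b, E.g b ≫ C ρ hρ (t b) = C ρ hρ (s b) ≫ E.g b := by
    intro ρ hρ b
    refine (c.pb _).hom_ext ?_ ?_
    · rw [Category.assoc, Category.assoc, C1 _ hρ, ← c.qg, ← Category.assoc, C1 _ hρ]
    · rw [Category.assoc, Category.assoc, C2 _ hρ, E.gz, C2 _ hρ, ← Category.assoc, E.gz]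
  let I : ∀ a, Aut (E.Z a) := fun a => ⟨C τ hτ a, C τ⁻¹ hτ' a, inv τ hτ τ⁻¹ hτ' (inv_mul_cancel τ) a,
    inv τ⁻¹ hτ' τ hτ (mul_inv_cancel τ) a⟩
  let ψ : ∀ a, Aut (E.Z a) := fun a => (D a).act τ⁻¹ * I a
  have hψ : ∀ a, (ψ a).hom = C τ hτ a ≫ ((D a).act τ⁻¹).hom := fun a => rfl
  have h1 := hrigid ψ (fun a => by
    rw [hψ, Category.assoc, (D a).compat, ← Category.assoc, C2 _ hτ, Category.assoc, specAut_mul,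
      inv_mul_cancel, specAut_one, Category.comp_id]) (fun b => by
    rw [hψ, hψ, ← Category.assoc, nat _ hτ, Category.assoc, Category.assoc, hequiv])
  have h2 : C τ hτ α ≫ ((D α).act τ⁻¹).hom = 𝟙 _ := by
    rw [← hψ, h1]; rfl
  have h3 : ((D α).act τ).hom = C τ hτ α := by
    rw [← Category.id_comp ((D α).act τ).hom, ← h2, Category.assoc, act_hom_inv, Category.comp_id]
  rw [h3, C1 _ hτ]

theorem reduce_galois
    (k K : Type) [Field k] [CharZero k] [Field K] [IsAlgClosed K] [Algebra k K]
    (htr : ∀ L : IntermediateField k K, L.FG → ∃ x : K, Transcendental L x)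
    (A B : Type) (X : A → Scheme) (p : ∀ α : A, X α ⟶ Spec (CommRingCat.of K))
    (s t : B → A) (f : ∀ β : B, X (s β) ⟶ X (t β))
    (hqp : ∀ α : A, QuasiProjectiveOver K (p α))
    (hover : ∀ β : B, f β ≫ p (t β) = p (s β))
    (hfin : ∀ α : A, Finite {e : Aut (X α) // e.hom ≫ p α = p α})
    (hrigid : ∀ ψ : ∀ α : A, Aut (X α), (∀ α : A, (ψ α).hom ≫ p α = p α) →
      (∀ β : B, f β ≫ (ψ (t β)).hom = (ψ (s β)).hom ≫ f β) → ∀ α : A, ψ α = 1)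
    (D : ∀ α : A, DescentDatum k K (X α) (p α))
    (hequiv : ∀ (β : B) (σ : K ≃ₐ[k] K),
      f β ≫ ((D (t β)).act σ).hom = ((D (s β)).act σ).hom ≫ f β) (α : A) :
    ∃ (k' : IntermediateField k K) (_ : FiniteDimensional k k') (_ : IsGalois k k')
      (Y : Scheme) (y : Y ⟶ Spec (CommRingCat.of k')) (r : X α ⟶ Y), QuasiProjectiveOver k' y ∧
      IsPullback r (p α) y (sMap (algebraMap k' K)) ∧
      ∀ τ : K ≃ₐ[k] K, (∀ x ∈ k', τ x = x) → ((D α).act τ).hom ≫ r = r := by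
  classical
  obtain ⟨B', hB'⟩ := rigid_finite A B X p s t f hfin hrigid α
  let A' : Finset A := {α} ∪ B'.image s ∪ B'.image t
  have hs : ∀ b : B', s b ∈ A' := fun b => by
    simp only [A', Finset.mem_union, Finset.mem_image]
    exact Or.inl (Or.inr ⟨b, b.2, rfl⟩)
  have ht : ∀ b : B', t b ∈ A' := fun b => by
    simp only [A', Finset.mem_union, Finset.mem_image]
    exact Or.inr ⟨b, b.2, rfl⟩
  have hα : α ∈ A' := by simp [A']
  let E : Diag A' B' (fun b => ⟨s b, hs b⟩) (fun b => ⟨t b, ht b⟩) K :=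
    { Z := fun a => X a, z := fun a => p a, g := fun b => f b, gz := fun b => hover b }
  let act : ∀ σ : K ≃ₐ[k] K, Cart ((σ : K ≃ₐ[k] K) : K →+* K) E E := fun σ =>
    { q := fun a => ((D a).act σ⁻¹).hom
      pb := fun a => by
        have hi : IsIso (sMap ((σ : K ≃ₐ[k] K) : K →+* K)) := by
          refine ⟨sMap (((σ⁻¹ : K ≃ₐ[k] K)) : K →+* K), ?_, ?_⟩
          · rw [sMap_comp, ← Spec.map_id]
            congr 2
            ext x
            exact σ.apply_symm_apply x
          · rw [sMap_comp, ← Spec.map_id]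
            congr 2
            ext x
            exact σ.symm_apply_apply x
        have hi2 : IsIso ((D a).act σ⁻¹).hom :=
          Iso.isIso_hom (((D a).act σ⁻¹ : Aut (X a)) : X a ≅ X a)
        refine IsPullback.of_horiz_isIso ⟨?_⟩
        refine ((D a).compat σ⁻¹).trans ?_
        rw [specAut, inv_inv]
      qg := fun b => (hequiv b σ⁻¹).symm }
  obtain ⟨k', hfd, hg, N, c, hN⟩ := descend_finite htr E (fun a => hqp a) act
  refine ⟨k', hfd, hg, N.Z ⟨α, hα⟩, N.z ⟨α, hα⟩, c.q ⟨α, hα⟩, hN _, c.pb _, fun τ hτ => ?_⟩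
  refine cocycle_fix k' E N c (fun a => D a) (fun b σ => hequiv b σ) ⟨α, hα⟩ ?_ τ hτ
  intro ψ h1 h2
  let ψ' : ∀ a, Aut (X a) := fun a => if h : a ∈ A' then ψ ⟨a, h⟩ else 1
  have hψ' : ∀ a (h : a ∈ A'), ψ' a = ψ ⟨a, h⟩ := fun a h => dif_pos h
  refine (hψ' α hα).symm.trans (hB' ψ' (fun a => ?_) (fun b hb => ?_))
  · by_cases h : a ∈ A'
    · rw [hψ' a h]; exact h1 ⟨a, h⟩
    · have : ψ' a = 1 := dif_neg h
      rw [this]; exact Category.id_comp _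
  · rw [hψ' _ (ht ⟨b, hb⟩), hψ' _ (hs ⟨b, hb⟩)]
    exact h2 ⟨b, hb⟩

end

section

open scoped TensorProduct

lemma fixed_field {k K : Type} [Field k] [CharZero k] [Field K] [IsAlgClosed K] [Algebra k K]
    (htr : ∀ L : IntermediateField k K, L.FG → ∃ x : K, Transcendental L x)
    (x : K) (hx : ∀ σ : K ≃ₐ[k] K, σ x = x) : ∃ c : k, algebraMap k K c = x := by
  classical
  by_cases hal : IsAlgebraic k x
  · let F := algebraicClosure k K
    have hxF : x ∈ F := mem_algebraicClosure_iff.mpr hal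
    obtain ⟨ι, v, hv⟩ := exists_isTranscendenceBasis' F K
    have hn : Normal k F := IsAlgClosure.normal k F
    have hg : IsGalois k F := ⟨⟩
    have := (InfiniteGalois.mem_range_algebraMap_iff_fixed (k := k) (⟨x, hxF⟩ : F)).mpr (by
      intro τ
      obtain ⟨σ, -, hσ⟩ := aut_extend v hv (τ : F ≃+* F) (Equiv.refl _)
      let σ' : K ≃ₐ[k] K := AlgEquiv.ofRingEquiv (f := σ) (fun c => by
        rw [IsScalarTower.algebraMap_apply k F K, hσ]
        congr 1
        exact τ.commutes c)
      have h1 := hx σ'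
      have h2 := hσ ⟨x, hxF⟩
      exact Subtype.ext (h2.symm.trans h1))
    obtain ⟨c, hc⟩ := this
    exact ⟨c, congrArg (Subtype.val) hc⟩
  · exfalso
    have hi : AlgebraicIndepOn k id ({x} : Set K) := by
      rw [AlgebraicIndepOn]
      exact (algebraicIndependent_unique_type_iff (ι := ({x} : Set K))).mpr hal
    obtain ⟨ℬ, h1, hb⟩ := exists_isTranscendenceBasis_superset hi
    have hinf := trans_infinite htr ℬ hb
    obtain ⟨y, hy, hne⟩ := hinf.exists_notMem_finset {x}
    have hxb : x ∈ ℬ := h1 rfl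
    obtain ⟨σ, h2, h3⟩ := aut_extend ((↑) : ℬ → K) hb (RingEquiv.refl k)
      (Equiv.swap ⟨x, hxb⟩ ⟨y, hy⟩)
    let σ' : K ≃ₐ[k] K := AlgEquiv.ofRingEquiv (f := σ) h3
    have h4 := hx σ'
    have h5 := h2 ⟨x, hxb⟩
    rw [Equiv.swap_apply_left] at h5
    exact hne (Finset.mem_singleton.mpr (h5.symm.trans h4))

/-- Linear independence of invariants. -/
lemma inv_indep {k K : Type} [Field k] [Field K] [Algebra k K]
    (hfix : ∀ x : K, (∀ σ : K ≃ₐ[k] K, σ x = x) → ∃ c : k, algebraMap k K c = x)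
    {A : Type} [CommRing A] [Algebra K A] (ρ : (K ≃ₐ[k] K) → (A →+* A))
    (hρ : ∀ σ c, ρ σ (algebraMap K A c) = algebraMap K A (σ c))
    {ι : Type} (b : ι → A) (hb : ∀ σ i, ρ σ (b i) = b i)
    (hli : ∀ (s : Finset ι) (c : ι → k), ∑ i ∈ s, (algebraMap K A (algebraMap k K (c i))) * b i = 0 →
      ∀ i ∈ s, c i = 0) : LinearIndependent K b := by
  classical
  rw [linearIndependent_iff']
  intro s
  induction s using Finset.induction_on with
  | empty => intro g _ i hi; simp at hi
  | insert j s hj ih =>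
    intro g hg
    have hj0 : g j = 0 := by
      by_contra hne
      have key : ∀ i ∈ s, ∃ c : k, algebraMap k K c = (g j)⁻¹ * g i := by
        intro i hi
        refine hfix _ fun σ => ?_
        have e1 : b j + ∑ i ∈ s, ((g j)⁻¹ * g i) • b i = 0 := by
          have := congrArg (fun x => (g j)⁻¹ • x) hg
          simp only [Finset.sum_insert hj, smul_add, smul_smul, Finset.smul_sum, smul_zero] at this
          rwa [inv_mul_cancel₀ hne, one_smul] at this
        have e2 : b j + ∑ i ∈ s, (σ ((g j)⁻¹ * g i)) • b i = 0 := by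
          have := congrArg (ρ σ) e1
          rw [map_add, map_sum, map_zero, hb] at this
          simpa only [Algebra.smul_def, map_mul (ρ σ), hρ, hb] using this
        have e3 : ∑ i ∈ s, (σ ((g j)⁻¹ * g i) - (g j)⁻¹ * g i) • b i = 0 := by
          simp only [sub_smul, Finset.sum_sub_distrib]
          rw [← add_sub_add_left_eq_sub _ _ (b j), e1, e2, sub_zero]
        exact sub_eq_zero.mp (ih _ e3 i hi)
      choose! c hc using key
      let c' : ι → k := fun i => if i = j then 1 else c i
      have h0 := hli (insert j s) c' (by
        rw [Finset.sum_insert hj]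
        have e1 : (g j)⁻¹ • (∑ i ∈ insert j s, g i • b i) = 0 := by rw [hg, smul_zero]
        rw [Finset.sum_insert hj, smul_add, smul_smul, inv_mul_cancel₀ hne, Finset.smul_sum] at e1
        rw [← e1]
        congr 1
        · simp [c']
        · refine Finset.sum_congr rfl fun i hi => ?_
          have : i ≠ j := fun h => hj (h ▸ hi)
          simp only [c', if_neg this, hc i hi, Algebra.smul_def, map_mul, mul_assoc]) j
          (Finset.mem_insert_self _ _)
      simp [c'] at h0
    intro i hi
    rcases Finset.mem_insert.mp hi with rfl | hi
    · exact hj0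
    · rw [Finset.sum_insert hj, hj0, zero_smul, zero_add] at hg
      exact ih g hg i hi

/-- Dedekind: spanning by invariants. -/
lemma inv_span {k K : Type} [Field k] [Field K] [Algebra k K] (k' : IntermediateField k K)
    [FiniteDimensional k k'] [IsGalois k k']
    {A : Type} [CommRing A] [Algebra K A] (ρ : (K ≃ₐ[k] K) → (A →+* A))
    (hmul : ∀ σ τ a, ρ (σ * τ) a = ρ σ (ρ τ a)) (h1 : ∀ a, ρ 1 a = a)
    (hρ : ∀ σ c, ρ σ (algebraMap K A c) = algebraMap K A (σ c))
    (a : A) (ha : ∀ τ : K ≃ₐ[k] K, (∀ x ∈ k', τ x = x) → ρ τ a = a) :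
    a ∈ Submodule.span K {x : A | ∀ σ, ρ σ x = x} := by
  classical
  let res : (K ≃ₐ[k] K) →* (k' ≃ₐ[k] k') := AlgEquiv.restrictNormalHom k'
  have hres : ∀ σ (e : k'), ((res σ e : k') : K) = σ e := fun σ e =>
    AlgEquiv.restrictNormal_commutes σ k' e
  let H : Subgroup (k' ≃ₐ[k] k') := res.range
  have hfH : Fintype H := Fintype.ofFinite _
  have hl : ∀ g : H, ∃ σ, res σ = g := fun g => g.2
  choose l hl using hl
  have hwd : ∀ σ τ, res σ = res τ → ρ σ a = ρ τ a := by
    intro σ τ h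
    have : ρ (τ⁻¹ * σ) a = a := ha _ fun x hx => by
      have := hres σ ⟨x, hx⟩
      rw [h, hres] at this
      change τ.symm (σ x) = x
      rw [AlgEquiv.symm_apply_eq]
      exact this.symm
    have h2 := congrArg (ρ τ) this
    rwa [← hmul, mul_inv_cancel_left] at h2
  let T : (H → K) →ₗ[K] A := Fintype.linearCombination K (fun g => ρ (l g) a)
  have hT : ∀ v, T v = ∑ g : H, v g • ρ (l g) a := fun v => Fintype.linearCombination_apply _ _ _
  let w : k' → (H → K) := fun e g => l g e
  have hTw : ∀ e, T (w e) ∈ Submodule.span K {x : A | ∀ σ, ρ σ x = x} := by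
    intro e
    refine Submodule.subset_span fun σ => ?_
    rw [hT, map_sum]
    let r : H := ⟨res σ, σ, rfl⟩
    refine (Equiv.sum_comp (Equiv.mulLeft r) _).symm.trans ?_ |>.symm
    refine Finset.sum_congr rfl fun g _ => ?_
    have e1 : res (l (r * g)) = res (σ * l g) := by
      rw [hl, map_mul, hl]; rfl
    simp only [Equiv.coe_mulLeft, w, Algebra.smul_def, map_mul (ρ σ), hρ]
    rw [hwd _ _ e1, hmul, ← hres, e1, hres]
    rfl
  have hspan : Submodule.span K (Set.range w) = ⊤ := by
    by_contra hne
    obtain ⟨f, hf0, hf⟩ := Submodule.exists_le_ker_of_lt_top _ (lt_top_iff_ne_top.mpr hne)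
    let M : H → (k' →* K) := fun g => (((l g : K ≃ₐ[k] K) : K →* K)).comp (algebraMap k' K : k' →* K)
    have hM : Function.Injective M := by
      intro g g' h
      refine Subtype.ext ?_
      rw [← hl, ← hl]
      refine AlgEquiv.ext fun e => Subtype.ext ?_
      rw [hres, hres]
      exact DFunLike.congr_fun h e
    have hli := (linearIndependent_monoidHom k' K).comp M hM
    rw [Fintype.linearIndependent_iff] at hli
    have hz := hli (fun g => f (Pi.single g 1)) (by
      funext e
      have := hf (Submodule.subset_span ⟨e, rfl⟩)
      rw [LinearMap.mem_ker, LinearMap.pi_apply_eq_sum_univ] at this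
      rw [Finset.sum_apply]
      refine Eq.trans ?_ this
      refine Finset.sum_congr rfl fun g _ => ?_
      have e2 : (Pi.single g 1 : H → K) = fun j => if g = j then 1 else 0 := by
        funext i
        simp [Pi.single_apply, eq_comm]
      rw [e2]
      exact mul_comm _ _)
    refine hf0 (LinearMap.pi_ext' fun g => LinearMap.ext_ring ?_)
    simpa using hz g
  have hone : T (Pi.single 1 1) = a := by
    rw [hT, Finset.sum_eq_single 1]
    · rw [Pi.single_eq_same, one_smul]
      rw [hwd (l 1) 1 (by rw [hl, map_one]; rfl), h1]
    · intro g _ hg; rw [Pi.single_eq_of_ne hg, zero_smul]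
    · simp
  rw [← hone]
  have : (Pi.single 1 1 : H → K) ∈ Submodule.span K (Set.range w) := hspan ▸ Submodule.mem_top
  have h2 := Submodule.mem_map_of_mem (f := T) this
  rw [Submodule.map_span] at h2
  refine (Submodule.span_le.mpr ?_) h2
  rintro _ ⟨_, ⟨e, rfl⟩, rfl⟩
  exact hTw e

lemma base_change_of {k K S A : Type} [Field k] [Field K] [CommRing S] [CommRing A] [Algebra k K]
    [Algebra k S] [Algebra K A] [Algebra S A] [Algebra k A] [IsScalarTower k K A]
    [IsScalarTower k S A]
    (hli : ∀ (ι : Type) (b : Module.Basis ι k S), LinearIndependent K (fun i => algebraMap S A (b i)))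
    (hs : Submodule.span K (Set.range (algebraMap S A)) = ⊤) : Algebra.IsPushout k K S A := by
  constructor
  let b := Module.Free.chooseBasis k S
  let b0 := b.reindex (Equiv.refl _)
  have hsp : ⊤ ≤ Submodule.span K (Set.range fun i => algebraMap S A (b i)) := by
    rw [← hs, Submodule.span_le]
    rintro _ ⟨x, rfl⟩
    have := b.mem_span x
    have h2 := Submodule.mem_map_of_mem (f := (IsScalarTower.toAlgHom k S A).toLinearMap) this
    rw [Submodule.map_span, ← Set.range_comp] at h2
    exact (Submodule.span_le_restrictScalars k K _) h2
  let bA := Module.Basis.mk (hli _ b) hsp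
  let e := (Algebra.TensorProduct.basis K b).equiv bA (Equiv.refl _)
  refine IsBaseChange.of_equiv e fun x => ?_
  have : ((e.toLinearMap.restrictScalars k) ∘ₗ (TensorProduct.mk k K S 1)) =
      (IsScalarTower.toAlgHom k S A).toLinearMap := by
    refine b.ext fun i => ?_
    have h3 := (Algebra.TensorProduct.basis K b).equiv_apply i bA (Equiv.refl _)
    rw [Algebra.TensorProduct.basis_apply] at h3
    refine h3.trans ?_
    simp [bA]
  exact LinearMap.congr_fun this x

end

section

lemma homog_basis {F : Type} [Field F] (n : ℕ) (W : (Proj (gr F n)).Opens) (x : Proj (gr F n))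
    (hx : x ∈ W) : ∃ (d : ℕ) (g : MvPolynomial (Fin (n + 1)) F), 0 < d ∧ g ∈ gr F n d ∧
      x ∈ Proj.basicOpen (gr F n) g ∧ Proj.basicOpen (gr F n) g ≤ W := by
  obtain ⟨_, ⟨_, ⟨f, rfl⟩, rfl⟩, hxU, hUW⟩ :=
    (Proj.isBasis_basicOpen (gr F n)).exists_subset_of_mem_open (a := x) hx W.isOpen
  have hxf : x ∈ Proj.basicOpen (gr F n) f := hxU
  rw [Proj.basicOpen_eq_iSup_proj, TopologicalSpace.Opens.mem_iSup] at hxf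
  obtain ⟨i, hi⟩ := hxf
  have htop := Proj.iSup_basicOpen_eq_top (gr F n)
    (fun j : Fin (n + 1) => (MvPolynomial.X j : MvPolynomial (Fin (n + 1)) F)) (irr_le F n)
  have hxt : x ∈ (⊤ : (Proj (gr F n)).Opens) := trivial
  rw [← htop, TopologicalSpace.Opens.mem_iSup] at hxt
  obtain ⟨j, hj⟩ := hxt
  refine ⟨i + 1, GradedRing.proj (gr F n) i f * MvPolynomial.X j, Nat.succ_pos _,
    SetLike.mul_mem_graded (SetLike.coe_mem _) (X_mem F n j), ?_, ?_⟩
  · rw [Proj.basicOpen_mul]; exact ⟨hi, hj⟩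
  · rw [Proj.basicOpen_mul]
    refine inf_le_left.trans (le_trans ?_ hUW)
    rw [Proj.basicOpen_eq_iSup_proj (gr F n) f]
    exact le_iSup (fun i => Proj.basicOpen (gr F n) (GradedRing.proj (gr F n) i f)) i

lemma homog_avoid {F : Type} [Field F] [Infinite F] (n : ℕ) (W : (Proj (gr F n)).Opens)
    {ι : Type} [Finite ι] (x : ι → Proj (gr F n)) (hx : ∀ i, x i ∈ W) :
    ∃ (d : ℕ) (g : MvPolynomial (Fin (n + 1)) F), 0 < d ∧ g ∈ gr F n d ∧
      (∀ i, x i ∈ Proj.basicOpen (gr F n) g) ∧ Proj.basicOpen (gr F n) g ≤ W := by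
  classical
  have := Fintype.ofFinite ι
  choose d g hd hg hxg hgW using fun i => homog_basis n W (x i) (hx i)
  let e : ℕ := ∏ i, d i
  have he : 0 < e := Finset.prod_pos fun i _ => hd i
  have hde : ∀ i, d i ∣ e := fun i => Finset.dvd_prod_of_mem _ (Finset.mem_univ i)
  have hpos : ∀ i, 0 < e / d i := fun i => Nat.div_pos (Nat.le_of_dvd he (hde i)) (hd i)
  let h : ι → MvPolynomial (Fin (n + 1)) F := fun i => g i ^ (e / d i)
  have hh : ∀ i, h i ∈ gr F n e := fun i => by
    have := SetLike.pow_mem_graded (e / d i) (hg i)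
    rwa [smul_eq_mul, Nat.div_mul_cancel (hde i)] at this
  have hbo : ∀ i, Proj.basicOpen (gr F n) (h i) = Proj.basicOpen (gr F n) (g i) := fun i =>
    Proj.basicOpen_pow _ _ _ (hpos i)
  let T : (ι → F) →ₗ[F] MvPolynomial (Fin (n + 1)) F := Fintype.linearCombination F h
  let P : ι → Submodule F (ι → F) := fun i =>
    (((x i).asHomogeneousIdeal.toIdeal).restrictScalars F).comap T
  have hP : ∀ i, P i ≠ ⊤ := by
    intro i hi
    have : Pi.single i 1 ∈ P i := hi ▸ Submodule.mem_top
    have h2 : T (Pi.single i 1) ∈ (x i).asHomogeneousIdeal.toIdeal := this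
    rw [Fintype.linearCombination_apply_single, one_smul] at h2
    have h3 := hxg i
    rw [← hbo, Proj.mem_basicOpen] at h3
    exact h3 h2
  have hc : ∃ c : ι → F, ∀ i, c ∉ P i := by
    by_contra hcon
    push Not at hcon
    obtain ⟨i, hi⟩ := Subspace.exists_eq_top_of_iUnion_eq_univ (p := P) (by
      rw [Set.eq_univ_iff_forall]
      intro c
      obtain ⟨i, hi⟩ := hcon c
      exact Set.mem_iUnion.mpr ⟨i, hi⟩)
    exact hP i hi
  obtain ⟨c, hc⟩ := hc
  have hTc : T c = ∑ i, c i • h i := Fintype.linearCombination_apply _ _ _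
  refine ⟨e, T c, he, ?_, fun i => (Proj.mem_basicOpen _ _ _).mpr (hc i), fun z hz => ?_⟩
  · rw [hTc]
    exact Submodule.sum_mem _ fun i _ => Submodule.smul_mem _ _ (hh i)
  · by_contra hzW
    rw [Proj.mem_basicOpen] at hz
    refine hz ?_
    rw [hTc]
    refine Ideal.sum_mem (z.asHomogeneousIdeal.toIdeal) fun i _ => ?_
    rw [MvPolynomial.smul_eq_C_mul]
    refine Ideal.mul_mem_left _ _ ?_
    by_contra hcon
    have : z ∈ Proj.basicOpen (gr F n) (h i) := (Proj.mem_basicOpen _ _ _).mpr hcon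
    rw [hbo] at this
    exact hzW (hgW i this)

lemma qp_affine {F : Type} [Field F] [Infinite F] {Y : Scheme} {y : Y ⟶ Spec (CommRingCat.of F)}
    (hy : QuasiProjectiveOver F y) {ι : Type} [Finite ι] (x : ι → Y) :
    ∃ U : Y.Opens, IsAffineOpen U ∧ ∀ i, x i ∈ U := by
  obtain ⟨n, f, hf, -⟩ := (qp_iff F y).mp hy
  let W := f.coborderRange
  have hxW : ∀ i, f (x i) ∈ W := fun i => by
    have : f (x i) = W.ι (f.liftCoborder (x i)) := by
      rw [← Scheme.Hom.comp_apply, f.liftCoborder_ι]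
    rw [this]
    exact (f.liftCoborder (x i)).2
  obtain ⟨d, g, hd, hg, h1, h2⟩ := homog_avoid n W (fun i => f (x i)) hxW
  have haff := Proj.isAffineOpen_basicOpen (gr F n) g hg hd
  refine ⟨f ⁻¹ᵁ Proj.basicOpen (gr F n) g, ?_, h1⟩
  have e : f ⁻¹ᵁ Proj.basicOpen (gr F n) g =
      f.liftCoborder ⁻¹ᵁ (W.ι ⁻¹ᵁ Proj.basicOpen (gr F n) g) := by
    rw [← Scheme.Hom.comp_preimage, f.liftCoborder_ι]
  rw [e]
  refine IsAffineOpen.preimage ?_ _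
  refine IsAffineOpen.preimage_of_isOpenImmersion haff W.ι ?_
  rwa [Scheme.Opens.opensRange_ι]

end

section

/-- The subring of elements invariant under a family of ring endomorphisms. -/
def invSub {G A : Type} [CommRing A] (ρ : G → (A →+* A)) (N : Set G) : Subring A where
  carrier := {a | ∀ σ ∈ N, ρ σ a = a}
  mul_mem' ha hb σ hσ := by rw [map_mul, ha σ hσ, hb σ hσ]
  one_mem' σ _ := map_one _
  add_mem' ha hb σ hσ := by rw [map_add, ha σ hσ, hb σ hσ]
  zero_mem' σ _ := map_zero _
  neg_mem' ha σ hσ := by rw [map_neg, ha σ hσ]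

lemma mem_invSub {G A : Type} [CommRing A] (ρ : G → (A →+* A)) (N : Set G) (a : A) :
    a ∈ invSub ρ N ↔ ∀ σ ∈ N, ρ σ a = a := Iff.rfl

lemma closure_span {K A : Type} [CommRing K] [CommRing A] [Algebra K A] (S : Subring A)
    (h : Subring.closure (Set.range (algebraMap K A) ∪ S) = ⊤) :
    Submodule.span K (S : Set A) = ⊤ := by
  rw [eq_top_iff]
  have h1 : ∀ a ∈ Subring.closure (Set.range (algebraMap K A) ∪ (S : Set A)),
      a ∈ Algebra.adjoin K (S : Set A) := by
    intro a ha
    induction ha using Subring.closure_induction with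
    | mem x hx =>
      rcases hx with ⟨c, rfl⟩ | hx
      · exact Subalgebra.algebraMap_mem _ c
      · exact Algebra.subset_adjoin hx
    | zero => exact zero_mem _
    | one => exact one_mem _
    | add x y _ _ hx hy => exact add_mem hx hy
    | mul x y _ _ hx hy => exact mul_mem hx hy
    | neg x _ hx => exact neg_mem hx
  intro a _
  have h2 := h1 a (h ▸ Subring.mem_top a)
  rw [← Subalgebra.mem_toSubmodule, Algebra.adjoin_eq_span] at h2
  have h3 : (Submonoid.closure (S : Set A) : Set A) ≤ S :=
    (Submonoid.closure_le (S := S.toSubmonoid)).2 le_rfl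
  exact Submodule.span_mono h3 h2

lemma inv_pushout {k K : Type} [Field k] [Field K] [Algebra k K]
    (hfix : ∀ x : K, (∀ σ : K ≃ₐ[k] K, σ x = x) → ∃ c : k, algebraMap k K c = x)
    (k' : IntermediateField k K) [FiniteDimensional k k'] [IsGalois k k']
    {A : Type} [CommRing A] (κ : K →+* A) (ρ : (K ≃ₐ[k] K) → (A →+* A))
    (hmul : ∀ σ τ a, ρ (σ * τ) a = ρ σ (ρ τ a)) (h1 : ∀ a, ρ 1 a = a)
    (hρ : ∀ σ c, ρ σ (κ c) = κ (σ c))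
    (hcl : Subring.closure (Set.range κ ∪ invSub ρ {τ | ∀ x ∈ k', τ x = x}) = ⊤)
    (hk : ∀ c : k, κ (algebraMap k K c) ∈ invSub ρ Set.univ) :
    IsPushout (CommRingCat.ofHom (algebraMap k K))
      (CommRingCat.ofHom ((κ.comp (algebraMap k K)).codRestrict (invSub ρ Set.univ) hk))
      (CommRingCat.ofHom κ) (CommRingCat.ofHom (invSub ρ Set.univ).subtype) := by
  let S := invSub ρ Set.univ
  letI : Algebra K A := κ.toAlgebra
  letI : Algebra k A := (κ.comp (algebraMap k K)).toAlgebra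
  letI : Algebra k S := ((κ.comp (algebraMap k K)).codRestrict (invSub ρ Set.univ) hk).toAlgebra
  haveI : IsScalarTower k K A := IsScalarTower.of_algebraMap_eq fun _ => rfl
  haveI : IsScalarTower k S A := IsScalarTower.of_algebraMap_eq fun _ => rfl
  have key : Algebra.IsPushout k K S A := by
    apply base_change_of
    · intro ι b
      apply inv_indep hfix ρ (fun σ c => hρ σ c) _ (fun σ i => (b i).2 σ trivial)
      intro s c hc i hi
      refine linearIndependent_iff'.1 b.linearIndependent s c ?_ i hi
      apply Subtype.ext
      rw [AddSubmonoidClass.coe_finset_sum]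
      refine Eq.trans (Finset.sum_congr rfl fun i _ => ?_) hc
      rw [Algebra.smul_def]
      rfl
    · have h2 := closure_span (K := K) _ hcl
      rw [eq_top_iff, ← h2, Submodule.span_le]
      intro a ha
      have := inv_span k' ρ hmul h1 (fun σ c => hρ σ c) a (fun τ hτ => ha τ hτ)
      refine Submodule.span_mono ?_ this
      intro x hx
      exact ⟨⟨x, fun σ _ => hx σ⟩, rfl⟩
  exact CommRingCat.isPushout_of_isPushout k K S A

end

section

lemma sep_affine_inf {R : Type} [CommRing R] {X : Scheme} (p : X ⟶ Spec (CommRingCat.of R))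
    [IsSeparated p] {V W : X.Opens} (hV : IsAffineOpen V) (hW : IsAffineOpen W) :
    IsAffineOpen (V ⊓ W) :=
  isAffineHom_diagonal_iff (f := p).mp inferInstance ⊤ (isAffineOpen_top _) V (by simp) W (by simp)
    hV hW

lemma topIso_res {X : Scheme} {U V : X.Opens} (e : U ≤ V) (v : Γ(V, ⊤)) :
    U.topIso.hom ((X.homOfLE e).appTop v) = X.presheaf.map (homOfLE e).op (V.topIso.hom v) := by
  have : (X.homOfLE e).appTop ≫ U.topIso.hom = V.topIso.hom ≫ X.presheaf.map (homOfLE e).op := by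
    rw [Scheme.homOfLE_appTop]
    refine (X.presheaf.map_comp _ _).symm.trans (Eq.trans ?_ (X.presheaf.map_comp _ _))
    congr 1
  exact congr($this v)

lemma sep_closure {R : Type} [CommRing R] {X : Scheme} (p : X ⟶ Spec (CommRingCat.of R))
    [IsSeparated p] {V W : X.Opens} (hV : IsAffineOpen V) (hW : IsAffineOpen W)
    (x : Γ(X, V ⊓ W)) :
    x ∈ Subring.closure (Set.range (X.presheaf.map (homOfLE (inf_le_left : V ⊓ W ≤ V)).op).hom ∪
      Set.range (X.presheaf.map (homOfLE (inf_le_right : V ⊓ W ≤ W)).op).hom) := by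
  have : IsAffine V := hV
  have : IsAffine W := hW
  let d : (V ⊓ W).toScheme ⟶ pullback (V.ι ≫ p) (W.ι ≫ p) :=
    (isPullback_opens_inf V W).isoPullback.hom ≫ pullback.mapDesc V.ι W.ι p
  have hd : IsClosedImmersion d := inferInstance
  have hd1 : d ≫ pullback.fst _ _ = X.homOfLE inf_le_left := by
    simp only [d, pullback.mapDesc, Category.assoc, pullback.map, pullback.lift_fst,
      Category.comp_id, IsPullback.isoPullback_hom_fst]
  have hd2 : d ≫ pullback.snd _ _ = X.homOfLE inf_le_right := by
    simp only [d, pullback.mapDesc, Category.assoc, pullback.map, pullback.lift_snd,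
      Category.comp_id, IsPullback.isoPullback_hom_snd]
  have hP := isPushout_appTop_of_isPullback (IsPullback.of_hasPullback (V.ι ≫ p) (W.ι ≫ p))
  obtain ⟨u, hu⟩ := (IsClosedImmersion.isAffine_surjective_of_isAffine d).2 ((V ⊓ W).topIso.inv x)
  have hx : x = (V ⊓ W).topIso.hom (d.appTop u) := by
    rw [hu]; exact congr($((V ⊓ W).topIso.inv_hom_id) x).symm
  rw [hx]
  have hc := pushout_closure hP u
  let φ := (d.appTop ≫ (V ⊓ W).topIso.hom).hom
  change φ u ∈ _
  clear hx hu
  induction hc using Subring.closure_induction with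
  | zero => rw [map_zero]; exact zero_mem _
  | one => rw [map_one]; exact one_mem _
  | add x y _ _ hx hy => rw [map_add]; exact add_mem hx hy
  | mul x y _ _ hx hy => rw [map_mul]; exact mul_mem hx hy
  | neg x _ hx => rw [map_neg]; exact neg_mem hx
  | mem x hx =>
    apply Subring.subset_closure
    rcases hx with ⟨a, rfl⟩ | ⟨a, rfl⟩
    · refine Or.inl ⟨V.topIso.hom a, ?_⟩
      refine (topIso_res inf_le_left a).symm.trans ?_
      rw [← hd1, Scheme.Hom.comp_appTop]; rfl
    · refine Or.inr ⟨W.topIso.hom a, ?_⟩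
      refine (topIso_res inf_le_right a).symm.trans ?_
      rw [← hd2, Scheme.Hom.comp_appTop]; rfl

lemma le_pre_top {X Y : Scheme} (p : X ⟶ Y) (V : X.Opens) : V ≤ p ⁻¹ᵁ ⊤ := le_top

/-- The structure ring homomorphism on sections. -/
def kmap {R : Type} [CommRing R] {X : Scheme} (p : X ⟶ Spec (CommRingCat.of R)) (V : X.Opens) :
    R →+* Γ(X, V) :=
  ((Scheme.ΓSpecIso (CommRingCat.of R)).inv ≫ p.appLE ⊤ V (le_pre_top p V)).hom

lemma kmap_nat {R R' : Type} [CommRing R] [CommRing R'] {X X' : Scheme}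
    (p : X ⟶ Spec (CommRingCat.of R)) (p' : X' ⟶ Spec (CommRingCat.of R'))
    (f : X' ⟶ X) (φ : R →+* R') (h : f ≫ p = p' ≫ sMap φ) (V : X.Opens) (V' : X'.Opens)
    (e : V' ≤ f ⁻¹ᵁ V) (c : R) : f.appLE V V' e (kmap p V c) = kmap p' V' (φ c) := by
  have h1 : (Scheme.ΓSpecIso (CommRingCat.of R)).inv ≫ p.appLE ⊤ V (le_pre_top p V) ≫ f.appLE V V' e =
      CommRingCat.ofHom φ ≫ (Scheme.ΓSpecIso (CommRingCat.of R')).inv ≫ p'.appLE ⊤ V' (le_pre_top p' V') := by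
    have h2 : p.appLE ⊤ V (le_pre_top p V) ≫ f.appLE V V' e =
        (sMap φ).appTop ≫ p'.appLE ⊤ V' (le_pre_top p' V') := by
      refine (Scheme.Hom.appLE_comp_appLE f p ⊤ V V' _ _).trans ?_
      refine Eq.trans ?_ (Scheme.Hom.comp_appLE p' (sMap φ) ⊤ V' (le_pre_top _ V'))
      simp only [h]
    rw [h2]
    exact (Scheme.ΓSpecIso_inv_naturality_assoc (CommRingCat.ofHom φ) _).symm
  exact congr($h1 c)

lemma kmap_res {R : Type} [CommRing R] {X : Scheme}
    (p : X ⟶ Spec (CommRingCat.of R)) (V V' : X.Opens) (e : V' ≤ V) (c : R) :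
    X.presheaf.map (homOfLE e).op (kmap p V c) = kmap p V' c := by
  change ((Scheme.ΓSpecIso (CommRingCat.of R)).inv ≫ p.appLE ⊤ V (le_pre_top p V) ≫
    X.presheaf.map (homOfLE e).op).hom c = _
  rw [Scheme.Hom.appLE_map]; rfl

end

section

lemma closure_map {A B : Type} [CommRing A] [CommRing B] (φ : A →+* B) (T : Set A) (S : Subring B)
    (hT : Subring.closure T = ⊤) (h : ∀ t ∈ T, φ t ∈ S) (a : A) : φ a ∈ S := by
  have : Subring.closure T ≤ S.comap φ := Subring.closure_le.2 h
  exact this (hT ▸ Subring.mem_top a)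

section
variable {k K : Type} [Field k] [Field K] [Algebra k K] {X : Scheme}
  {p : X ⟶ Spec (CommRingCat.of K)} (D : DescentDatum k K X p)

/-- Sections over `V` invariant under `N`. -/
def sInv (N : Set (K ≃ₐ[k] K)) (V : X.Opens) : Set Γ(X, V) :=
  {s | ∀ σ ∈ N, ∀ h : V ≤ (D.act σ).hom ⁻¹ᵁ V, (D.act σ).hom.appLE V V h s = s}

/-- Affine `N`-stable opens whose sections are generated by scalars and invariants. -/
structure Good (N : Set (K ≃ₐ[k] K)) (V : X.Opens) : Prop where
  aff : IsAffineOpen V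
  stab : ∀ σ ∈ N, V ≤ (D.act σ).hom ⁻¹ᵁ V
  gen : Subring.closure (Set.range (kmap p V) ∪ sInv D N V) = ⊤

lemma kmap_act (σ : K ≃ₐ[k] K) (V W : X.Opens) (e : W ≤ (D.act σ).hom ⁻¹ᵁ V) (c : K) :
    (D.act σ).hom.appLE V W e (kmap p V c) = kmap p W ((σ⁻¹ : K ≃ₐ[k] K) c) :=
  kmap_nat p p (D.act σ).hom _ (D.compat σ) V W e c

lemma good_inf [IsSeparated p] {N : Set (K ≃ₐ[k] K)} {V W : X.Opens} (hV : Good D N V)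
    (hW : Good D N W) : Good D N (V ⊓ W) := by
  have res : ∀ (V U : X.Opens) (e : U ≤ V), Good D N V → ∀ a : Γ(X, V),
      X.presheaf.map (homOfLE e).op a ∈ Subring.closure (Set.range (kmap p U) ∪ sInv D N U) := by
    intro V U e hV a
    refine closure_map (X.presheaf.map (homOfLE e).op).hom _ _ hV.gen ?_ a
    rintro _ (⟨c, rfl⟩ | hs)
    · exact Subring.subset_closure (Or.inl ⟨c, (kmap_res p V U e c).symm⟩)
    · rename_i s
      refine Subring.subset_closure (Or.inr ?_)
      intro σ hσ h
      have h1 : X.presheaf.map (homOfLE e).op ≫ (D.act σ).hom.appLE U U h =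
          (D.act σ).hom.appLE V V (hV.stab σ hσ) ≫ X.presheaf.map (homOfLE e).op := by
        rw [Scheme.Hom.map_appLE, Scheme.Hom.appLE_map]
      refine congr($h1 s).trans ?_
      have h2 := hs σ hσ (hV.stab σ hσ)
      exact congrArg (X.presheaf.map (homOfLE e).op).hom h2
  refine ⟨sep_affine_inf p hV.aff hW.aff, fun σ hσ => ?_, ?_⟩
  · intro x hx
    exact ⟨hV.stab σ hσ hx.1, hW.stab σ hσ hx.2⟩
  · rw [eq_top_iff]
    intro x _
    refine (Subring.closure_le.2 ?_) (sep_closure p hV.aff hW.aff x)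
    rintro _ (⟨a, rfl⟩ | ⟨a, rfl⟩)
    · exact res V _ inf_le_left hV a
    · exact res W _ inf_le_right hW a

lemma good_trans {N : Set (K ≃ₐ[k] K)} (hN : ∀ σ : K ≃ₐ[k] K, ∀ τ ∈ N, σ * τ * σ⁻¹ ∈ N)
    {V : X.Opens} (hV : Good D N V) (σ : K ≃ₐ[k] K) : Good D N ((D.act σ).hom ⁻¹ᵁ V) := by
  have hi : IsIso (D.act σ).hom := Iso.isIso_hom ((D.act σ : Aut X) : X ≅ X)
  have hc : ∀ τ, (D.act τ).hom ≫ (D.act σ).hom = (D.act σ).hom ≫ (D.act (σ * τ * σ⁻¹)).hom := by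
    intro τ
    rw [act_mul, act_mul, inv_mul_cancel_right]
  refine ⟨hV.aff.preimage_of_isIso _, fun τ hτ => ?_, ?_⟩
  · rw [← Scheme.Hom.comp_preimage, hc, Scheme.Hom.comp_preimage]
    intro x hx
    exact hV.stab _ (hN σ τ hτ) hx
  · rw [eq_top_iff]
    intro x _
    let φ := ((D.act σ).hom.appLE V ((D.act σ).hom ⁻¹ᵁ V) le_rfl).hom
    obtain ⟨a, rfl⟩ : ∃ a, φ a = x := by
      refine ⟨inv ((D.act σ).hom.app V) x, ?_⟩
      change ((D.act σ).hom.appLE V ((D.act σ).hom ⁻¹ᵁ V) le_rfl).hom _ = _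
      rw [Scheme.Hom.appLE_eq_app]
      exact congr($(IsIso.inv_hom_id ((D.act σ).hom.app V)) x)
    refine closure_map φ _ _ hV.gen ?_ a
    rintro _ (⟨c, rfl⟩ | hs)
    · exact Subring.subset_closure (Or.inl ⟨_, (kmap_act D σ V _ le_rfl c).symm⟩)
    · rename_i s
      refine Subring.subset_closure (Or.inr ?_)
      intro τ hτ h
      have h1 : (D.act σ).hom.appLE V ((D.act σ).hom ⁻¹ᵁ V) le_rfl ≫
          (D.act τ).hom.appLE _ _ h = (D.act (σ * τ * σ⁻¹)).hom.appLE V V (hV.stab _ (hN σ τ hτ)) ≫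
          (D.act σ).hom.appLE V ((D.act σ).hom ⁻¹ᵁ V) le_rfl := by
        rw [Scheme.Hom.appLE_comp_appLE, Scheme.Hom.appLE_comp_appLE]
        simp only [hc]
      refine congr($h1 s).trans ?_
      exact congrArg φ (hs _ (hN σ τ hτ) (hV.stab _ (hN σ τ hτ)))

lemma good_pre {k' : IntermediateField k K} {Y : Scheme} {y : Y ⟶ Spec (CommRingCat.of k')}
    {r : X ⟶ Y} (hr : IsPullback r p y (sMap (algebraMap k' K))) {N : Set (K ≃ₐ[k] K)}
    (hN : ∀ τ ∈ N, (D.act τ).hom ≫ r = r) {U : Y.Opens} (hU : IsAffineOpen U) :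
    Good D N (r ⁻¹ᵁ U) := by
  have hra : IsAffineHom r := MorphismProperty.of_isPullback hr.flip
    (inferInstance : IsAffineHom (sMap (algebraMap k' K)))
  refine ⟨hU.preimage r, fun τ hτ => ?_, ?_⟩
  · rw [← Scheme.Hom.comp_preimage, hN τ hτ]
  · rw [eq_top_iff]
    intro x _
    have H := (isIso_pushoutSection_iff hr (US := ⊤) (UT := ⊤) (UX := U) (UY := r ⁻¹ᵁ U)
      le_top le_top (by simp)).1 (isIso_pushoutSection_of_isAffineOpen hr le_top le_top (by simp)
      (isAffineOpen_top _) (isAffineOpen_top _) hU)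
    refine (Subring.closure_le.2 ?_) (pushout_closure H x)
    rintro _ (⟨a, rfl⟩ | ⟨c, rfl⟩)
    · refine Subring.subset_closure (Or.inr ?_)
      intro τ hτ h
      have h1 : r.appLE U (r ⁻¹ᵁ U) le_rfl ≫ (D.act τ).hom.appLE _ _ h =
          r.appLE U (r ⁻¹ᵁ U) le_rfl := by
        rw [Scheme.Hom.appLE_comp_appLE]
        simp only [hN τ hτ]
      exact congr($h1 a)
    · obtain ⟨c', rfl⟩ : ∃ c' : K, c = (Scheme.ΓSpecIso (CommRingCat.of K)).inv c' :=
        ⟨(Scheme.ΓSpecIso (CommRingCat.of K)).hom c, by simp⟩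
      exact Subring.subset_closure (Or.inl ⟨c', rfl⟩)

end

end

section

lemma le_ι_pre {X : Scheme} (U : X.Opens) : (⊤ : U.toScheme.Opens) ≤ U.ι ⁻¹ᵁ U := by
  rw [Scheme.Opens.ι_preimage_self]

lemma topIso_inv_eq {X : Scheme} (U : X.Opens) :
    U.topIso.inv = U.ι.appLE U ⊤ (le_ι_pre U) := by
  rw [Scheme.Opens.ι_appLE]
  rfl

lemma resLE_toSpec {X Y : Scheme} (f : X ⟶ Y) (U : Y.Opens) (V : X.Opens) (e : V ≤ f ⁻¹ᵁ U) :
    f.resLE U V e ≫ U.toSpecΓ = V.toSpecΓ ≫ Spec.map (f.appLE U V e) := by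
  have h : U.topIso.inv ≫ (f.resLE U V e).appTop = f.appLE U V e ≫ V.topIso.inv := by
    rw [topIso_inv_eq, topIso_inv_eq, Scheme.Hom.appLE_comp_appLE]
    have h2 : (f.resLE U V e).appTop = (f.resLE U V e).appLE ⊤ ⊤ le_rfl :=
      Scheme.Hom.app_eq_appLE _
    rw [h2]
    refine (Scheme.Hom.appLE_comp_appLE _ _ _ _ _ _ _).trans ?_
    simp only [Scheme.Hom.resLE_comp_ι]
  rw [Scheme.Opens.toSpecΓ, Scheme.Opens.toSpecΓ, ← Category.assoc, Scheme.toSpecΓ_naturality,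
    Category.assoc, Category.assoc, ← Spec.map_comp, ← Spec.map_comp, h]

lemma toSpec_kmap {R : Type} [CommRing R] {X : Scheme} (p : X ⟶ Spec (CommRingCat.of R))
    (V : X.Opens) : V.toSpecΓ ≫ Spec.map (CommRingCat.ofHom (kmap p V)) = V.ι ≫ p := by
  have h : CommRingCat.ofHom (kmap p V) = (Scheme.ΓSpecIso (CommRingCat.of R)).inv ≫
      p.appTop ≫ X.presheaf.map (homOfLE le_top).op := rfl
  rw [h, Spec.map_comp, Spec.map_comp]
  have h2 := Scheme.Opens.toSpecΓ_SpecMap_presheaf_map_top V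
  rw [Category.assoc, reassoc_of% h2, ← Scheme.toSpecΓ_naturality_assoc,
    toSpecΓ_SpecMap_ΓSpecIso_inv, Category.comp_id]

section
variable {k K : Type} [Field k] [Field K] [Algebra k K] {X : Scheme}
  {p : X ⟶ Spec (CommRingCat.of K)} (D : DescentDatum k K X p)

lemma good_finset [IsSeparated p] {N : Set (K ≃ₐ[k] K)} {ι : Type} (f : ι → X.Opens)
    (hf : ∀ i, Good D N (f i)) (s : Finset ι) (hs : s.Nonempty) :
    ∃ W, Good D N W ∧ ∀ x, x ∈ W ↔ ∀ i ∈ s, x ∈ f i := by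
  classical
  induction hs using Finset.Nonempty.cons_induction with
  | singleton a => exact ⟨f a, hf a, by simp⟩
  | cons a s h hs ih =>
    obtain ⟨W, hW, hx⟩ := ih
    refine ⟨f a ⊓ W, good_inf D (hf a) hW, fun x => ?_⟩
    simp [← hx]

lemma stable_cover [CharZero k] (k' : IntermediateField k K) [FiniteDimensional k k'] [IsGalois k k']
    {Y : Scheme} {y : Y ⟶ Spec (CommRingCat.of k')}
    {r : X ⟶ Y} (hsep : IsSeparated p) (hy : QuasiProjectiveOver k' y)
    (hr : IsPullback r p y (sMap (algebraMap k' K)))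
    (hN : ∀ τ : K ≃ₐ[k] K, (∀ x ∈ k', τ x = x) → (D.act τ).hom ≫ r = r) (x : X) :
    ∃ V : X.Opens, x ∈ V ∧ Good D {τ | ∀ x ∈ k', τ x = x} V ∧ 
      ∀ σ, V ≤ (D.act σ).hom ⁻¹ᵁ V := by
  classical
  let N : Set (K ≃ₐ[k] K) := {τ | ∀ x ∈ k', τ x = x}
  let res : (K ≃ₐ[k] K) →* (k' ≃ₐ[k] k') := AlgEquiv.restrictNormalHom k'
  have hres : ∀ σ (e : k'), ((res σ e : k') : K) = σ e := fun σ e =>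
    AlgEquiv.restrictNormal_commutes σ k' e
  have hNmem : ∀ τ, res τ = 1 ↔ τ ∈ N := by
    intro τ
    constructor
    · intro h x hx
      have := hres τ ⟨x, hx⟩
      rw [h] at this
      exact this.symm
    · intro h
      ext e
      rw [hres]
      exact h e e.2
  have hNn : ∀ σ : K ≃ₐ[k] K, ∀ τ ∈ N, σ * τ * σ⁻¹ ∈ N := by
    intro σ τ hτ
    rw [← hNmem] at hτ ⊢
    rw [map_mul, map_mul, hτ, mul_one, map_inv, mul_inv_cancel]
  let H : Subgroup (k' ≃ₐ[k] k') := res.range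
  have hfH : Fintype H := Fintype.ofFinite _
  have hl : ∀ g : H, ∃ σ, res σ = g := fun g => g.2
  choose l hl using hl
  have hdep : ∀ σ, (D.act σ).hom ≫ r = (D.act (l ⟨res σ, σ, rfl⟩)).hom ≫ r := by
    intro σ
    set σ' := l ⟨res σ, σ, rfl⟩ with hσ'
    have h1 : σ * σ'⁻¹ ∈ N := by
      rw [← hNmem, map_mul, map_inv, hσ', hl, mul_inv_cancel]
    have h2 : σ = (σ * σ'⁻¹) * σ' := by rw [inv_mul_cancel_right]
    conv_lhs => rw [h2]
    rw [← act_mul, Category.assoc, hN _ h1]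
  have : Infinite k' := by
    have : CharZero k' := charZero_of_injective_algebraMap (algebraMap k k').injective
    infer_instance
  obtain ⟨U', hU', hxU⟩ := qp_affine hy (fun g : H => ((D.act (l g)).hom ≫ r) x)
  have hg := good_pre D hr (N := N) hN hU'
  obtain ⟨V, hV, hmem⟩ := good_finset D (fun g : H => (D.act (l g)).hom ⁻¹ᵁ (r ⁻¹ᵁ U'))
    (fun g => good_trans D hNn hg (l g)) Finset.univ ⟨1, Finset.mem_univ _⟩
  have hmem' : ∀ z, z ∈ V ↔ ∀ σ, ((D.act σ).hom ≫ r) z ∈ U' := by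
    intro z
    rw [hmem]
    constructor
    · intro h σ
      rw [hdep]
      exact h ⟨res σ, σ, rfl⟩ (Finset.mem_univ _)
    · intro h g _
      exact h (l g)
  refine ⟨V, ?_, hV, ?_⟩
  · rw [hmem]
    intro g _
    exact hxU g
  · intro σ z hz
    change (D.act σ).hom z ∈ V
    rw [hmem'] at hz ⊢
    intro τ
    have := hz (τ * σ)
    rw [← act_mul, Category.assoc] at this
    exact this

/-- The action of `σ` on the sections of a stable open. -/
def secAct (V : X.Opens) (hV : ∀ σ, V ≤ (D.act σ).hom ⁻¹ᵁ V) (σ : K ≃ₐ[k] K) :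
    Γ(X, V) →+* Γ(X, V) := ((D.act σ⁻¹).hom.appLE V V (hV σ⁻¹)).hom

/-- The invariant sections. -/
def invSec (V : X.Opens) (hV : ∀ σ, V ≤ (D.act σ).hom ⁻¹ᵁ V) : Subring Γ(X, V) :=
  invSub (secAct D V hV) Set.univ

lemma secAct_mul (V : X.Opens) (hV : ∀ σ, V ≤ (D.act σ).hom ⁻¹ᵁ V) (σ τ : K ≃ₐ[k] K) (a) :
    secAct D V hV (σ * τ) a = secAct D V hV σ (secAct D V hV τ a) := by
  have h : (D.act τ⁻¹).hom.appLE V V (hV τ⁻¹) ≫ (D.act σ⁻¹).hom.appLE V V (hV σ⁻¹) =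
      (D.act (σ * τ)⁻¹).hom.appLE V V (hV _) := by
    rw [Scheme.Hom.appLE_comp_appLE]
    simp only [act_mul, mul_inv_rev]
  exact congr($h a).symm

lemma secAct_one (V : X.Opens) (hV : ∀ σ, V ≤ (D.act σ).hom ⁻¹ᵁ V) (a) :
    secAct D V hV 1 a = a := by
  have h : (D.act (1 : K ≃ₐ[k] K)⁻¹).hom.appLE V V (hV _) = 𝟙 _ := by
    have h0 : (D.act (1 : K ≃ₐ[k] K)⁻¹).hom = 𝟙 _ := by rw [inv_one, act_one]
    simp only [h0]
    refine (Scheme.Hom.app_eq_appLE (𝟙 X) (U := V)).symm.trans ?_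
    rfl
  exact congr($h a)

lemma secAct_kmap (V : X.Opens) (hV : ∀ σ, V ≤ (D.act σ).hom ⁻¹ᵁ V) (σ : K ≃ₐ[k] K) (c : K) :
    secAct D V hV σ (kmap p V c) = kmap p V (σ c) := by
  refine (kmap_act D σ⁻¹ V V _ c).trans ?_
  rw [inv_inv]

lemma kmap_inv (V : X.Opens) (hV : ∀ σ, V ≤ (D.act σ).hom ⁻¹ᵁ V) (c : k) :
    kmap p V (algebraMap k K c) ∈ invSec D V hV := by
  intro σ _
  rw [secAct_kmap, AlgEquiv.commutes]

/-- The structure map of the invariant sections. -/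
def kInv (V : X.Opens) (hV : ∀ σ, V ≤ (D.act σ).hom ⁻¹ᵁ V) : k →+* invSec D V hV :=
  ((kmap p V).comp (algebraMap k K)).codRestrict (invSec D V hV) (kmap_inv D V hV)

/-- The projection to the descended affine scheme. -/
def tMap (V : X.Opens) (hV : ∀ σ, V ≤ (D.act σ).hom ⁻¹ᵁ V) :
    V.toScheme ⟶ Spec (CommRingCat.of (invSec D V hV)) :=
  V.toSpecΓ ≫ Spec.map (CommRingCat.ofHom (invSec D V hV).subtype)

lemma tMap_pullback
    (hfix : ∀ x : K, (∀ σ : K ≃ₐ[k] K, σ x = x) → ∃ c : k, algebraMap k K c = x)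
    (k' : IntermediateField k K) [FiniteDimensional k k'] [IsGalois k k']
    (V : X.Opens) (hV : ∀ σ, V ≤ (D.act σ).hom ⁻¹ᵁ V) (hg : Good D {τ | ∀ x ∈ k', τ x = x} V) :
    IsPullback (tMap D V hV) (V.ι ≫ p) (sMap (kInv D V hV)) (sMap (algebraMap k K)) := by
  have hP := inv_pushout hfix k' (kmap p V) (secAct D V hV) (secAct_mul D V hV)
    (secAct_one D V hV) (secAct_kmap D V hV) (by
      rw [eq_top_iff, ← hg.gen]
      apply Subring.closure_mono
      apply Set.union_subset_union_right
      intro s hs σ hσ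
      refine hs σ⁻¹ (fun x hx => ?_) (hV σ⁻¹)
      have h1 := congrArg (σ⁻¹ : K ≃ₐ[k] K) (hσ x hx)
      rw [← h1]
      change (σ⁻¹ * σ) x = _
      rw [inv_mul_cancel]
      rfl) (kmap_inv D V hV)
  have h2 := isPullback_SpecMap_of_isPushout _ _ _ _ hP.flip
  have hi : IsIso V.toSpecΓ := by
    rw [← hg.aff.isoSpec_hom]; infer_instance
  have h3 : IsPullback V.toSpecΓ (V.ι ≫ p) (Spec.map (CommRingCat.ofHom (kmap p V))) (𝟙 _) :=
    IsPullback.of_horiz_isIso ⟨by rw [toSpec_kmap, Category.comp_id]⟩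
  have h4 := h3.paste_horiz h2
  rw [Category.id_comp] at h4
  exact h4

end

end

section

lemma pb_point {W X Y Z : Scheme} {a : W ⟶ X} {b : W ⟶ Y} {x : X ⟶ Z} {y : Y ⟶ Z}
    (h : IsPullback a b x y) (u : X) (v : Y) (e : x u = y v) : ∃ w, a w = u ∧ b w = v := by
  obtain ⟨z, h1, h2⟩ := Scheme.Pullback.exists_preimage_pullback u v e
  refine ⟨h.isoPullback.inv z, ?_, ?_⟩
  · rw [← h1, ← Scheme.Hom.comp_apply, IsPullback.isoPullback_inv_fst]
  · rw [← h2, ← Scheme.Hom.comp_apply, IsPullback.isoPullback_inv_snd]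

theorem glue_desc {X S S0 : Scheme.{0}} (p : X ⟶ S) (a : S ⟶ S0) [Flat a] [Surjective a]
    [QuasiCompact a] (J : Set X.Opens) (hinf : ∀ V ∈ J, ∀ W ∈ J, V ⊓ W ∈ J)
    (hcov : ∀ x : X, ∃ V ∈ J, x ∈ V) (F : J ⥤ Scheme.{0}) (z : ∀ j, F.obj j ⟶ S0)
    (hz : ∀ (i j : J) (f : i ⟶ j), F.map f ≫ z j = z i)
    (t : ∀ j : J, j.1.toScheme ⟶ F.obj j)
    (ht : ∀ (i j : J) (f : i ⟶ j) (h : i.1 ≤ j.1), t i ≫ F.map f = X.homOfLE h ≫ t j)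
    (hpb : ∀ j, IsPullback (t j) (j.1.ι ≫ p) (z j) a) :
    ∃ (X₀ : Scheme.{0}) (q : X₀ ⟶ S0) (π : X ⟶ X₀), IsPullback π p q a ∧
      ∀ j, ∃ c : F.obj j ⟶ X₀, j.1.ι ≫ π = t j ≫ c := by
  have hle : ∀ {i j : J} (f : i ⟶ j), i.1 ≤ j.1 := fun f => leOfHom f
  have hsq : ∀ (i j : J) (f : i ⟶ j), IsPullback (t i) (X.homOfLE (hle f)) (F.map f) (t j) := by
    intro i j f
    refine IsPullback.of_bot ?_ (ht i j f (hle f)) (hpb j)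
    rw [hz i j f, ← Category.assoc, Scheme.homOfLE_ι]
    exact hpb i
  have hsurj : ∀ j, Surjective (t j) := fun j =>
    MorphismProperty.of_isPullback (P := @Surjective) (hpb j).flip ‹_›
  have hflat : ∀ j, Flat (t j) := fun j =>
    MorphismProperty.of_isPullback (P := @Flat) (hpb j).flip ‹_›
  have hqc : ∀ j, QuasiCompact (t j) := fun j =>
    MorphismProperty.of_isPullback (P := @QuasiCompact) (hpb j).flip ‹_›
  have hopen : ∀ {i j : J} (f : i ⟶ j), IsOpenImmersion (F.map f) := by
    intro i j f
    exact MorphismProperty.of_isPullback_of_descendsAlong (P := @IsOpenImmersion)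
      (Q := @Surjective ⊓ @Flat ⊓ @QuasiCompact) (hsq i j f).flip
      ⟨⟨hsurj j, hflat j⟩, hqc j⟩ (inferInstance : IsOpenImmersion (X.homOfLE (hle f)))
  have hpt : ∀ (i j : J) (f : i ⟶ j) (u : F.obj i) (v : j.1.toScheme), F.map f u = t j v →
      ∃ w : i.1.toScheme, t i w = u ∧ w.1 = v.1 := by
    intro i j f u v h
    obtain ⟨w, h1, h2⟩ := pb_point (hsq i j f) u v h
    refine ⟨w, h1, ?_⟩
    exact (Scheme.homOfLE_apply (hle f) w).symm.trans (congrArg Subtype.val h2)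
  have hnat : ∀ (i j : J) (f : i ⟶ j) (w : i.1.toScheme) (v : j.1.toScheme), w.1 = v.1 →
      F.map f (t i w) = t j v := by
    intro i j f w v h
    rw [← Scheme.Hom.comp_apply, ht i j f (hle f), Scheme.Hom.comp_apply]
    have h' : X.homOfLE (hle f) w = v := Subtype.ext ((Scheme.homOfLE_apply (hle f) w).trans h)
    exact congrArg (fun u => t j u) h'
  have hdir : (F ⋙ Scheme.forget).IsLocallyDirected := by
    constructor
    intro i j l fi fj xi xj h
    change F.map fi xi = F.map fj xj at h
    obtain ⟨w, hw⟩ := (hsurj l).surj (F.map fi xi)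
    obtain ⟨wi, hi1, hi2⟩ := hpt i l fi xi w hw.symm
    obtain ⟨wj, hj1, hj2⟩ := hpt j l fj xj w (h.symm.trans hw.symm)
    have hmi : w.1 ∈ i.1 := hi2 ▸ wi.2
    have hmj : w.1 ∈ j.1 := hj2 ▸ wj.2
    let m : J := ⟨i.1 ⊓ j.1, hinf _ i.2 _ j.2⟩
    let fmi : m ⟶ i := homOfLE (show i.1 ⊓ j.1 ≤ i.1 from inf_le_left)
    let fmj : m ⟶ j := homOfLE (show i.1 ⊓ j.1 ≤ j.1 from inf_le_right)
    let wm : m.1.toScheme := ⟨w.1, hmi, hmj⟩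
    refine ⟨m, fmi, fmj, t m wm, ?_, ?_⟩
    · exact (hnat m i fmi wm wi hi2.symm).trans hi1
    · exact (hnat m j fmj wm wj hj2.symm).trans hj1
  let c : ∀ j, F.obj j ⟶ colimit F := fun j => colimit.ι F j
  have hc : ∀ j, IsOpenImmersion (c j) := fun j => inferInstance
  have hcw : ∀ (i j : J) (f : i ⟶ j), F.map f ≫ c j = c i := fun i j f => colimit.w F f
  have hnz : ∀ ⦃i j : J⦄ (f : i ⟶ j), F.map f ≫ z j =
      z i ≫ ((Functor.const J).obj S0).map f := by
    intro i j f
    rw [hz]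
    exact (Category.comp_id _).symm
  let cc : Cocone F := ⟨S0, ⟨z, hnz⟩⟩
  let q : colimit F ⟶ S0 := colimit.desc F cc
  have hcq : ∀ j, c j ≫ q = z j := fun j => colimit.ι_desc _ j
  have hcz : ∀ x : X, ∃ (i : J) (s : i.1.toScheme), i.1.ι s = x := by
    intro x
    obtain ⟨V, hV, hx⟩ := hcov x
    exact ⟨⟨V, hV⟩, ⟨x, hx⟩, rfl⟩
  let 𝒰 : X.OpenCover := Scheme.Cover.mkOfCovers J (fun j => j.1.toScheme) (fun j => j.1.ι) hcz
    (fun _ => inferInstance)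
  let π : X ⟶ colimit F := Scheme.Cover.glueMorphisms 𝒰 (fun j => t j ≫ c j) (by
    intro i j
    change pullback.fst i.1.ι j.1.ι ≫ t i ≫ c i = pullback.snd i.1.ι j.1.ι ≫ t j ≫ c j
    rw [← cancel_epi (isPullback_opens_inf i.1 j.1).isoPullback.hom,
      IsPullback.isoPullback_hom_fst_assoc, IsPullback.isoPullback_hom_snd_assoc]
    let m : J := ⟨i.1 ⊓ j.1, hinf _ i.2 _ j.2⟩
    let fmi : m ⟶ i := homOfLE (show i.1 ⊓ j.1 ≤ i.1 from inf_le_left)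
    let fmj : m ⟶ j := homOfLE (show i.1 ⊓ j.1 ≤ j.1 from inf_le_right)
    have e1 := ht m i fmi inf_le_left
    have e2 := ht m j fmj inf_le_right
    have e3 : X.homOfLE (inf_le_left : i.1 ⊓ j.1 ≤ i.1) ≫ t i ≫ c i = t m ≫ c m := by
      rw [← hcw m i fmi, ← Category.assoc, ← Category.assoc]
      exact congrArg (· ≫ c i) e1.symm
    have e4 : X.homOfLE (inf_le_right : i.1 ⊓ j.1 ≤ j.1) ≫ t j ≫ c j = t m ≫ c m := by
      rw [← hcw m j fmj, ← Category.assoc, ← Category.assoc]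
      exact congrArg (· ≫ c j) e2.symm
    rw [e3, e4])
  have hπ : ∀ j : J, j.1.ι ≫ π = t j ≫ c j := fun j => Scheme.Cover.ι_glueMorphisms 𝒰 _ _ j
  have hπp : ∀ (j : J) (v : j.1.toScheme), π v.1 = c j (t j v) := by
    intro j v
    exact congr($(hπ j) v)
  refine ⟨colimit F, q, π, ?_, fun j => ⟨c j, hπ j⟩⟩
  refine pbloc (ι := J) (fun j => F.obj j) (fun j => j.1.toScheme) c ?_ (fun j => j.1.ι) t ?_ ?_
  · intro x
    exact Scheme.IsLocallyDirected.ι_jointly_surjective F x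
  · intro j
    refine (IsOpenImmersion.isPullback (t j) j.1.ι (c j) π (hπ j) ?_).flip
    ext x
    constructor
    · rintro ⟨y, hy⟩
      obtain ⟨i, s, rfl⟩ := hcz x
      have hy' : c i (t i s) = c j y := (hπp i s).symm.trans hy.symm
      obtain ⟨m, fi, fj, u, h1, h2⟩ := (Scheme.IsLocallyDirected.ι_eq_ι_iff F).1 hy'
      obtain ⟨w, hw1, hw2⟩ := hpt m i fi u s h1
      refine ⟨⟨w.1, hle fj w.2⟩, hw2⟩
    · rintro ⟨s, rfl⟩
      exact ⟨t j s, (hπp j s).symm⟩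
  · intro j
    rw [hcq]
    exact hpb j

end

section

section
variable {k K : Type} [Field k] [Field K] [Algebra k K] {X : Scheme.{0}}
  {p : X ⟶ Spec (CommRingCat.of K)} (D : DescentDatum k K X p)

lemma invSec_res {V W : X.Opens} (hV : ∀ σ, V ≤ (D.act σ).hom ⁻¹ᵁ V)
    (hW : ∀ σ, W ≤ (D.act σ).hom ⁻¹ᵁ W) (e : V ≤ W) (a : invSec D W hW) :
    X.presheaf.map (homOfLE e).op a.1 ∈ invSec D V hV := by
  intro σ hσ
  have h1 : X.presheaf.map (homOfLE e).op ≫ (D.act σ⁻¹).hom.appLE V V (hV σ⁻¹) =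
      (D.act σ⁻¹).hom.appLE W W (hW σ⁻¹) ≫ X.presheaf.map (homOfLE e).op := by
    rw [Scheme.Hom.map_appLE, Scheme.Hom.appLE_map]
  refine congr($h1 a.1).trans ?_
  exact congrArg (X.presheaf.map (homOfLE e).op).hom (a.2 σ hσ)

/-- Restriction of invariant sections. -/
def resInv {V W : X.Opens} (hV : ∀ σ, V ≤ (D.act σ).hom ⁻¹ᵁ V)
    (hW : ∀ σ, W ≤ (D.act σ).hom ⁻¹ᵁ W) (e : V ≤ W) : invSec D W hW →+* invSec D V hV :=
  ((X.presheaf.map (homOfLE e).op).hom.comp (invSec D W hW).subtype).codRestrict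
    (invSec D V hV) (invSec_res D hV hW e)

lemma resInv_val {V W : X.Opens} (hV : ∀ σ, V ≤ (D.act σ).hom ⁻¹ᵁ V)
    (hW : ∀ σ, W ≤ (D.act σ).hom ⁻¹ᵁ W) (e : V ≤ W) (a : invSec D W hW) :
    (resInv D hV hW e a).1 = X.presheaf.map (homOfLE e).op a.1 := rfl

/-- The functor of descended charts. -/
def chartF (J : Set X.Opens) (hJ : ∀ V ∈ J, ∀ σ, V ≤ (D.act σ).hom ⁻¹ᵁ V) : J ⥤ Scheme.{0} where
  obj j := Spec (CommRingCat.of (invSec D j.1 (hJ _ j.2)))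
  map {i j} f := Spec.map (CommRingCat.ofHom (resInv D (hJ _ i.2) (hJ _ j.2) (leOfHom f)))
  map_id i := by
    have : CommRingCat.ofHom (resInv D (hJ _ i.2) (hJ _ i.2) (leOfHom (𝟙 i))) = 𝟙 _ := by
      ext a
      refine (resInv_val D _ _ _ a).trans ?_
      exact congr($(X.presheaf.map_id (Opposite.op i.1)) a.1)
    rw [this]
    exact Spec.map_id _
  map_comp {i j l} f g := by
    rw [← Spec.map_comp]
    congr 1
    ext a
    refine (resInv_val D _ _ _ a).trans ?_
    have h1 : i.1 ≤ j.1 := leOfHom f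
    have h2 : j.1 ≤ l.1 := leOfHom g
    exact congr($(X.presheaf.map_comp (homOfLE h2).op (homOfLE h1).op) a.1)

lemma tMap_act (V : X.Opens) (hV : ∀ σ, V ≤ (D.act σ).hom ⁻¹ᵁ V) (σ : K ≃ₐ[k] K) :
    (D.act σ).hom.resLE V V (hV σ) ≫ tMap D V hV = tMap D V hV := by
  have h : CommRingCat.ofHom (invSec D V hV).subtype ≫ (D.act σ).hom.appLE V V (hV σ) =
      CommRingCat.ofHom (invSec D V hV).subtype := by
    ext a
    have h1 := a.2 σ⁻¹ (Set.mem_univ _)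
    have h2 : ∀ τ, τ = σ → (D.act τ).hom.appLE V V (hV τ) = (D.act σ).hom.appLE V V (hV σ) := by
      rintro _ rfl; rfl
    exact congr($(h2 (σ⁻¹)⁻¹ (inv_inv σ)) a.1).symm.trans h1
  unfold tMap
  rw [← Category.assoc, resLE_toSpec, Category.assoc, ← Spec.map_comp, h]

end

theorem descend_one {k K : Type} [Field k] [Field K] [CharZero k] [Algebra k K] {X : Scheme.{0}}
    {p : X ⟶ Spec (CommRingCat.of K)} (D : DescentDatum k K X p)
    (hfix : ∀ x : K, (∀ σ : K ≃ₐ[k] K, σ x = x) → ∃ c : k, algebraMap k K c = x)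
    (hsep : IsSeparated p)
    (k' : IntermediateField k K) [FiniteDimensional k k'] [IsGalois k k']
    {Y : Scheme} {y : Y ⟶ Spec (CommRingCat.of k')} {r : X ⟶ Y} (hy : QuasiProjectiveOver k' y)
    (hr : IsPullback r p y (sMap (algebraMap k' K)))
    (hN : ∀ τ : K ≃ₐ[k] K, (∀ x ∈ k', τ x = x) → (D.act τ).hom ≫ r = r) :
    ∃ (X₀ : Scheme.{0}) (q : X₀ ⟶ Spec (CommRingCat.of k)) (π : X ⟶ X₀),
      IsPullback π p q (sMap (algebraMap k K)) ∧ ∀ σ, (D.act σ).hom ≫ π = π := by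
  let J : Set X.Opens := {V | (∀ σ, V ≤ (D.act σ).hom ⁻¹ᵁ V) ∧
    Good D {τ | ∀ x ∈ k', τ x = x} V}
  have hJ : ∀ V ∈ J, ∀ σ, V ≤ (D.act σ).hom ⁻¹ᵁ V := fun V h => h.1
  have hcov : ∀ x : X, ∃ V ∈ J, x ∈ V := by
    intro x
    obtain ⟨V, h1, h2, h3⟩ := stable_cover D k' hsep hy hr hN x
    exact ⟨V, ⟨h3, h2⟩, h1⟩
  have hflat : Flat (sMap (algebraMap k K)) := by
    refine (Flat.SpecMap_iff (f := CommRingCat.ofHom (algebraMap k K))).2 ?_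
    exact (RingHom.flat_algebraMap_iff).2 inferInstance
  have hsurj : Surjective (sMap (algebraMap k K)) := by
    constructor
    intro x
    exact ⟨(⊥ : PrimeSpectrum K), Subsingleton.elim (α := PrimeSpectrum k) _ _⟩
  have hqc : QuasiCompact (sMap (algebraMap k K)) := inferInstance
  obtain ⟨X₀, q, π, h1, h2⟩ := glue_desc p (sMap (algebraMap k K)) J
    (fun V hV W hW => ⟨fun σ x hx => ⟨hV.1 σ hx.1, hW.1 σ hx.2⟩, good_inf D hV.2 hW.2⟩) hcov
    (chartF D J hJ) (fun j => sMap (kInv D j.1 (hJ _ j.2))) (by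
      intro i j f
      change Spec.map _ ≫ Spec.map _ = Spec.map _
      rw [← Spec.map_comp]
      congr 1
      ext c
      exact kmap_res p j.1 i.1 (leOfHom f) (algebraMap k K c)) (fun j => tMap D j.1 (hJ _ j.2)) (by
      intro i j f h
      change (_ ≫ Spec.map _) ≫ Spec.map _ = _ ≫ _ ≫ Spec.map _
      rw [Category.assoc, ← Spec.map_comp, ← reassoc_of% Scheme.Opens.toSpecΓ_SpecMap_presheaf_map i.1 j.1 h,
        ← Spec.map_comp]
      rfl) (fun j => tMap_pullback D hfix k' j.1 (hJ _ j.2) j.2.2)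
  refine ⟨X₀, q, π, h1, fun σ => ?_⟩
  let 𝒰 : X.OpenCover := Scheme.Cover.mkOfCovers J (fun j => j.1.toScheme) (fun j => j.1.ι) (by
    intro x
    obtain ⟨V, hV, hx⟩ := hcov x
    exact ⟨⟨V, hV⟩, ⟨x, hx⟩, rfl⟩) (fun _ => inferInstance)
  refine Scheme.Cover.hom_ext 𝒰 _ _ fun j => ?_
  change j.1.ι ≫ (D.act σ).hom ≫ π = j.1.ι ≫ π
  obtain ⟨c, hc⟩ := h2 j
  have e1 := Scheme.Hom.resLE_comp_ι (D.act σ).hom (hJ _ j.2 σ)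
  rw [← reassoc_of% e1, hc]
  exact (Category.assoc _ _ _).symm.trans (congrArg (· ≫ c) (tMap_act D j.1 (hJ _ j.2) σ))

lemma pb_equivariant {X X₀ S S0 : Scheme.{0}} {π : X ⟶ X₀} {p : X ⟶ S} {q : X₀ ⟶ S0} {a : S ⟶ S0}
    (h : IsPullback π p q a) (d : X ⟶ X) (g : S ⟶ S) (hd : d ≫ π = π) (hp : d ≫ p = p ≫ g)
    (e1 : q ≫ 𝟙 S0 = 𝟙 X₀ ≫ q) (e2 : a ≫ 𝟙 S0 = g ≫ a) :
    d ≫ h.isoPullback.hom = h.isoPullback.hom ≫ pullback.map q a q a (𝟙 X₀) g (𝟙 S0) e1 e2 := by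
  have m1 : pullback.map q a q a (𝟙 X₀) g (𝟙 S0) e1 e2 ≫ pullback.fst q a =
      pullback.fst q a ≫ 𝟙 X₀ := pullback.lift_fst _ _ _
  have m2 : pullback.map q a q a (𝟙 X₀) g (𝟙 S0) e1 e2 ≫ pullback.snd q a =
      pullback.snd q a ≫ g := pullback.lift_snd _ _ _
  apply pullback.hom_ext
  · rw [Category.assoc, Category.assoc, m1, Category.comp_id, IsPullback.isoPullback_hom_fst, hd]
  · rw [Category.assoc, Category.assoc, m2, IsPullback.isoPullback_hom_snd, hp,
      IsPullback.isoPullback_hom_snd_assoc]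

end

/-- Effectivity of descent data for rigid families: given a family of
quasi-projective `K`-schemes with finite automorphism groups over `K`, connected by a family
of `K`-morphisms admitting no non-trivial compatible family of automorphisms, every
collection of descent data with respect to `K/k` making all the morphisms equivariant is
effective. -/
theorem effectivity_of_descent_data_for_rigid_families
    (k K : Type) [Field k] [CharZero k] [Field K] [IsAlgClosed K] [Algebra k K]
    -- `K` has infinite transcendence degree over `k`
    (htr : ∀ L : IntermediateField k K, L.FG → ∃ x : K, Transcendental L x)
    (A B : Type) (X : A → Scheme) (p : ∀ α : A, X α ⟶ Spec (CommRingCat.of K))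
    (s t : B → A) (f : ∀ β : B, X (s β) ⟶ X (t β))
    -- each `X α` is quasi-projective over `K`
    (hqp : ∀ α : A, QuasiProjectiveOver K (p α))
    -- the `f β` are morphisms of schemes over `K`
    (hover : ∀ β : B, f β ≫ p (t β) = p (s β))
    -- (i) each `X α` has only finitely many automorphisms as a scheme over `K`
    (hfin : ∀ α : A, Finite {e : Aut (X α) // e.hom ≫ p α = p α})
    -- (ii) the only family of `K`-automorphisms commuting with all the `f β` is the identity
    (hrigid : ∀ ψ : ∀ α : A, Aut (X α), (∀ α : A, (ψ α).hom ≫ p α = p α) →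
      (∀ β : B, f β ≫ (ψ (t β)).hom = (ψ (s β)).hom ≫ f β) → ∀ α : A, ψ α = 1)
    -- descent data on the `X α` with respect to `K/k`
    (D : ∀ α : A, DescentDatum k K (X α) (p α))
    -- under which every `f β` is `Aut(K/k)`-equivariant
    (hequiv : ∀ (β : B) (σ : K ≃ₐ[k] K),
      f β ≫ ((D (t β)).act σ).hom = ((D (s β)).act σ).hom ≫ f β) :
    -- then each descent datum is effective
    ∀ α : A, ∃ (X₀ : Scheme) (q : X₀ ⟶ Spec (CommRingCat.of k))
      (e : X α ≅ baseChange k K q),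
      e.hom ≫ pullback.snd q (Spec.map (CommRingCat.ofHom (algebraMap k K))) = p α ∧
      ∀ σ : K ≃ₐ[k] K, ((D α).act σ).hom ≫ e.hom = e.hom ≫ baseChangeAut k K q σ := by
  intro α
  obtain ⟨k', hk1, hk2, Y, y, r, hy, hr, hN⟩ :=
    reduce_galois k K htr A B X p s t f hqp hover hfin hrigid D hequiv α
  obtain ⟨X₀, q, π, h1, h2⟩ := descend_one (D α) (fun x hx => fixed_field htr x hx)
    (qp_sep (hqp α)) k' hy hr hN
  have h1' : IsPullback π (p α) q (Spec.map (CommRingCat.ofHom (algebraMap k K))) := h1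
  refine ⟨X₀, q, h1'.isoPullback, h1'.isoPullback_hom_snd, fun σ => ?_⟩
  exact pb_equivariant h1' ((D α).act σ).hom (specAut k K σ) (h2 σ) ((D α).compat σ)
    (by simp) (by rw [Category.comp_id, specAut_comp])

end Paper
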